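/- arXiv:0902.3419 — 2 statements merged into one kernel-verified Lean document; each statement's English description precedes it below -/
import Mathlib

section
/- Under the stated assumptions including non-periodicity, for every odd integer k ≥ 1, Σ_{1≤n≤N} b_k(n) = o(N^{ρ} (log N)^{k/2}) as N → ∞; equivalently (1/A(N)) Σ_{1≤n≤N} b_k(n) = o((log N)^{k/2}). -/
open scoped BigOperators ENNReal
open Filter Asymptotics

noncomputable section

/-- `af P m n` is the number of ordered `m`-tuples `(n₁,…,n_m)` of elements of `P`
with product `n` (so `af P 0 n = 1` iff `n = 1`). -/
def af (P : Set ℕ) (m n : ℕ) : ℕ :=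
  Nat.card {t : Fin m → ℕ // (∀ i, t i ∈ P) ∧ ∏ i, t i = n}

/-- `aTot P n = a(n) = Σ_{m ≥ 0} a_m(n)`. -/
def aTot (P : Set ℕ) (n : ℕ) : ℝ := ∑' m : ℕ, (af P m n : ℝ)

/-- `Acum P N = A(N) = Σ_{1 ≤ n ≤ N} a(n)`. -/
def Acum (P : Set ℕ) (N : ℕ) : ℝ := ∑ n ∈ Finset.Icc 1 N, aTot P n

/-- The Dirichlet series `𝒫(x) = Σ_{n ∈ 𝒫} n^{-x}` at a real point. -/
def Pval (P : Set ℕ) (x : ℝ) : ℝ := ∑' n : P, ((n : ℕ) : ℝ) ^ (-x)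

/-- `𝒫'(x) = -Σ_{n ∈ 𝒫} n^{-x} log n`. -/
def Pderiv1 (P : Set ℕ) (x : ℝ) : ℝ := -∑' n : P, ((n : ℕ) : ℝ) ^ (-x) * Real.log (n : ℕ)

/-- `𝒫''(x) = Σ_{n ∈ 𝒫} n^{-x} (log n)^2`. -/
def Pderiv2 (P : Set ℕ) (x : ℝ) : ℝ := ∑' n : P, ((n : ℕ) : ℝ) ^ (-x) * (Real.log (n : ℕ)) ^ 2

/-- The abscissa of convergence `κ` of the Dirichlet series of `P`, as an extended real
(`⊥` when `P` is finite). -/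
def kappa (P : Set ℕ) : EReal :=
  sInf {x : EReal | ∃ r : ℝ, x = (r : EReal) ∧ Summable (fun n : P => ((n : ℕ) : ℝ) ^ (-r))}

open Classical in
/-- The (possibly infinite) value `𝒫(x) ∈ (0,∞]` of the Dirichlet series at an
extended-real point; at `x = -∞` every term `n^{-x}` is infinite. -/
def PvalE (P : Set ℕ) (x : EReal) : ℝ≥0∞ :=
  if x = ⊥ then ⊤ else ∑' n : P, ENNReal.ofReal (((n : ℕ) : ℝ) ^ (-x.toReal))

/-- `b_k(n) = Σ_{m ≥ 0} a_m(n) (m - μ log n)^k`. -/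
def bCoef (P : Set ℕ) (μ : ℝ) (k n : ℕ) : ℝ :=
  ∑' m : ℕ, (af P m n : ℝ) * ((m : ℝ) - μ * Real.log n) ^ k


namespace OddMom
open scoped BigOperators
open Filter Topology

structure RS (ι : Type) where
  ρ : ℝ
  μ : ℝ
  e : ℝ
  c : ℝ
  l : ι → ℝ
  hρ : 0 < ρ
  he : 0 < e
  hc : 0 < c
  hl : ∀ i, c ≤ l i
  hfin : ∀ B : ℝ, {i | l i ≤ B}.Finite
  hsum : HasSum (fun i => Real.exp (-ρ * l i)) 1
  hmean : HasSum (fun i => Real.exp (-ρ * l i) * (1 - μ * l i)) 0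
  hmom : ∀ k : ℕ, Summable (fun i => Real.exp (-ρ * l i) * (Real.exp (e * l i) * |1 - μ * l i| ^ k))

namespace RS
variable {ι : Type} (S : RS ι)

noncomputable def q (i : ι) : ℝ := Real.exp (-S.ρ * S.l i)
def xi (i : ι) : ℝ := 1 - S.μ * S.l i
def X (w : List ι) : ℝ := (w.map S.l).sum
def T (w : List ι) : ℝ := (w.map S.xi).sum
noncomputable def p (w : List ι) : ℝ := Real.exp (-S.ρ * S.X w)

@[simp] lemma X_nil : S.X [] = 0 := by simp [X]
@[simp] lemma T_nil : S.T [] = 0 := by simp [T]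
@[simp] lemma p_nil : S.p [] = 1 := by simp [p]
@[simp] lemma X_cons (i : ι) (w : List ι) : S.X (i :: w) = S.l i + S.X w := by simp [X]
@[simp] lemma T_cons (i : ι) (w : List ι) : S.T (i :: w) = S.xi i + S.T w := by simp [T]
@[simp] lemma p_cons (i : ι) (w : List ι) : S.p (i :: w) = S.q i * S.p w := by
  simp [p, q, mul_add, Real.exp_add]

lemma q_pos (i : ι) : 0 < S.q i := Real.exp_pos _
lemma p_pos (w : List ι) : 0 < S.p w := Real.exp_pos _
lemma l_pos (i : ι) : 0 < S.l i := S.hc.trans_le (S.hl i)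

lemma X_nonneg (w : List ι) : 0 ≤ S.X w := by
  induction w with
  | nil => simp
  | cons i w ih => simp only [X_cons]; linarith [S.l_pos i]

lemma X_ge (w : List ι) (hw : w ≠ []) : S.c ≤ S.X w := by
  cases w with
  | nil => exact absurd rfl hw
  | cons i w => simp only [X_cons]; linarith [S.hl i, S.X_nonneg w]

lemma finite_aux (n : ℕ) : ∀ B : ℝ, B < n * S.c → {w : List ι | S.X w ≤ B}.Finite := by
  induction n with
  | zero =>
    intro B hB
    convert Set.finite_empty
    ext w
    simp only [Set.mem_ofPred_eq, Set.mem_empty_iff_false, iff_false, not_le]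
    have := S.X_nonneg w
    simp at hB; linarith
  | succ n ih =>
    intro B hB
    have h1 := ih (B - S.c) (by push_cast at hB; linarith)
    refine ((Set.finite_singleton ([] : List ι)).union
      (Set.Finite.image2 (fun i w => i :: w) (S.hfin B) h1)).subset ?_
    intro w hw
    cases w with
    | nil => left; simp
    | cons i w =>
      right
      simp only [Set.mem_ofPred_eq, X_cons] at hw
      exact ⟨i, by simp only [Set.mem_ofPred_eq]; linarith [S.X_nonneg w], w,
        by simp only [Set.mem_ofPred_eq]; linarith [S.hl i], rfl⟩

lemma finite_W (B : ℝ) : {w : List ι | S.X w ≤ B}.Finite := by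
  obtain ⟨n, hn⟩ := exists_nat_gt (B / S.c)
  exact S.finite_aux n B (by rwa [div_lt_iff₀ S.hc] at hn)

noncomputable def W (B : ℝ) : Finset (List ι) := (S.finite_W B).toFinset

@[simp] lemma mem_W {B : ℝ} {w : List ι} : w ∈ S.W B ↔ S.X w ≤ B := by simp [W]

lemma W_neg {B : ℝ} (hB : B < 0) : S.W B = ∅ := by
  ext w; simp only [mem_W, Finset.notMem_empty, iff_false, not_le]
  linarith [S.X_nonneg w]

lemma W_small {B : ℝ} (h0 : 0 ≤ B) (hB : B < S.c) : S.W B = {[]} := by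
  ext w; simp only [mem_W, Finset.mem_singleton]
  constructor
  · intro h; by_contra h'; linarith [S.X_ge w h']
  · rintro rfl; simpa

noncomputable def I (B : ℝ) : Finset ι := (S.hfin B).toFinset
@[simp] lemma mem_I {B : ℝ} {i : ι} : i ∈ S.I B ↔ S.l i ≤ B := by simp [I]

lemma W_subset {A B : ℝ} (h : A ≤ B) : S.W A ⊆ S.W B := by
  intro w; simp only [mem_W]; intro h'; linarith

lemma cons_aux (B : ℝ) (g : List ι → ℝ) :
    ∑ w ∈ S.W B, g w = (if 0 ≤ B then g [] else 0) +
      ∑ i ∈ S.I B, ∑ u ∈ S.W (B - S.l i), g (i :: u) := by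
  classical
  rw [Finset.sum_sigma' (S.I B) (fun i => S.W (B - S.l i)) (fun i u => g (i :: u))]
  have h1 : ∑ x ∈ (S.I B).sigma (fun i => S.W (B - S.l i)), g (x.1 :: x.2) =
      ∑ w ∈ (S.W B).filter (fun w => w ≠ []), g w := by
    refine Finset.sum_bij (fun x _ => x.1 :: x.2) ?_ ?_ ?_ ?_
    · rintro ⟨i, u⟩ h
      simp only [Finset.mem_sigma, mem_I, mem_W, Finset.mem_filter, X_cons] at h ⊢
      exact ⟨by linarith [h.2], by simp⟩
    · rintro ⟨i, u⟩ _ ⟨j, v⟩ _ h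
      simp only [List.cons.injEq] at h
      obtain ⟨rfl, rfl⟩ := h; rfl
    · intro w hw
      cases w with
      | nil => simp at hw
      | cons i u =>
        simp only [Finset.mem_filter, mem_W, X_cons] at hw
        refine ⟨⟨i, u⟩, ?_, rfl⟩
        simp only [Finset.mem_sigma, mem_I, mem_W]
        exact ⟨by linarith [hw.1, S.X_nonneg u], by linarith [hw.1]⟩
    · intro _ _; rfl
  rw [h1, ← Finset.sum_filter_add_sum_filter_not (S.W B) (fun w => w = []) g]
  congr 1
  split_ifs with h
  · have : (S.W B).filter (fun w => w = []) = {[]} := by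
      ext w; simp only [Finset.mem_filter, mem_W, Finset.mem_singleton]
      constructor
      · exact fun h => h.2
      · rintro rfl; simpa
    rw [this]; simp
  · have : (S.W B).filter (fun w => w = []) = ∅ := by
      rw [S.W_neg (not_le.mp h)]; rfl
    rw [this]; simp

lemma cons_sum (B : ℝ) (g : List ι → ℝ) :
    ∑ w ∈ S.W B, g w = (if 0 ≤ B then g [] else 0) +
      ∑' i, ∑ u ∈ S.W (B - S.l i), g (i :: u) := by
  rw [cons_aux, tsum_eq_sum (s := S.I B)]
  intro i hi
  rw [S.W_neg, Finset.sum_empty]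
  simp only [mem_I, not_le] at hi; linarith

lemma cons_sum' (B : ℝ) (g : List ι → ℝ) :
    ∑ w ∈ S.W B, g w = (if 0 ≤ B then g [] else 0) +
      ∑ u ∈ S.W B, ∑' i, (if S.X u + S.l i ≤ B then g (i :: u) else 0) := by
  classical
  rw [cons_aux]
  congr 1
  have h2 : ∀ u ∈ S.W B, ∑' i, (if S.X u + S.l i ≤ B then g (i :: u) else 0) =
      ∑ i ∈ S.I B, (if S.X u + S.l i ≤ B then g (i :: u) else 0) := by
    intro u _
    rw [tsum_eq_sum (s := S.I B)]
    intro i hi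
    simp only [mem_I, not_le] at hi
    rw [if_neg]; linarith [S.X_nonneg u]
  rw [Finset.sum_congr rfl h2, Finset.sum_comm]
  refine Finset.sum_congr rfl fun i _ => ?_
  rw [← Finset.sum_filter]
  refine Finset.sum_congr ?_ fun _ _ => rfl
  ext u
  simp only [mem_W, Finset.mem_filter]
  constructor
  · intro h; exact ⟨by linarith [S.l_pos i], by linarith⟩
  · intro h; linarith [h.2]

/-- summability of one-step expectation -/
def FS (f : ℝ → ℝ → ℝ) : Prop := ∀ t x, Summable fun i => S.q i * f (t + S.xi i) (x + S.l i)

noncomputable def FP (B : ℝ) (f : ℝ → ℝ → ℝ) : ℝ :=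
  ∑ w ∈ S.W B, S.p w * ∑' i, S.q i *
    (if B < S.X w + S.l i then f (S.T w + S.xi i) (S.X w + S.l i) else 0)

lemma FS.trunc {S : RS ι} {f : ℝ → ℝ → ℝ} (h : S.FS f) (B t x : ℝ) :
    Summable fun i => S.q i * (if B < x + S.l i then f (t + S.xi i) (x + S.l i) else 0) := by
  refine Summable.of_norm_bounded (h t x).norm ?_
  intro i
  split_ifs
  · exact le_rfl
  · simp; positivity

lemma dynkin {f : ℝ → ℝ → ℝ} (h : S.FS f) {B : ℝ} (hB : 0 ≤ B) :
    S.FP B f + ∑ w ∈ S.W B, S.p w * f (S.T w) (S.X w) = f 0 0 +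
      ∑ w ∈ S.W B, S.p w * ∑' i, S.q i * f (S.T w + S.xi i) (S.X w + S.l i) := by
  rw [S.cons_sum' B (fun w => S.p w * f (S.T w) (S.X w)), if_pos hB]
  simp only [T_nil, X_nil, p_nil, one_mul, FP]
  rw [add_left_comm, ← Finset.sum_add_distrib]
  congr 1
  refine Finset.sum_congr rfl fun w _ => ?_
  have h1 : ∑' i, (if S.X w + S.l i ≤ B then S.p (i :: w) * f (S.T (i :: w)) (S.X (i :: w)) else 0)
    = S.p w * ∑' i, S.q i * (if S.X w + S.l i ≤ B then f (S.T w + S.xi i) (S.X w + S.l i) else 0) := by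
    rw [← tsum_mul_left]
    refine tsum_congr fun i => ?_
    split_ifs
    · rw [p_cons, T_cons, X_cons, add_comm (S.xi i), add_comm (S.l i)]; ring
    · simp
  have h2 : Summable fun i => S.q i * (if S.X w + S.l i ≤ B then f (S.T w + S.xi i) (S.X w + S.l i) else 0) := by
    refine Summable.of_norm_bounded (h (S.T w) (S.X w)).norm ?_
    intro i
    split_ifs
    · exact le_rfl
    · simp; positivity
  rw [h1, ← mul_add, ← (h.trunc B _ _).tsum_add h2]
  congr 1
  refine tsum_congr fun i => ?_
  by_cases h3 : B < S.X w + S.l i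
  · rw [if_pos h3, if_neg (not_le.mpr h3)]; ring
  · rw [if_neg h3, if_pos (not_lt.mp h3)]; ring

noncomputable def V (d : ℝ) (φ : ℝ → ℝ) (L t x : ℝ) : ℝ :=
  ∑ u ∈ S.W (L - x), S.p u * (Real.exp (-d * (L - x - S.X u)) * φ (t + S.T u))

noncomputable def M (d : ℝ) (φ : ℝ → ℝ) (L : ℝ) : ℝ :=
  ∑ u ∈ S.W L, S.p u * (Real.exp (-d * (L - S.X u)) * φ (S.T u))

lemma V_zero (d : ℝ) (φ : ℝ → ℝ) (L : ℝ) : S.V d φ L 0 0 = S.M d φ L := by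
  simp [V, M]

lemma V_big (d : ℝ) (φ : ℝ → ℝ) {L t x : ℝ} (h : L < x) : S.V d φ L t x = 0 := by
  rw [V, S.W_neg (by linarith)]; simp

lemma M_neg (d : ℝ) (φ : ℝ → ℝ) {L : ℝ} (h : L < 0) : S.M d φ L = 0 := by
  rw [M, S.W_neg h]; simp

lemma V_FS (d : ℝ) (φ : ℝ → ℝ) (L : ℝ) : S.FS (S.V d φ L) := by
  intro t x
  refine summable_of_ne_finset_zero (s := S.I (L - x)) ?_
  intro i hi
  simp only [mem_I, not_le] at hi
  rw [S.V_big _ _ (by linarith), mul_zero]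

lemma V_rec (d : ℝ) (φ : ℝ → ℝ) (L t x : ℝ) : S.V d φ L t x =
    (if x ≤ L then Real.exp (-d * (L - x)) * φ t else 0) +
      ∑' i, S.q i * S.V d φ L (t + S.xi i) (x + S.l i) := by
  rw [V, S.cons_sum]
  congr 1
  · by_cases h : x ≤ L
    · rw [if_pos h, if_pos (by linarith)]; simp
    · rw [if_neg h, if_neg (by linarith)]
  · refine tsum_congr fun i => ?_
    rw [V, Finset.mul_sum, sub_sub]
    refine Finset.sum_congr rfl fun u _ => ?_
    rw [p_cons, T_cons, X_cons, add_assoc t, show L - x - (S.l i + S.X u) = L - (x + S.l i) - S.X u by ring]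
    ring

lemma M_decomp (d : ℝ) (φ : ℝ → ℝ) {L B : ℝ} (hB : 0 ≤ B) (hL : B ≤ L) :
    S.M d φ L = S.FP B (S.V d φ L) + Real.exp (-d * (L - B)) * S.M d φ B := by
  have h := S.dynkin (S.V_FS d φ L) hB
  rw [V_zero] at h
  have h2 : ∑ w ∈ S.W B, S.p w * S.V d φ L (S.T w) (S.X w) =
      Real.exp (-d * (L - B)) * S.M d φ B +
      ∑ w ∈ S.W B, S.p w * ∑' i, S.q i * S.V d φ L (S.T w + S.xi i) (S.X w + S.l i) := by
    rw [M, Finset.mul_sum, ← Finset.sum_add_distrib]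
    refine Finset.sum_congr rfl fun w hw => ?_
    rw [S.V_rec d φ L (S.T w) (S.X w), if_pos (by rw [mem_W] at hw; linarith)]
    rw [show -d * (L - S.X w) = -d * (L - B) + -d * (B - S.X w) by ring, Real.exp_add]
    ring
  linarith

lemma FP_mono {f g : ℝ → ℝ → ℝ} (hf : S.FS f) (hg : S.FS g) {B : ℝ}
    (h : ∀ t x, B < x → f t x ≤ g t x) : S.FP B f ≤ S.FP B g := by
  refine Finset.sum_le_sum fun w _ => mul_le_mul_of_nonneg_left ?_ (S.p_pos w).le
  refine (hf.trunc B _ _).tsum_le_tsum (fun i => ?_) (hg.trunc B _ _)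
  refine mul_le_mul_of_nonneg_left ?_ (S.q_pos i).le
  split_ifs with h1
  · exact h _ _ h1
  · exact le_rfl

lemma FS.add {S : RS ι} {f g : ℝ → ℝ → ℝ} (hf : S.FS f) (hg : S.FS g) :
    S.FS (fun t x => f t x + g t x) := by
  intro t x; simp only [mul_add]; exact (hf t x).add (hg t x)

lemma FS.mul {S : RS ι} {f : ℝ → ℝ → ℝ} (hf : S.FS f) (a : ℝ) :
    S.FS (fun t x => a * f t x) := by
  intro t x; simp only [mul_left_comm]; exact (hf t x).mul_left a

lemma FP_add {f g : ℝ → ℝ → ℝ} (hf : S.FS f) (hg : S.FS g) (B : ℝ) :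
    S.FP B (fun t x => f t x + g t x) = S.FP B f + S.FP B g := by
  simp only [FP]
  rw [← Finset.sum_add_distrib]
  refine Finset.sum_congr rfl fun w _ => ?_
  rw [← mul_add, ← (hf.trunc B _ _).tsum_add (hg.trunc B _ _)]
  congr 1
  refine tsum_congr fun i => ?_
  split_ifs <;> ring

lemma FP_mul (f : ℝ → ℝ → ℝ) (a B : ℝ) :
    S.FP B (fun t x => a * f t x) = a * S.FP B f := by
  simp only [FP]
  rw [Finset.mul_sum]
  refine Finset.sum_congr rfl fun w _ => ?_
  rw [mul_left_comm, ← tsum_mul_left (a := a)]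
  congr 1
  refine tsum_congr fun i => ?_
  split_ifs <;> ring

lemma FP_abs {f g : ℝ → ℝ → ℝ} (hf : S.FS f) (hg : S.FS g) {B : ℝ}
    (h : ∀ t x, B < x → |f t x| ≤ g t x) : |S.FP B f| ≤ S.FP B g := by
  rw [abs_le]
  constructor
  · have := S.FP_mono (hg.mul (-1)) hf (B := B) (fun t x hx => by
      have := (abs_le.mp (h t x hx)).1; linarith)
    rw [FP_mul] at this; linarith
  · exact S.FP_mono hf hg (fun t x hx => (abs_le.mp (h t x hx)).2)

end RS
end OddMom

namespace OddMom
open scoped BigOperators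
open Filter Topology
namespace RS
variable {ι : Type} (S : RS ι)

lemma summable_abs (k : ℕ) : Summable fun i => S.q i * |S.xi i| ^ k := by
  refine Summable.of_nonneg_of_le (fun i => ?_) (fun i => ?_) (S.hmom k)
  · have := S.q_pos i; positivity
  · refine mul_le_mul_of_nonneg_left ?_ (Real.exp_pos _).le
    refine le_mul_of_one_le_left (by positivity) ?_
    exact Real.one_le_exp (mul_nonneg S.he.le (S.l_pos i).le)

lemma summable_pow (k : ℕ) : Summable fun i => S.q i * S.xi i ^ k := by
  refine Summable.of_norm_bounded (S.summable_abs k) (fun i => ?_)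
  rw [Real.norm_eq_abs, abs_mul, abs_pow, abs_of_pos (S.q_pos i)]

noncomputable def m (k : ℕ) : ℝ := ∑' i, S.q i * S.xi i ^ k

lemma m_zero : S.m 0 = 1 := by
  simp only [m, pow_zero, mul_one]; exact S.hsum.tsum_eq

lemma m_one : S.m 1 = 0 := by
  simp only [m, pow_one]; exact S.hmean.tsum_eq

lemma hasSum_pow (k : ℕ) (t : ℝ) : HasSum (fun i => S.q i * (t + S.xi i) ^ k)
    (∑ j ∈ Finset.range (k + 1), t ^ j * S.m (k - j) * (k.choose j : ℝ)) := by
  have : (fun i => S.q i * (t + S.xi i) ^ k) =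
      fun i => ∑ j ∈ Finset.range (k + 1), t ^ j * (S.q i * S.xi i ^ (k - j)) * (k.choose j : ℝ) := by
    funext i
    rw [add_pow, Finset.mul_sum]
    exact Finset.sum_congr rfl fun j _ => by ring
  rw [this]
  refine hasSum_sum fun j _ => ?_
  exact ((S.summable_pow (k - j)).hasSum.mul_left _).mul_right _

lemma FS_pow (k : ℕ) : S.FS (fun t _ => t ^ k) := fun t _ => (S.hasSum_pow k t).summable

lemma FS_abs_pow (k : ℕ) : S.FS (fun t _ => |t| ^ k) := by
  intro t x
  refine ((S.FS_pow k) t x).norm.congr fun i => ?_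
  rw [Real.norm_eq_abs, abs_mul, abs_pow, abs_of_pos (S.q_pos i)]

lemma pow_le_aux {t : ℝ} {j n : ℕ} (h : j ≤ n) : |t| ^ j ≤ 1 + |t| ^ n := by
  rcases le_total |t| 1 with h1 | h1
  · have := pow_le_one₀ (n := j) (abs_nonneg t) h1
    have : 0 ≤ |t| ^ n := by positivity
    linarith
  · have := pow_le_pow_right₀ h1 h
    linarith

lemma sum_aux (n : ℕ) (a : ℕ → ℝ) : ∃ C : ℝ, 0 ≤ C ∧ ∀ t : ℝ,
    |∑ j ∈ Finset.range (n + 1), t ^ j * a j| ≤ C * (1 + |t| ^ n) := by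
  refine ⟨∑ j ∈ Finset.range (n + 1), |a j|, by positivity, fun t => ?_⟩
  refine (Finset.abs_sum_le_sum_abs _ _).trans ?_
  rw [Finset.sum_mul]
  refine Finset.sum_le_sum fun j hj => ?_
  rw [abs_mul, mul_comm, abs_pow]
  exact mul_le_mul_of_nonneg_left (pow_le_aux (by simp at hj; omega)) (abs_nonneg _)

lemma step_two (n : ℕ) : ∃ C : ℝ, 0 ≤ C ∧ ∀ t : ℝ,
    |∑' i, S.q i * (t + S.xi i) ^ (n + 2) - t ^ (n + 2)| ≤ C * (1 + |t| ^ n) := by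
  obtain ⟨C, hC, h⟩ := sum_aux n (fun j => S.m (n + 2 - j) * ((n + 2).choose j : ℝ))
  refine ⟨C, hC, fun t => ?_⟩
  rw [(S.hasSum_pow (n + 2) t).tsum_eq, Finset.sum_range_succ, Finset.sum_range_succ]
  have e1 : n + 2 - (n + 1) = 1 := by omega
  rw [e1, m_one, Nat.sub_self, m_zero]
  convert h t using 2
  simp [mul_assoc]

lemma step_three (n : ℕ) : ∃ C : ℝ, 0 ≤ C ∧ ∃ D : ℝ, ∀ t : ℝ,
    |∑' i, S.q i * (t + S.xi i) ^ (n + 3) - t ^ (n + 3) - D * t ^ (n + 1)| ≤ C * (1 + |t| ^ n) := by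
  obtain ⟨C, hC, h⟩ := sum_aux n (fun j => S.m (n + 3 - j) * ((n + 3).choose j : ℝ))
  refine ⟨C, hC, S.m 2 * ((n + 3).choose (n + 1) : ℝ), fun t => ?_⟩
  rw [(S.hasSum_pow (n + 3) t).tsum_eq, Finset.sum_range_succ, Finset.sum_range_succ,
    Finset.sum_range_succ]
  have e1 : n + 3 - (n + 2) = 1 := by omega
  have e2 : n + 3 - (n + 1) = 2 := by omega
  rw [e1, e2, m_one, Nat.sub_self, m_zero]
  convert h t using 2
  simp only [mul_assoc, Nat.choose_self]
  push_cast
  ring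

lemma step_one (t : ℝ) : ∑' i, S.q i * (t + S.xi i) ^ 1 = t ^ 1 := by
  rw [(S.hasSum_pow 1 t).tsum_eq]
  simp [Finset.sum_range_succ, m_zero, m_one]

/-- cumulative sum -/
noncomputable def Sm (φ : ℝ → ℝ) (B : ℝ) : ℝ := ∑ w ∈ S.W B, S.p w * φ (S.T w)

lemma int_aux {d : ℝ} (t B : ℝ) (h0 : 0 ≤ t) (hB : t ≤ B) :
    IntervalIntegrable (fun x => if t ≤ x then Real.exp (-d * (x - t)) else 0) MeasureTheory.volume 0 B ∧
    d * ∫ x in (0:ℝ)..B, (if t ≤ x then Real.exp (-d * (x - t)) else 0) = 1 - Real.exp (-d * (B - t)) := by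
  have hc : Continuous fun x : ℝ => Real.exp (-d * (x - t)) := by fun_prop
  have i1 : IntervalIntegrable (fun x => if t ≤ x then Real.exp (-d * (x - t)) else 0)
      MeasureTheory.volume 0 t := by
    refine (intervalIntegrable_const (c := (0:ℝ))).congr_uIoo ?_
    intro x hx
    rw [Set.uIoo_of_le h0] at hx
    simp [not_le.mpr hx.2]
  have i2 : IntervalIntegrable (fun x => if t ≤ x then Real.exp (-d * (x - t)) else 0)
      MeasureTheory.volume t B := by
    refine (hc.intervalIntegrable t B).congr_uIoo ?_
    intro x hx
    rw [Set.uIoo_of_le hB] at hx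
    simp [hx.1.le]
  refine ⟨i1.trans i2, ?_⟩
  rw [← intervalIntegral.integral_add_adjacent_intervals i1 i2]
  rw [intervalIntegral.integral_congr_Ioo_of_le (g := fun _ => (0:ℝ)) h0
    (fun x hx => by simp [not_le.mpr hx.2])]
  rw [intervalIntegral.integral_congr_Ioo_of_le (g := fun x => Real.exp (-d * (x - t))) hB
    (fun x hx => by simp [hx.1.le])]
  have h3 : ∫ x in t..B, d * Real.exp (-d * (x - t)) = -Real.exp (-d * (B - t)) - (-Real.exp (-d * (t - t))) := by
    refine intervalIntegral.integral_eq_sub_of_hasDerivAt (f := fun x => -Real.exp (-d * (x - t))) (fun x _ => ?_)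
      ((hc.const_mul d).intervalIntegrable t B)
    have : HasDerivAt (fun x => -d * (x - t)) (-d * 1) x :=
      ((hasDerivAt_id x).sub_const t).const_mul (-d)
    have h5 := this.exp.neg
    refine (h5.congr_deriv ?_)
    ring
  rw [intervalIntegral.integral_const_mul] at h3
  simp only [intervalIntegral.integral_zero, zero_add]
  rw [h3]; simp; ring

lemma Sm_eq (d : ℝ) (φ : ℝ → ℝ) (B : ℝ) :
    S.Sm φ B = S.M d φ B + d * ∫ x in (0:ℝ)..B, S.M d φ x := by
  by_cases hB : 0 ≤ B
  swap
  · have hB' : B < 0 := not_le.mp hB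
    rw [Sm, S.M_neg d φ hB', S.W_neg hB', intervalIntegral.integral_congr_uIoo (g := fun _ => (0:ℝ))]
    · simp
    · intro x hx
      rw [Set.uIoo_of_ge hB'.le] at hx
      exact S.M_neg d φ hx.2
  have h1 : Set.EqOn (S.M d φ) (fun x => ∑ u ∈ S.W B, (S.p u * φ (S.T u)) *
      (if S.X u ≤ x then Real.exp (-d * (x - S.X u)) else 0)) (Set.Ioo 0 B) := by
    intro x hx
    simp only [M]
    rw [← Finset.sum_subset (S.W_subset hx.2.le)]
    · refine Finset.sum_congr rfl fun u hu => ?_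
      rw [if_pos (by simpa using hu)]; ring
    · intro u _ hu
      rw [if_neg (by simpa using hu), mul_zero]
  rw [intervalIntegral.integral_congr_Ioo_of_le hB h1, intervalIntegral.integral_finsetSum]
  · rw [Sm, M, Finset.mul_sum, ← Finset.sum_add_distrib]
    refine Finset.sum_congr rfl fun u hu => ?_
    have h2 := (int_aux (d := d) (S.X u) B (S.X_nonneg u) (by simpa using hu)).2
    rw [intervalIntegral.integral_const_mul, mul_left_comm d, h2]
    ring
  · intro u hu
    exact (int_aux (d := d) (S.X u) B (S.X_nonneg u) (by simpa using hu)).1.const_mul _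

lemma Sm_bound {d : ℝ} (hd : 0 ≤ d) (φ : ℝ → ℝ) {B K : ℝ} (hB : 0 ≤ B)
    (h : ∀ x, 0 ≤ x → x ≤ B → |S.M d φ x| ≤ K) : |S.Sm φ B| ≤ (1 + d * B) * K := by
  rw [S.Sm_eq d]
  have h1 := intervalIntegral.norm_integral_le_of_norm_le_const (a := 0) (b := B) (f := S.M d φ) (C := K)
    (fun x hx => by
      rw [Set.uIoc_of_le hB] at hx
      exact h x hx.1.le hx.2)
  rw [Real.norm_eq_abs, sub_zero, abs_of_nonneg hB] at h1
  refine (abs_add_le _ _).trans ?_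
  rw [abs_mul, abs_of_nonneg hd]
  have := h B hB le_rfl
  nlinarith [mul_le_mul_of_nonneg_left h1 hd]

lemma M_nonneg (d : ℝ) {φ : ℝ → ℝ} (h : ∀ t, 0 ≤ φ t) (L : ℝ) : 0 ≤ S.M d φ L :=
  Finset.sum_nonneg fun u _ => mul_nonneg (S.p_pos u).le (mul_nonneg (Real.exp_pos _).le (h _))

lemma M_mono (d : ℝ) {φ ψ : ℝ → ℝ} {L : ℝ} (h : ∀ t, φ t ≤ ψ t) : S.M d φ L ≤ S.M d ψ L :=
  Finset.sum_le_sum fun u _ => mul_le_mul_of_nonneg_left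
    (mul_le_mul_of_nonneg_left (h _) (Real.exp_pos _).le) (S.p_pos u).le

lemma M_add (d : ℝ) (φ ψ : ℝ → ℝ) (L : ℝ) :
    S.M d (fun t => φ t + ψ t) L = S.M d φ L + S.M d ψ L := by
  simp only [M]; rw [← Finset.sum_add_distrib]
  exact Finset.sum_congr rfl fun u _ => by ring

lemma M_mul (d a : ℝ) (φ : ℝ → ℝ) (L : ℝ) :
    S.M d (fun t => a * φ t) L = a * S.M d φ L := by
  simp only [M]; rw [Finset.mul_sum]
  exact Finset.sum_congr rfl fun u _ => by ring

/-- from first-passage bound to window bound -/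
lemma window_of_FP (r : ℕ) {C : ℝ} (hC : 0 ≤ C)
    (h : ∀ B, 0 ≤ B → S.FP B (fun t _ => t ^ (2 * r)) ≤ C * (1 + B) ^ r) {d : ℝ} (hd : 0 < d) :
    ∃ K : ℝ, 0 ≤ K ∧ ∀ L, 0 ≤ L → S.M d (fun t => t ^ (2 * r)) L ≤ K * (1 + L) ^ r := by
  set θ := Real.exp (-d * S.c) with hθ
  have hθ1 : θ < 1 := by
    rw [hθ, Real.exp_lt_one_iff]; nlinarith [mul_pos hd S.hc]
  have hθ0 : 0 < θ := Real.exp_pos _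
  have h1θ : 0 < 1 - θ := by linarith
  obtain ⟨K, hK⟩ : ∃ K, K = (C + 1) / (1 - θ) := ⟨_, rfl⟩
  have hKe : C + 1 + θ * K = K := by rw [hK]; field_simp; ring
  have hK0 : 0 ≤ K := by rw [hK]; positivity
  have hK1 : 1 ≤ K := by nlinarith
  refine ⟨K, hK0, ?_⟩
  have key : ∀ n : ℕ, ∀ L, 0 ≤ L → L < n * S.c → S.M d (fun t => t ^ (2 * r)) L ≤ K * (1 + L) ^ r := by
    intro n
    induction n with
    | zero => intro L h0 h1; simp at h1; linarith
    | succ n ih =>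
      intro L h0 h1
      have hp : 1 ≤ (1 + L) ^ r := one_le_pow₀ (by linarith)
      by_cases hL : L < S.c
      · rw [M, S.W_small h0 hL]
        simp only [Finset.sum_singleton, p_nil, X_nil, T_nil, one_mul, sub_zero]
        have e1 : Real.exp (-d * L) ≤ 1 := by
          rw [Real.exp_le_one_iff]; nlinarith
        have e2 : (0:ℝ) ^ (2 * r) ≤ 1 := pow_le_one₀ le_rfl zero_le_one
        have e3 : (0:ℝ) ≤ 0 ^ (2 * r) := by positivity
        have e4 := Real.exp_pos (-d * L)
        nlinarith
      · have hL' : S.c ≤ L := not_lt.mp hL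
        have hc := S.hc
        rw [S.M_decomp d _ (B := L - S.c) (by linarith) (by linarith), sub_sub_cancel, ← hθ]
        have i1 := ih (L - S.c) (by linarith) (by push_cast at h1; linarith)
        have i2 : S.FP (L - S.c) (S.V d (fun t => t ^ (2 * r)) L) ≤
            S.FP (L - S.c) (fun t _ => t ^ (2 * r)) := by
          refine S.FP_mono (S.V_FS _ _ _) (S.FS_pow _) ?_
          intro t x hx
          have hpos : (0:ℝ) ≤ t ^ (2 * r) := by rw [pow_mul]; positivity
          by_cases hx2 : L < x
          · rw [S.V_big _ _ hx2]; exact hpos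
          · rw [V, S.W_small (by linarith) (by linarith)]
            simp only [Finset.sum_singleton, p_nil, X_nil, T_nil, one_mul, sub_zero, add_zero]
            refine mul_le_of_le_one_left hpos ?_
            rw [Real.exp_le_one_iff]; nlinarith
        have i3 := h (L - S.c) (by linarith)
        have i4 : (1 + (L - S.c)) ^ r ≤ (1 + L) ^ r :=
          pow_le_pow_left₀ (by linarith) (by linarith) r
        have i5 := mul_le_mul_of_nonneg_left i4 hC
        have i6 := mul_le_mul_of_nonneg_left i4 hK0
        have i7 := mul_le_mul_of_nonneg_left (i1.trans i6) hθ0.le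
        calc _ ≤ C * (1 + L) ^ r + θ * (K * (1 + L) ^ r) := by linarith
          _ ≤ (C + 1 + θ * K) * (1 + L) ^ r := by nlinarith
          _ = _ := by rw [hKe]
  intro L h0
  obtain ⟨n, hn⟩ := exists_nat_gt (L / S.c)
  exact key n L h0 (by rwa [div_lt_iff₀ S.hc] at hn)

lemma dynkin_pow (k : ℕ) {B : ℝ} (hB : 0 ≤ B) :
    S.FP B (fun t _ => t ^ k) = 0 ^ k +
      ∑ w ∈ S.W B, S.p w * (∑' i, S.q i * (S.T w + S.xi i) ^ k - S.T w ^ k) := by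
  have h := S.dynkin (S.FS_pow k) hB
  simp only [mul_sub, Finset.sum_sub_distrib]
  linarith

lemma even_bound (r : ℕ) : (∃ C : ℝ, 0 ≤ C ∧
      ∀ B, 0 ≤ B → S.FP B (fun t _ => t ^ (2 * r)) ≤ C * (1 + B) ^ r) ∧
    ∀ d : ℝ, 0 < d → ∃ K : ℝ, 0 ≤ K ∧
      ∀ L, 0 ≤ L → S.M d (fun t => t ^ (2 * r)) L ≤ K * (1 + L) ^ r := by
  suffices h : ∃ C : ℝ, 0 ≤ C ∧
      ∀ B, 0 ≤ B → S.FP B (fun t _ => t ^ (2 * r)) ≤ C * (1 + B) ^ r by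
    refine ⟨h, fun d hd => ?_⟩
    obtain ⟨C, hC, h⟩ := h
    exact S.window_of_FP r hC h hd
  induction r with
  | zero =>
    refine ⟨1, zero_le_one, fun B hB => ?_⟩
    rw [S.dynkin_pow _ hB]
    simp only [mul_zero, pow_zero, mul_one]
    have : ∑' i, S.q i = 1 := S.hsum.tsum_eq
    rw [this]; simp
  | succ r ih =>
    obtain ⟨C, hC, h⟩ := ih
    obtain ⟨K, hK, hM⟩ := S.window_of_FP r hC h zero_lt_one
    obtain ⟨D, hD, hstep⟩ := S.step_two (2 * r)
    obtain ⟨K0, hK0, hM0⟩ := S.window_of_FP 0 zero_le_one (fun B hB => by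
      rw [S.dynkin_pow _ hB]
      simp only [mul_zero, pow_zero, mul_one]
      have : ∑' i, S.q i = 1 := S.hsum.tsum_eq
      rw [this]; simp) zero_lt_one
    refine ⟨D * (K0 + K), by positivity, fun B hB => ?_⟩
    rw [S.dynkin_pow _ hB, show 2 * (r + 1) = 2 * r + 2 by ring, zero_pow (by omega), zero_add]
    have hp : 1 ≤ (1 + B) ^ r := one_le_pow₀ (by linarith)
    have h1 : ∑ w ∈ S.W B, S.p w * (∑' i, S.q i * (S.T w + S.xi i) ^ (2 * r + 2) - S.T w ^ (2 * r + 2))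
        ≤ D * S.Sm (fun t => 1 + |t| ^ (2 * r)) B := by
      rw [Sm, Finset.mul_sum]
      refine Finset.sum_le_sum fun w _ => ?_
      rw [mul_left_comm]
      exact mul_le_mul_of_nonneg_left ((le_abs_self _).trans (hstep _)) (S.p_pos w).le
    have h2 : |S.Sm (fun t => 1 + |t| ^ (2 * r)) B| ≤ (1 + 1 * B) * ((K0 + K) * (1 + B) ^ r) := by
      refine S.Sm_bound zero_le_one _ hB fun x hx0 hxB => ?_
      rw [abs_of_nonneg (S.M_nonneg _ (fun t => by positivity) _), M_add]
      have e1 := hM0 x hx0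
      have e2 := hM x hx0
      simp only [mul_zero, pow_zero, mul_one] at e1
      have e3 : (1 + x) ^ r ≤ (1 + B) ^ r := pow_le_pow_left₀ (by linarith) (by linarith) r
      simp only [Even.pow_abs (even_two_mul r)]
      nlinarith
    have h3 := (le_abs_self _).trans h2
    calc _ ≤ D * ((1 + 1 * B) * ((K0 + K) * (1 + B) ^ r)) := h1.trans (mul_le_mul_of_nonneg_left h3 hD)
      _ = _ := by ring

end RS
end OddMom

namespace OddMom
open scoped BigOperators
open Filter Topology
namespace RS
variable {ι : Type} (S : RS ι)

lemma one_le_sqrt {L : ℝ} (h : 0 ≤ L) : 1 ≤ √(1 + L) := by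
  rw [Real.one_le_sqrt]; linarith

lemma sqrt_mono {A B : ℝ} (h : A ≤ B) : √(1 + A) ≤ √(1 + B) :=
  Real.sqrt_le_sqrt (by linarith)

lemma sqrt_even {L : ℝ} (h : 0 ≤ L) (r : ℕ) : √(1 + L) ^ (2 * r) = (1 + L) ^ r := by
  rw [pow_mul, Real.sq_sqrt (by linarith)]

lemma M_abs (k : ℕ) {d : ℝ} (hd : 0 < d) : ∃ K : ℝ, 0 ≤ K ∧ ∀ L, 0 ≤ L →
    S.M d (fun t => |t| ^ k) L ≤ K * √(1 + L) ^ k := by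
  rcases Nat.even_or_odd' k with ⟨r, rfl | rfl⟩
  · obtain ⟨K, hK, h⟩ := (S.even_bound r).2 d hd
    refine ⟨K, hK, fun L hL => ?_⟩
    rw [sqrt_even hL]
    simpa only [Even.pow_abs (even_two_mul r)] using h L hL
  · obtain ⟨K, hK, h⟩ := (S.even_bound r).2 d hd
    obtain ⟨K', hK', h'⟩ := (S.even_bound (r + 1)).2 d hd
    refine ⟨K + K', by positivity, fun L hL => ?_⟩
    set s := √(1 + L) with hs
    have hs1 : 1 ≤ s := one_le_sqrt hL
    have hs0 : 0 < s := by linarith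
    have h1 := h L hL
    have h2 := h' L hL
    rw [← sqrt_even hL, ← hs] at h1 h2
    have h3 : S.M d (fun t => |t| ^ (2 * r + 1)) L ≤
        S.M d (fun t => s⁻¹ * t ^ (2 * (r + 1)) + s * t ^ (2 * r)) L := by
      refine S.M_mono d fun t => ?_
      rw [show 2 * (r + 1) = 2 * r + 2 by ring, pow_add t, pow_succ, Even.pow_abs (even_two_mul r)]
      have hp : 0 ≤ t ^ (2 * r) := by rw [pow_mul]; positivity
      have : |t| ≤ s⁻¹ * t ^ 2 + s := by
        rw [← sq_abs t]
        have : s⁻¹ * |t| ^ 2 + s - |t| = s⁻¹ * ((|t| - s / 2) ^ 2 + 3 / 4 * s ^ 2) := by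
          field_simp; ring
        have h5 : 0 ≤ s⁻¹ * ((|t| - s / 2) ^ 2 + 3 / 4 * s ^ 2) := by positivity
        linarith
      nlinarith
    rw [M_add, M_mul, M_mul] at h3
    refine h3.trans ?_
    have h4 := mul_le_mul_of_nonneg_left h1 hs0.le
    have h5 := mul_le_mul_of_nonneg_left h2 (inv_nonneg.mpr hs0.le)
    have e1 : s⁻¹ * (K' * s ^ (2 * (r + 1))) = K' * s ^ (2 * r + 1) := by
      rw [show 2 * (r + 1) = 2 * r + 1 + 1 by ring, pow_succ s (2 * r + 1)]; field_simp
    have e2 : s * (K * s ^ (2 * r)) = K * s ^ (2 * r + 1) := by ring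
    rw [e1] at h5; rw [e2] at h4
    linarith

lemma M_abs_le (k : ℕ) (d : ℝ) (L : ℝ) : |S.M d (fun t => t ^ k) L| ≤ S.M d (fun t => |t| ^ k) L := by
  rw [M]
  refine (Finset.abs_sum_le_sum_abs _ _).trans (Finset.sum_le_sum fun u _ => ?_)
  rw [abs_mul, abs_mul, abs_pow, abs_of_pos (S.p_pos u), abs_of_pos (Real.exp_pos _)]

lemma add_pow_aux (k : ℕ) (a b : ℝ) : |a + b| ^ k ≤ 2 ^ k * (|a| ^ k + |b| ^ k) := by
  have h1 : |a + b| ≤ 2 * max |a| |b| := by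
    have := abs_add_le a b
    have := le_max_left |a| |b|
    have := le_max_right |a| |b|
    linarith
  calc |a + b| ^ k ≤ (2 * max |a| |b|) ^ k := pow_le_pow_left₀ (abs_nonneg _) h1 k
    _ = 2 ^ k * (max |a| |b|) ^ k := mul_pow _ _ _
    _ ≤ _ := by
      refine mul_le_mul_of_nonneg_left ?_ (by positivity)
      rcases max_choice |a| |b| with h | h <;> rw [h]
      · have : 0 ≤ |b| ^ k := by positivity
        linarith
      · have : 0 ≤ |a| ^ k := by positivity
        linarith

noncomputable def E (k : ℕ) (B : ℝ) (t x : ℝ) : ℝ := Real.exp (S.e * (x - B)) * |t| ^ k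

noncomputable def mE (k : ℕ) : ℝ := ∑' i, S.q i * (Real.exp (S.e * S.l i) * |S.xi i| ^ k)

lemma mE_nonneg (k : ℕ) : 0 ≤ S.mE k := tsum_nonneg fun i => by
  have := S.q_pos i; positivity

lemma E_bd (k : ℕ) (B t x : ℝ) : HasSum (fun i => Real.exp (S.e * (x - B)) * 2 ^ k *
      (|t| ^ k * (S.q i * (Real.exp (S.e * S.l i) * |S.xi i| ^ 0)) +
        S.q i * (Real.exp (S.e * S.l i) * |S.xi i| ^ k)))
      (Real.exp (S.e * (x - B)) * 2 ^ k * (|t| ^ k * S.mE 0 + S.mE k)) := by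
  refine HasSum.mul_left _ (HasSum.add (HasSum.mul_left _ ?_) ?_)
  · exact (S.hmom 0).hasSum
  · exact (S.hmom k).hasSum

lemma E_le (k : ℕ) (B t x : ℝ) (i : ι) : S.q i * S.E k B (t + S.xi i) (x + S.l i) ≤
    Real.exp (S.e * (x - B)) * 2 ^ k *
      (|t| ^ k * (S.q i * (Real.exp (S.e * S.l i) * |S.xi i| ^ 0)) +
        S.q i * (Real.exp (S.e * S.l i) * |S.xi i| ^ k)) := by
  rw [E, show S.e * (x + S.l i - B) = S.e * (x - B) + S.e * S.l i by ring, Real.exp_add]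
  have h1 := add_pow_aux k t (S.xi i)
  have h2 : 0 ≤ S.q i * (Real.exp (S.e * (x - B)) * Real.exp (S.e * S.l i)) := by
    have := S.q_pos i; positivity
  have := mul_le_mul_of_nonneg_left h1 h2
  calc _ = S.q i * (Real.exp (S.e * (x - B)) * Real.exp (S.e * S.l i)) * |t + S.xi i| ^ k := by ring
    _ ≤ _ := this
    _ = _ := by ring

lemma E_nonneg (k : ℕ) (B t x : ℝ) : 0 ≤ S.E k B t x := by rw [E]; positivity

lemma FS_E (k : ℕ) (B : ℝ) : S.FS (S.E k B) := by
  intro t x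
  exact Summable.of_nonneg_of_le (fun i => mul_nonneg (S.q_pos i).le (S.E_nonneg _ _ _ _))
    (fun i => S.E_le k B t x i) (S.E_bd k B t x).summable

lemma FP_E (k : ℕ) : ∃ K : ℝ, 0 ≤ K ∧ ∀ B, 0 ≤ B → S.FP B (S.E k B) ≤ K * √(1 + B) ^ k := by
  obtain ⟨K, hK, h⟩ := S.M_abs k S.he
  obtain ⟨K0, hK0, h0⟩ := S.M_abs 0 S.he
  have := S.mE_nonneg 0
  have := S.mE_nonneg k
  refine ⟨2 ^ k * (S.mE 0 * K + S.mE k * K0), by positivity, fun B hB => ?_⟩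
  have h1 : S.FP B (S.E k B) ≤ 2 ^ k * (S.mE 0 * S.M S.e (fun t => |t| ^ k) B
      + S.mE k * S.M S.e (fun t => |t| ^ 0) B) := by
    rw [FP, M, M, Finset.mul_sum, Finset.mul_sum, ← Finset.sum_add_distrib, Finset.mul_sum]
    refine Finset.sum_le_sum fun w _ => ?_
    have h3 : ∑' i, S.q i * (if B < S.X w + S.l i then S.E k B (S.T w + S.xi i) (S.X w + S.l i) else 0)
        ≤ Real.exp (S.e * (S.X w - B)) * 2 ^ k * (|S.T w| ^ k * S.mE 0 + S.mE k) := by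
      rw [← (S.E_bd k B (S.T w) (S.X w)).tsum_eq]
      refine ((S.FS_E k B).trunc B _ _).tsum_le_tsum (fun i => ?_) (S.E_bd k B (S.T w) (S.X w)).summable
      refine le_trans ?_ (S.E_le k B (S.T w) (S.X w) i)
      refine mul_le_mul_of_nonneg_left ?_ (S.q_pos i).le
      split_ifs
      · exact le_rfl
      · exact S.E_nonneg _ _ _ _
    refine (mul_le_mul_of_nonneg_left h3 (S.p_pos w).le).trans (le_of_eq ?_)
    rw [show -S.e * (B - S.X w) = S.e * (S.X w - B) by ring]
    ring
  refine h1.trans ?_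
  have hs : 1 ≤ √(1 + B) ^ k := one_le_pow₀ (one_le_sqrt hB)
  have e0 := h0 B hB
  rw [pow_zero, mul_one] at e0
  have e1 := mul_le_mul_of_nonneg_left (h B hB) (S.mE_nonneg 0)
  have e2 := mul_le_mul_of_nonneg_left (e0.trans (le_mul_of_one_le_right hK0 hs)) (S.mE_nonneg k)
  rw [mul_assoc]
  refine mul_le_mul_of_nonneg_left ?_ (by positivity)
  linarith

lemma FP_abs_pow (k : ℕ) : ∃ K : ℝ, 0 ≤ K ∧ ∀ B, 0 ≤ B →
    S.FP B (fun t _ => |t| ^ k) ≤ K * √(1 + B) ^ k := by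
  obtain ⟨K, hK, h⟩ := S.FP_E k
  refine ⟨K, hK, fun B hB => (S.FP_mono (S.FS_abs_pow k) (S.FS_E k B) ?_).trans (h B hB)⟩
  intro t x hx
  rw [E]
  refine le_mul_of_one_le_left (by positivity) (Real.one_le_exp ?_)
  have := S.he
  nlinarith

noncomputable abbrev Z (x : ℝ) : ℝ := S.M S.ρ (fun _ => 1) x

lemma Z_nonneg (x : ℝ) : 0 ≤ S.Z x := S.M_nonneg _ (fun _ => zero_le_one) _

lemma Z_bdd : ∃ K : ℝ, 0 ≤ K ∧ ∀ x, S.Z x ≤ K := by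
  obtain ⟨K, hK, h⟩ := S.M_abs 0 S.hρ
  refine ⟨K, hK, fun x => ?_⟩
  by_cases hx : 0 ≤ x
  · simpa using h x hx
  · rw [Z, S.M_neg _ _ (not_le.mp hx)]; exact hK

lemma FP_one {B : ℝ} (hB : 0 ≤ B) : S.FP B (fun _ _ => 1) = 1 := by
  have h := S.dynkin_pow 0 hB
  simp only [pow_zero, mul_one] at h
  rw [h]
  have : ∑' i, S.q i = 1 := S.hsum.tsum_eq
  simp [this]

lemma V_one (d L t x : ℝ) : S.V d (fun _ => 1) L t x = S.M d (fun _ => 1) (L - x) := rfl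

lemma M_empty_le (d : ℝ) {L : ℝ} (h : 0 ≤ L) : Real.exp (-d * L) ≤ S.M d (fun _ => 1) L := by
  have : S.p [] * (Real.exp (-d * (L - S.X [])) * 1) ≤ S.M d (fun _ => 1) L :=
    Finset.single_le_sum (f := fun u => S.p u * (Real.exp (-d * (L - S.X u)) * 1))
      (fun u _ => mul_nonneg (S.p_pos u).le (by positivity)) (by simpa using h)
  simpa using this

lemma Z_lower : ∃ c : ℝ, 0 < c ∧ ∃ L0 : ℝ, ∀ L, L0 ≤ L → c ≤ S.Z L := by
  obtain ⟨K, hK, h⟩ := S.FP_E 0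
  have he := S.he
  obtain ⟨C, hC0, hC⟩ : ∃ C : ℝ, 0 ≤ C ∧ Real.exp (-S.e * C) * K ≤ 1 / 2 := by
    have h1 : Tendsto (fun C : ℝ => Real.exp (-S.e * C) * K) atTop (𝓝 (0 * K)) := by
      refine Tendsto.mul_const K ?_
      refine Real.tendsto_exp_atBot.comp ?_
      exact tendsto_id.const_mul_atTop_of_neg (by linarith)
    rw [zero_mul] at h1
    obtain ⟨C, hC⟩ := ((h1.eventually (ge_mem_nhds (by norm_num : (0:ℝ) < 1/2))).and (eventually_ge_atTop 0)).exists
    exact ⟨C, hC.2, hC.1⟩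
  refine ⟨Real.exp (-S.ρ * C) / 2, by positivity, C, fun L hL => ?_⟩
  have hB : 0 ≤ L - C := by linarith
  rw [Z, S.M_decomp S.ρ _ hB (by linarith)]
  have h0 : 0 ≤ Real.exp (-S.ρ * (L - (L - C))) * S.M S.ρ (fun _ => 1) (L - C) :=
    mul_nonneg (Real.exp_pos _).le (S.Z_nonneg _)
  set ψ := Real.exp (-S.ρ * C) with hψ
  have hψ0 : 0 < ψ := Real.exp_pos _
  have h1 : S.FP (L - C) (fun t x => ψ * ((fun _ _ => (1:ℝ)) t x + (-Real.exp (-S.e * C)) * S.E 0 (L - C) t x)) ≤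
      S.FP (L - C) (S.V S.ρ (fun _ => 1) L) := by
    have hf1 : S.FS (fun _ _ => (1:ℝ)) := by simpa using S.FS_pow 0
    refine S.FP_mono ((hf1.add ((S.FS_E 0 _).mul _)).mul _) (S.V_FS _ _ _) ?_
    intro t x hx
    rw [V_one, E, pow_zero, mul_one, neg_mul, ← Real.exp_add]
    by_cases hxL : x ≤ L
    · refine le_trans ?_ (S.M_empty_le S.ρ (by linarith : 0 ≤ L - x))
      have h5 : ψ ≤ Real.exp (-S.ρ * (L - x)) := by
        rw [hψ, Real.exp_le_exp]; nlinarith [S.hρ]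
      have h6 := Real.exp_pos (-S.e * C + S.e * (x - (L - C)))
      nlinarith
    · rw [S.M_neg _ _ (by linarith)]
      have : 1 ≤ Real.exp (-S.e * C + S.e * (x - (L - C))) := by
        apply Real.one_le_exp; nlinarith
      nlinarith
  have hf1 : S.FS (fun _ _ => (1:ℝ)) := by simpa using S.FS_pow 0
  rw [S.FP_mul (fun t x => (fun _ _ => (1:ℝ)) t x + (-Real.exp (-S.e * C)) * S.E 0 (L - C) t x),
    S.FP_add hf1 ((S.FS_E 0 _).mul _), S.FP_mul, S.FP_one hB] at h1
  have h2 := h (L - C) hB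
  rw [pow_zero, mul_one] at h2
  have h3 := mul_le_mul_of_nonneg_left h2 (Real.exp_pos (-S.e * C)).le
  have h4 : ψ * (1 / 2) ≤ ψ * (1 + -Real.exp (-S.e * C) * S.FP (L - C) (S.E 0 (L - C))) :=
    mul_le_mul_of_nonneg_left (by linarith) hψ0.le
  linarith

end RS
end OddMom

namespace OddMom
open scoped BigOperators
open Filter Topology
namespace RS
variable {ι : Type} (S : RS ι)

lemma hasSum_q : HasSum S.q 1 := S.hsum

lemma tail_tendsto (x0 : ℝ) :
    Tendsto (fun x : ℝ => ∑' i, S.q i * (if x - S.l i < x0 then (1:ℝ) else 0)) atTop (𝓝 0) := by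
  have h := tendsto_tsum_of_dominated_convergence (𝓕 := (atTop : Filter ℝ))
    (f := fun x i => S.q i * (if x - S.l i < x0 then (1:ℝ) else 0)) (g := fun _ => (0:ℝ))
    (bound := S.q) S.hasSum_q.summable ?_ ?_
  · simpa using h
  · intro i
    refine tendsto_const_nhds.congr' ?_
    filter_upwards [eventually_ge_atTop (x0 + S.l i)] with x hx
    rw [if_neg (by linarith), mul_zero]
  · refine Eventually.of_forall fun x i => ?_
    have := S.q_pos i
    rw [Real.norm_eq_abs, abs_of_nonneg (by split_ifs <;> simp [this.le])]
    split_ifs <;> simp [this.le]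

lemma summable_bdd {Z : ℝ → ℝ} {K : ℝ} (hK : ∀ x, |Z x| ≤ K) (g : ι → ℝ) :
    Summable fun i => S.q i * Z (g i) := by
  refine Summable.of_norm_bounded (S.hasSum_q.summable.mul_right K) fun i => ?_
  rw [Real.norm_eq_abs, abs_mul, abs_of_pos (S.q_pos i)]
  exact mul_le_mul_of_nonneg_left (hK _) (S.q_pos i).le

lemma step_back {D e : ℝ → ℝ} {K η : ℝ} (hK : ∀ x, |D x| ≤ K)
    (hD : ∀ x, D x = e x + ∑' i, S.q i * D (x - S.l i)) (he : Tendsto e atTop (𝓝 0))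
    (hη : ∀ ε > 0, ∀ᶠ x in atTop, D x ≤ η + ε) (hηK : -K ≤ η) (i0 : ι) {ε : ℝ} (hε : 0 < ε) :
    ∃ ε' > 0, ∃ X0, ∀ x ≥ X0, η - ε' ≤ D x → η - ε ≤ D (x - S.l i0) := by
  have hK0 : 0 ≤ K := (abs_nonneg _).trans (hK 0)
  have hq := S.q_pos i0
  obtain ⟨ε', hε'⟩ : ∃ ε', ε' = S.q i0 * ε / 4 := ⟨_, rfl⟩
  have hε'0 : 0 < ε' := by rw [hε']; positivity
  obtain ⟨x0, hx0⟩ := eventually_atTop.mp (hη ε' hε'0)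
  have h1 : ∀ᶠ x in atTop, e x ≤ ε' := he.eventually (ge_mem_nhds hε'0)
  have h2 : ∀ᶠ x in atTop, 2 * K * (∑' i, S.q i * (if x - S.l i < x0 then (1:ℝ) else 0)) ≤ ε' := by
    have := (S.tail_tendsto x0).const_mul (2 * K)
    rw [mul_zero] at this
    exact this.eventually (ge_mem_nhds hε'0)
  obtain ⟨X0, hX0⟩ := eventually_atTop.mp (h1.and h2)
  refine ⟨ε', hε'0, X0, fun x hx hDx => ?_⟩
  obtain ⟨hx1, hx2⟩ := hX0 x hx
  set g : ι → ℝ := fun i => η + ε' + 2 * K * (if x - S.l i < x0 then (1:ℝ) else 0) - D (x - S.l i) with hg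
  have hg0 : ∀ i, 0 ≤ g i := by
    intro i
    simp only [hg]
    split_ifs with h
    · have := (abs_le.mp (hK (x - S.l i))).2
      linarith
    · have := hx0 (x - S.l i) (not_lt.mp h)
      linarith
  have s1 : Summable fun i => S.q i * (if x - S.l i < x0 then (1:ℝ) else 0) := by
    refine Summable.of_nonneg_of_le (fun i => ?_) (fun i => ?_) S.hasSum_q.summable
    · have := S.q_pos i; split_ifs <;> simp [this.le]
    · have := S.q_pos i; split_ifs <;> simp [this.le]
  have s2 := S.summable_bdd hK (fun i => x - S.l i)
  have hs : HasSum (fun i => S.q i * g i) (1 * (η + ε') +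
      2 * K * (∑' i, S.q i * (if x - S.l i < x0 then (1:ℝ) else 0)) - ∑' i, S.q i * D (x - S.l i)) := by
    have := ((S.hasSum_q.mul_right (η + ε')).add (s1.hasSum.mul_left (2 * K))).sub s2.hasSum
    refine this.congr_fun ?_ |> fun h => h
    intro i
    simp only [hg]; ring
  have h3 : S.q i0 * g i0 ≤ _ := hs.summable.le_tsum i0 (fun i _ => mul_nonneg (S.q_pos i).le (hg0 i))
  rw [hs.tsum_eq] at h3
  have h4 : S.q i0 * (η + ε' - D (x - S.l i0)) ≤ S.q i0 * g i0 := by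
    refine mul_le_mul_of_nonneg_left ?_ hq.le
    simp only [hg]
    split_ifs <;> linarith
  have h5 := hD x
  have h6 : S.q i0 * (η + ε' - D (x - S.l i0)) ≤ S.q i0 * ε := by
    have : S.q i0 * ε = 4 * ε' := by rw [hε']; ring
    linarith
  have := le_of_mul_le_mul_left h6 hq
  linarith

lemma blackwell_half {Z e : ℝ → ℝ} {K : ℝ} (hK : ∀ x, |Z x| ≤ K)
    (hZ : ∀ x, Z x = e x + ∑' i, S.q i * Z (x - S.l i)) (he : Tendsto e atTop (𝓝 0)) (i0 : ι)
    {ε : ℝ} (hε : 0 < ε) : ∀ᶠ x in atTop, Z x - Z (x - S.l i0) ≤ ε := by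
  set a := S.l i0 with ha
  set D : ℝ → ℝ := fun x => Z x - Z (x - a) with hDdef
  have hDK : ∀ x, |D x| ≤ 2 * K := by
    intro x
    have h1 := abs_le.mp (hK x)
    have h2 := abs_le.mp (hK (x - a))
    simp only [hDdef]; rw [abs_le]; constructor <;> linarith
  have hD : ∀ x, D x = (e x - e (x - a)) + ∑' i, S.q i * D (x - S.l i) := by
    intro x
    simp only [hDdef, mul_sub]
    rw [(S.summable_bdd hK (fun i => x - S.l i)).tsum_sub (S.summable_bdd hK (fun i => x - S.l i - a))]
    have h1 := hZ x
    have h2 := hZ (x - a)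
    simp only [sub_right_comm x a] at h2
    rw [h1, h2]; ring
  have he' : Tendsto (fun x => e x - e (x - a)) atTop (𝓝 0) := by
    have : Tendsto (fun x : ℝ => x - a) atTop atTop := tendsto_atTop_add_const_right _ (-a) tendsto_id
    simpa using he.sub (he.comp this)
  have hb1 : IsBoundedUnder (· ≤ ·) atTop D :=
    ⟨2 * K, eventually_map.mpr (Eventually.of_forall fun x => (abs_le.mp (hDK x)).2)⟩
  have hb2 : IsBoundedUnder (· ≥ ·) atTop D :=
    ⟨-(2 * K), eventually_map.mpr (Eventually.of_forall fun x => (abs_le.mp (hDK x)).1)⟩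
  obtain ⟨η, hη⟩ : ∃ η, η = limsup D atTop := ⟨_, rfl⟩
  have hup : ∀ ε > 0, ∀ᶠ x in atTop, D x ≤ η + ε := by
    intro ε hε
    have : limsup D atTop < η + ε := by rw [← hη]; linarith
    filter_upwards [eventually_lt_of_limsup_lt this hb1] with x hx using hx.le
  have hlow : ∀ ε > 0, ∃ᶠ x in atTop, η - ε < D x := by
    intro ε hε
    refine frequently_lt_of_lt_limsup hb2.isCoboundedUnder_le ?_
    rw [← hη]; linarith
  have hηK : -(2 * K) ≤ η := by
    by_contra h
    push Not at h
    obtain ⟨x, hx⟩ := (hup ((-(2 * K) - η) / 2) (by linarith)).exists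
    have := (abs_le.mp (hDK x)).1
    linarith
  have chain : ∀ J : ℕ, ∀ ε > 0, ∀ Y : ℝ, ∃ x ≥ Y, ∀ j ≤ J, η - ε ≤ D (x - j * a) := by
    intro J
    induction J with
    | zero =>
      intro ε hε Y
      obtain ⟨x, hx, hx'⟩ := ((hlow ε hε).and_eventually (eventually_ge_atTop Y)).exists
      refine ⟨x, hx', fun j hj => ?_⟩
      obtain rfl : j = 0 := by omega
      simpa using hx.le
    | succ J ih =>
      intro ε hε Y
      obtain ⟨ε', hε', X0, h⟩ := S.step_back hDK hD he' hup hηK i0 hε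
      obtain ⟨x, hx, hj⟩ := ih (min ε ε') (lt_min hε hε') (max Y (X0 + J * a))
      refine ⟨x, (le_max_left _ _).trans hx, fun j hjJ => ?_⟩
      rcases Nat.lt_or_ge J j with hlt | hge
      · obtain rfl : j = J + 1 := by omega
        have h1 := h (x - J * a) (by have := (le_max_right _ _).trans hx; linarith)
          (by have := hj J le_rfl; have := min_le_right ε ε'; linarith)
        rw [← ha] at h1
        push_cast
        rwa [show x - (J + 1) * a = x - J * a - a by ring]
      · have := hj j hge
        have := min_le_left ε ε'
        linarith
  have hη0 : η ≤ 0 := by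
    by_contra h
    push Not at h
    obtain ⟨J, hJ⟩ := exists_nat_gt (4 * K / η)
    obtain ⟨x, _, hx⟩ := chain J (η / 2) (by linarith) 0
    have h1 : ∑ j ∈ Finset.range J, D (x - j * a) = Z x - Z (x - J * a) := by
      have := Finset.sum_range_sub' (fun j : ℕ => Z (x - j * a)) J
      simp only [Nat.cast_zero, zero_mul, sub_zero] at this
      rw [← this]
      refine Finset.sum_congr rfl fun j _ => ?_
      simp only [hDdef]
      push_cast
      rw [show x - (j + 1) * a = x - j * a - a by ring]
    have h2 : J * (η / 2) ≤ ∑ j ∈ Finset.range J, D (x - j * a) := by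
      have := Finset.card_nsmul_le_sum (Finset.range J) (fun j : ℕ => D (x - j * a)) (η / 2)
        (fun j hj => by have := hx j (by simp at hj; omega); linarith)
      simpa using this
    have h3 := abs_le.mp (hK x)
    have h4 := abs_le.mp (hK (x - J * a))
    rw [div_lt_iff₀ h] at hJ
    linarith
  filter_upwards [hup ε hε] with x hx
  simp only [hDdef] at hx
  linarith

lemma blackwell {Z e : ℝ → ℝ} {K : ℝ} (hK : ∀ x, |Z x| ≤ K)
    (hZ : ∀ x, Z x = e x + ∑' i, S.q i * Z (x - S.l i)) (he : Tendsto e atTop (𝓝 0)) (i0 : ι) :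
    Tendsto (fun x => Z x - Z (x - S.l i0)) atTop (𝓝 0) := by
  rw [Metric.tendsto_nhds]
  intro ε hε
  have h1 := S.blackwell_half hK hZ he i0 (half_pos hε)
  have h2 := S.blackwell_half (Z := fun x => -Z x) (e := fun x => -e x) (K := K)
    (by simpa using hK) (fun x => by
      simp only [mul_neg, tsum_neg]; rw [hZ x]; ring) (by simpa using he.neg) i0 (half_pos hε)
  filter_upwards [h1, h2] with x hx1 hx2
  rw [Real.dist_eq, sub_zero, abs_lt]
  constructor <;> linarith

lemma Z_renewal (x : ℝ) : S.Z x = (if 0 ≤ x then Real.exp (-S.ρ * x) else 0) +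
    ∑' i, S.q i * S.Z (x - S.l i) := by
  have := S.V_rec S.ρ (fun _ => 1) x 0 0
  simp only [V_one, sub_zero, mul_one, zero_add] at this
  exact this

lemma exp_mul_M (φ : ℝ → ℝ) (L : ℝ) :
    Real.exp (S.ρ * L) * S.M S.ρ φ L = ∑ u ∈ S.W L, φ (S.T u) := by
  rw [M, Finset.mul_sum]
  refine Finset.sum_congr rfl fun u _ => ?_
  rw [p, ← mul_assoc, ← mul_assoc, ← Real.exp_add, ← Real.exp_add,
    show S.ρ * L + -S.ρ * S.X u + -S.ρ * (L - S.X u) = 0 by ring, Real.exp_zero, one_mul]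

lemma Z_mono {x y : ℝ} (h : x ≤ y) : S.Z x ≤ Real.exp (S.ρ * (y - x)) * S.Z y := by
  have h1 := S.exp_mul_M (fun _ => 1) x
  have h2 := S.exp_mul_M (fun _ => 1) y
  have h3 : ∑ u ∈ S.W x, (1:ℝ) ≤ ∑ u ∈ S.W y, (1:ℝ) :=
    Finset.sum_le_sum_of_subset_of_nonneg (S.W_subset h) (fun _ _ _ => zero_le_one)
  rw [← h1, ← h2] at h3
  have h4 := mul_le_mul_of_nonneg_left h3 (Real.exp_pos (-S.ρ * x)).le
  rw [← mul_assoc, ← mul_assoc, ← Real.exp_add, ← Real.exp_add] at h4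
  simp only [neg_mul, neg_add_cancel, Real.exp_zero, one_mul] at h4
  rwa [show -(S.ρ * x) + S.ρ * y = S.ρ * (y - x) by ring] at h4

def Gam : AddSubgroup ℝ where
  carrier := {a | Tendsto (fun x => S.Z x - S.Z (x - a)) atTop (𝓝 0)}
  zero_mem' := by simp
  add_mem' := by
    intro a b ha hb
    simp only [Set.mem_ofPred_eq] at *
    have : Tendsto (fun x : ℝ => x - a) atTop atTop := tendsto_atTop_add_const_right _ (-a) tendsto_id
    have := ha.add (hb.comp this)
    simp only [Function.comp_def, sub_add_sub_cancel, add_zero, sub_sub] at this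
    exact this
  neg_mem' := by
    intro a ha
    simp only [Set.mem_ofPred_eq] at *
    have : Tendsto (fun x : ℝ => x + a) atTop atTop := tendsto_atTop_add_const_right _ a tendsto_id
    have := (ha.comp this).neg
    simpa [Function.comp_def] using this

lemma Gam_mem (a : ℝ) : a ∈ S.Gam ↔ Tendsto (fun x => S.Z x - S.Z (x - a)) atTop (𝓝 0) := Iff.rfl

lemma l_mem_Gam (i : ι) : S.l i ∈ S.Gam := by
  rw [Gam_mem]
  obtain ⟨K, hK, h⟩ := S.Z_bdd
  refine S.blackwell (K := K) (fun x => ?_) S.Z_renewal ?_ i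
  · rw [abs_of_nonneg (S.Z_nonneg x)]; exact h x
  · have h1 : Tendsto (fun x : ℝ => Real.exp (-S.ρ * x)) atTop (𝓝 0) :=
      Real.tendsto_exp_atBot.comp (tendsto_id.const_mul_atTop_of_neg (by linarith [S.hρ]))
    refine h1.congr' ?_
    filter_upwards [eventually_ge_atTop 0] with x hx
    rw [if_pos hx]

lemma slow (hd : Dense (AddSubgroup.closure (Set.range S.l) : Set ℝ)) (C : ℝ) {ε : ℝ} (hε : 0 < ε) :
    ∀ᶠ x in atTop, ∀ b ∈ Set.Icc 0 C, |S.Z x - S.Z (x - b)| ≤ ε := by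
  have hd' : Dense (S.Gam : Set ℝ) := by
    refine hd.mono ?_
    refine (AddSubgroup.closure_le _).mpr ?_
    rintro _ ⟨i, rfl⟩
    exact S.l_mem_Gam i
  obtain ⟨K, hK, hZK⟩ := S.Z_bdd
  have hρ := S.hρ
  obtain ⟨δ, hδ, hδK⟩ : ∃ δ > 0, K * (Real.exp (S.ρ * (2 * δ)) - 1) ≤ ε / 2 := by
    have h1 : Tendsto (fun δ : ℝ => K * (Real.exp (S.ρ * (2 * δ)) - 1)) (𝓝[>] 0) (𝓝 0) := by
      have : Continuous fun δ : ℝ => K * (Real.exp (S.ρ * (2 * δ)) - 1) := by fun_prop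
      have h := this.tendsto 0
      simp only [mul_zero, Real.exp_zero, sub_self] at h
      exact h.mono_left nhdsWithin_le_nhds
    obtain ⟨δ, h2, h3⟩ := ((h1.eventually (ge_mem_nhds (half_pos hε))).and self_mem_nhdsWithin).exists
    exact ⟨δ, h3, h2⟩
  refine isCompact_Icc.induction_on (p := fun s => ∀ᶠ x in atTop, ∀ b ∈ s, |S.Z x - S.Z (x - b)| ≤ ε)
    ?_ ?_ ?_ ?_
  · simp
  · intro s t hst ht
    filter_upwards [ht] with x hx b hb using hx b (hst hb)
  · intro s t hs ht
    filter_upwards [hs, ht] with x hx hx' b hb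
    rcases hb with hb | hb
    · exact hx b hb
    · exact hx' b hb
  · intro b0 _
    refine ⟨Set.Ioo (b0 - δ / 2) (b0 + δ / 2),
      mem_nhdsWithin_of_mem_nhds (Ioo_mem_nhds (by linarith) (by linarith)), ?_⟩
    obtain ⟨a1, ha1, h1⟩ := hd'.exists_between (show b0 - δ < b0 - δ / 2 by linarith)
    obtain ⟨a2, ha2, h2⟩ := hd'.exists_between (show b0 + δ / 2 < b0 + δ by linarith)
    have t1 := (S.Gam_mem a1).mp ha1
    have t2 := (S.Gam_mem a2).mp ha2
    rw [Metric.tendsto_nhds] at t1 t2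
    filter_upwards [t1 (ε / 2) (half_pos hε), t2 (ε / 2) (half_pos hε)] with x hx1 hx2 b hb
    rw [Real.dist_eq, sub_zero, abs_lt] at hx1 hx2
    have m1 := S.Z_mono (show x - b ≤ x - a1 by linarith [h1.2, hb.1])
    have m2 := S.Z_mono (show x - a2 ≤ x - b by linarith [h2.1, hb.2])
    have e1 : Real.exp (S.ρ * (x - a1 - (x - b))) ≤ Real.exp (S.ρ * (2 * δ)) := by
      rw [Real.exp_le_exp]
      exact mul_le_mul_of_nonneg_left (by linarith [h1.1, hb.2]) hρ.le
    have e2 : Real.exp (S.ρ * (x - b - (x - a2))) ≤ Real.exp (S.ρ * (2 * δ)) := by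
      rw [Real.exp_le_exp]
      exact mul_le_mul_of_nonneg_left (by linarith [h2.2, hb.1]) hρ.le
    have hE : 0 ≤ Real.exp (S.ρ * (2 * δ)) - 1 := by
      have := Real.one_le_exp (x := S.ρ * (2 * δ)) (by positivity); linarith
    have n1 : S.Z (x - b) ≤ S.Z (x - a1) + ε / 2 := by
      have k1 := mul_le_mul_of_nonneg_right e1 (S.Z_nonneg (x - a1))
      have k2 := mul_le_mul_of_nonneg_right (hZK (x - a1)) hE
      nlinarith
    have n2 : S.Z (x - a2) ≤ S.Z (x - b) + ε / 2 := by
      have k1 := mul_le_mul_of_nonneg_right e2 (S.Z_nonneg (x - b))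
      have k2 := mul_le_mul_of_nonneg_right (hZK (x - b)) hE
      nlinarith
    rw [abs_le]
    constructor <;> linarith

end RS
end OddMom

namespace OddMom
open scoped BigOperators
open Filter Topology
namespace RS
variable {ι : Type} (S : RS ι)

lemma sqrt_large (K : ℝ) {ε : ℝ} (hε : 0 < ε) : ∀ᶠ B : ℝ in atTop, K ≤ ε * √(1 + B) := by
  have h1 : Tendsto (fun B : ℝ => ε * √(1 + B)) atTop atTop :=
    (Real.tendsto_sqrt_atTop.comp (tendsto_atTop_add_const_left _ 1 tendsto_id)).const_mul_atTop hε
  exact h1.eventually_ge_atTop K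

lemma exp_small {a : ℝ} (ha : 0 < a) (K : ℝ) {ε : ℝ} (hε : 0 < ε) :
    ∀ᶠ x : ℝ in atTop, K * Real.exp (-a * x) ≤ ε := by
  have h1 : Tendsto (fun x : ℝ => K * Real.exp (-a * x)) atTop (𝓝 (K * 0)) :=
    (Real.tendsto_exp_atBot.comp (tendsto_id.const_mul_atTop_of_neg (by linarith))).const_mul K
  rw [mul_zero] at h1
  exact h1.eventually (ge_mem_nhds hε)

lemma M_abs' (k : ℕ) {d : ℝ} (hd : 0 < d) : ∃ K : ℝ, 0 ≤ K ∧ ∀ L, 0 ≤ L →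
    |S.M d (fun t => t ^ k) L| ≤ K * √(1 + L) ^ k := by
  obtain ⟨K, hK, h⟩ := S.M_abs k hd
  exact ⟨K, hK, fun L hL => (S.M_abs_le k d L).trans (h L hL)⟩

lemma Sm_small {k : ℕ} (hk : 1 ≤ k)
    (h : ∀ ε > 0, ∀ᶠ L in atTop, |S.M S.ρ (fun t => t ^ k) L| ≤ ε * √(1 + L) ^ k) {ε : ℝ} (hε : 0 < ε) :
    ∀ᶠ B in atTop, |S.Sm (fun t => t ^ k) B| ≤ ε * √(1 + B) ^ (k + 2) := by
  have hρ := S.hρ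
  obtain ⟨K, hK, hM⟩ := S.M_abs' k hρ
  obtain ⟨ε1, hε1⟩ : ∃ ε1, ε1 = ε / (2 * (1 + S.ρ)) := ⟨_, rfl⟩
  have hε10 : 0 < ε1 := by rw [hε1]; positivity
  obtain ⟨L0, hL0⟩ := eventually_atTop.mp (h ε1 hε10)
  filter_upwards [eventually_ge_atTop 0, sqrt_large (K * √(1 + L0) ^ k) hε10] with B hB hB2
  have hs1 : 1 ≤ √(1 + B) := one_le_sqrt hB
  have hb : ∀ x, 0 ≤ x → x ≤ B → |S.M S.ρ (fun t => t ^ k) x| ≤ 2 * ε1 * √(1 + B) ^ k := by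
    intro x hx hxB
    have p1 : √(1 + x) ^ k ≤ √(1 + B) ^ k := pow_le_pow_left₀ (by positivity) (sqrt_mono hxB) k
    have p0 : 0 ≤ √(1 + B) ^ k := by positivity
    by_cases hxL : L0 ≤ x
    · have := hL0 x hxL
      have := mul_le_mul_of_nonneg_left p1 hε10.le
      nlinarith
    · push Not at hxL
      have h1 := hM x hx
      have p2 : √(1 + x) ^ k ≤ √(1 + L0) ^ k := pow_le_pow_left₀ (by positivity) (sqrt_mono hxL.le) k
      have h2 := mul_le_mul_of_nonneg_left p2 hK
      have p3 : √(1 + B) ≤ √(1 + B) ^ k := le_self_pow₀ hs1 (by omega)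
      have h3 := mul_le_mul_of_nonneg_left p3 hε10.le
      have := mul_nonneg hε10.le p0
      linarith
  refine (S.Sm_bound hρ.le _ hB hb).trans ?_
  have e1 : √(1 + B) ^ (k + 2) = (1 + B) * √(1 + B) ^ k := by
    rw [pow_add, Real.sq_sqrt (by linarith)]; ring
  have e2 : ε = 2 * ε1 * (1 + S.ρ) := by rw [hε1]; field_simp
  rw [e1]
  have p0 : 0 ≤ √(1 + B) ^ k := by positivity
  have h5 : 1 + S.ρ * B ≤ (1 + S.ρ) * (1 + B) := by nlinarith
  have h6 : 0 ≤ 2 * ε1 * √(1 + B) ^ k := by positivity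
  have := mul_le_mul_of_nonneg_right h5 h6
  rw [e2]
  nlinarith

lemma FP_odd_one {B : ℝ} (hB : 0 ≤ B) : S.FP B (fun t _ => t ^ 1) = 0 := by
  rw [S.dynkin_pow 1 hB]
  simp only [step_one]
  simp

lemma Sm_even (r : ℕ) : ∃ K : ℝ, 0 ≤ K ∧ ∀ B, 0 ≤ B →
    S.Sm (fun t => 1 + |t| ^ (2 * r)) B ≤ K * √(1 + B) ^ (2 * r + 2) := by
  obtain ⟨K, hK, hM⟩ := S.M_abs (2 * r) zero_lt_one
  obtain ⟨K0, hK0, hM0⟩ := S.M_abs 0 zero_lt_one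
  refine ⟨K0 + K, by positivity, fun B hB => ?_⟩
  have h2 : |S.Sm (fun t => 1 + |t| ^ (2 * r)) B| ≤ (1 + 1 * B) * ((K0 + K) * √(1 + B) ^ (2 * r)) := by
    refine S.Sm_bound zero_le_one _ hB fun x hx0 hxB => ?_
    rw [abs_of_nonneg (S.M_nonneg _ (fun t => by positivity) _), M_add]
    have e1 := hM0 x hx0
    have e2 := hM x hx0
    simp only [pow_zero, mul_one] at e1
    have e3 : √(1 + x) ^ (2 * r) ≤ √(1 + B) ^ (2 * r) := pow_le_pow_left₀ (by positivity) (sqrt_mono hxB) _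
    have e4 : 1 ≤ √(1 + B) ^ (2 * r) := one_le_pow₀ (one_le_sqrt hB)
    nlinarith
  refine (le_abs_self _).trans (h2.trans (le_of_eq ?_))
  rw [pow_add, Real.sq_sqrt (by linarith)]; ring

lemma FP_odd_succ (r : ℕ)
    (h : ∀ ε > 0, ∀ᶠ L in atTop, |S.M S.ρ (fun t => t ^ (2 * r + 1)) L| ≤ ε * √(1 + L) ^ (2 * r + 1))
    {ε : ℝ} (hε : 0 < ε) :
    ∀ᶠ B in atTop, |S.FP B (fun t _ => t ^ (2 * r + 3))| ≤ ε * √(1 + B) ^ (2 * r + 3) := by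
  obtain ⟨C, hC, D, hst⟩ := S.step_three (2 * r)
  obtain ⟨K, hK, hS⟩ := S.Sm_even r
  obtain ⟨ε1, hε1⟩ : ∃ ε1, ε1 = ε / (2 * (1 + |D|)) := ⟨_, rfl⟩
  have hε10 : 0 < ε1 := by rw [hε1]; positivity
  filter_upwards [eventually_ge_atTop 0, S.Sm_small (by omega) h hε10, sqrt_large (C * K) (half_pos hε)]
    with B hB h1 h2
  rw [S.dynkin_pow _ hB, zero_pow (by omega), zero_add]
  have e1 : |∑ w ∈ S.W B, S.p w * (∑' i, S.q i * (S.T w + S.xi i) ^ (2 * r + 3) - S.T w ^ (2 * r + 3))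
      - D * S.Sm (fun t => t ^ (2 * r + 1)) B| ≤ C * S.Sm (fun t => 1 + |t| ^ (2 * r)) B := by
    rw [Sm, Sm, Finset.mul_sum, Finset.mul_sum, ← Finset.sum_sub_distrib]
    refine (Finset.abs_sum_le_sum_abs _ _).trans (Finset.sum_le_sum fun w _ => ?_)
    rw [mul_left_comm D, ← mul_sub, abs_mul, abs_of_pos (S.p_pos w), mul_left_comm C]
    exact mul_le_mul_of_nonneg_left (hst _) (S.p_pos w).le
  have e2 := mul_le_mul_of_nonneg_left (hS B hB) hC
  have p0 : 0 ≤ √(1 + B) ^ (2 * r + 2) := by positivity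
  have e3 : C * (K * √(1 + B) ^ (2 * r + 2)) ≤ ε / 2 * √(1 + B) ^ (2 * r + 3) := by
    calc _ = C * K * √(1 + B) ^ (2 * r + 2) := by ring
      _ ≤ ε / 2 * √(1 + B) * √(1 + B) ^ (2 * r + 2) := mul_le_mul_of_nonneg_right h2 p0
      _ = _ := by ring
  have e4 : |D * S.Sm (fun t => t ^ (2 * r + 1)) B| ≤ ε / 2 * √(1 + B) ^ (2 * r + 3) := by
    rw [abs_mul]
    have p1 : 0 ≤ √(1 + B) ^ (2 * r + 3) := by positivity
    calc |D| * |S.Sm (fun t => t ^ (2 * r + 1)) B| ≤ (1 + |D|) * (ε1 * √(1 + B) ^ (2 * r + 1 + 2)) :=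
          mul_le_mul (by linarith) h1 (abs_nonneg _) (by positivity)
      _ = ((1 + |D|) * ε1) * √(1 + B) ^ (2 * r + 3) := by ring
      _ = _ := by
        congr 1; rw [hε1]; field_simp
  have := abs_sub_abs_le_abs_sub (∑ w ∈ S.W B, S.p w * (∑' i, S.q i * (S.T w + S.xi i) ^ (2 * r + 3) - S.T w ^ (2 * r + 3))) (D * S.Sm (fun t => t ^ (2 * r + 1)) B)
  linarith

lemma V_expand (k : ℕ) (d L t x : ℝ) : S.V d (fun t => t ^ k) L t x =
    ∑ j ∈ Finset.range (k + 1), t ^ j * ((k.choose j : ℝ) * S.M d (fun t => t ^ (k - j)) (L - x)) := by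
  simp only [V, M, Finset.mul_sum]
  rw [Finset.sum_comm]
  refine Finset.sum_congr rfl fun u _ => ?_
  rw [add_pow, Finset.mul_sum, Finset.mul_sum]
  exact Finset.sum_congr rfl fun j _ => by ring

lemma V_main (k : ℕ) (R : ℝ) (hR : 0 ≤ R) : ∃ C : ℝ, 0 ≤ C ∧ ∀ L t x, L - R < x →
    |S.V S.ρ (fun t => t ^ (k + 1)) L t x - S.Z (L - x) * t ^ (k + 1)| ≤ C * (1 + |t| ^ k) := by
  choose K hK hM using fun j => S.M_abs' j S.hρ
  refine ⟨∑ j ∈ Finset.range (k + 1), ((k + 1).choose j : ℝ) * (K (k + 1 - j) * √(1 + R) ^ (k + 1 - j)),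
    Finset.sum_nonneg fun j _ => mul_nonneg (by positivity) (mul_nonneg (hK _) (by positivity)), ?_⟩
  intro L t x hx
  rw [V_expand, Finset.sum_range_succ]
  have e0 : t ^ (k + 1) * (((k + 1).choose (k + 1) : ℝ) * S.M S.ρ (fun t => t ^ (k + 1 - (k + 1))) (L - x))
      = S.Z (L - x) * t ^ (k + 1) := by
    simp only [Nat.choose_self, Nat.sub_self, pow_zero, Nat.cast_one, one_mul]; ring
  rw [e0, add_sub_cancel_right, Finset.sum_mul]
  refine (Finset.abs_sum_le_sum_abs _ _).trans (Finset.sum_le_sum fun j hj => ?_)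
  rw [abs_mul, abs_mul, abs_pow, Nat.abs_cast, mul_comm]
  have hMb : |S.M S.ρ (fun t => t ^ (k + 1 - j)) (L - x)| ≤ K (k + 1 - j) * √(1 + R) ^ (k + 1 - j) := by
    by_cases h : 0 ≤ L - x
    · refine (hM _ _ h).trans (mul_le_mul_of_nonneg_left ?_ (hK _))
      exact pow_le_pow_left₀ (by positivity) (sqrt_mono (by linarith)) _
    · rw [S.M_neg _ _ (not_le.mp h), abs_zero]
      exact mul_nonneg (hK _) (by positivity)
  refine mul_le_mul (mul_le_mul_of_nonneg_left hMb (by positivity))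
    (pow_le_aux (by simp at hj; omega)) (by positivity)
    (mul_nonneg (by positivity) (mul_nonneg (hK _) (by positivity)))

lemma main_step (hd : Dense (AddSubgroup.closure (Set.range S.l) : Set ℝ)) (k : ℕ)
    (h : ∀ ε > 0, ∀ᶠ B in atTop, |S.FP B (fun t _ => t ^ (k + 1))| ≤ ε * √(1 + B) ^ (k + 1))
    {ε : ℝ} (hε : 0 < ε) :
    ∀ᶠ L in atTop, |S.M S.ρ (fun t => t ^ (k + 1)) L| ≤ ε * √(1 + L) ^ (k + 1) := by
  have hρ := S.hρ
  have he := S.he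
  obtain ⟨K, hK, hZK⟩ := S.Z_bdd
  obtain ⟨KF, hKF, hF⟩ := S.FP_abs_pow (k + 1)
  obtain ⟨KF', hKF', hF'⟩ := S.FP_abs_pow k
  obtain ⟨KE, hKE, hE⟩ := S.FP_E (k + 1)
  obtain ⟨KM, hKM, hM⟩ := S.M_abs' (k + 1) hρ
  have hε5 : 0 < ε / 5 := by positivity
  obtain ⟨ε1, hε1⟩ : ∃ ε1, ε1 = ε / 5 / (KF + 1) := ⟨_, rfl⟩
  have hε10 : 0 < ε1 := by rw [hε1]; positivity
  have hε1' : ε1 * KF ≤ ε / 5 := by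
    rw [hε1, div_mul_eq_mul_div, div_le_iff₀ (by positivity)]; nlinarith
  obtain ⟨C, hC, hC0⟩ := ((exp_small he (K * KE) hε5).and (eventually_ge_atTop 0)).exists
  obtain ⟨R, ⟨hR1, hR2⟩, hR0⟩ := (((S.slow hd C hε10).and (exp_small hρ KM hε5)).and
    (eventually_ge_atTop 0)).exists
  obtain ⟨CR, hCR, hV⟩ := S.V_main k R hR0
  obtain ⟨ε2, hε2⟩ : ∃ ε2, ε2 = ε / 5 / (K + 1) := ⟨_, rfl⟩
  have hε20 : 0 < ε2 := by rw [hε2]; positivity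
  have hε2' : K * ε2 ≤ ε / 5 := by
    rw [hε2, mul_div_assoc', div_le_iff₀ (by positivity)]; nlinarith
  have hshift : Tendsto (fun L : ℝ => L - R) atTop atTop :=
    tendsto_atTop_add_const_right _ (-R) tendsto_id
  filter_upwards [eventually_ge_atTop R, hshift.eventually (h ε2 hε20),
    sqrt_large (CR * (1 + KF')) hε5] with L hLR hL1 hL2
  set B := L - R with hBdef
  have hB : 0 ≤ B := by rw [hBdef]; linarith
  have hBL : B ≤ L := by rw [hBdef]; linarith
  set s := √(1 + L) with hs
  have hs1 : 1 ≤ s := one_le_sqrt (by linarith)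
  have hsB : √(1 + B) ≤ s := sqrt_mono hBL
  have hsBk : √(1 + B) ^ (k + 1) ≤ s ^ (k + 1) := pow_le_pow_left₀ (by positivity) hsB _
  have hsBk' : √(1 + B) ^ k ≤ s ^ k := pow_le_pow_left₀ (by positivity) hsB _
  have hsk : 0 < s ^ (k + 1) := by positivity
  have hsk1 : 1 ≤ s ^ k := one_le_pow₀ hs1
  have hf1 : S.FS (fun _ _ => (1:ℝ)) := by simpa using S.FS_pow 0
  -- comparison
  have FS1 : S.FS (fun t x => S.Z R * (fun t _ => t ^ (k + 1)) t x) := (S.FS_pow (k + 1)).mul (S.Z R)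
  have FS2 : S.FS (fun t x => S.V S.ρ (fun t => t ^ (k + 1)) L t x + (-1) *
      (fun t x => S.Z R * (fun t _ => t ^ (k + 1)) t x) t x) := (S.V_FS _ _ _).add (FS1.mul (-1))
  have FSa : S.FS (fun t x => ε1 * (fun t _ => |t| ^ (k + 1)) t x) := (S.FS_abs_pow (k + 1)).mul ε1
  have FSb : S.FS (fun t x => (K * Real.exp (-S.e * C)) * S.E (k + 1) B t x) := (S.FS_E (k + 1) B).mul _
  have FSc : S.FS (fun t x => CR * ((fun _ _ => (1:ℝ)) t x + (fun t _ => |t| ^ k) t x)) :=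
    (hf1.add (S.FS_abs_pow k)).mul CR
  have FSab := FSa.add FSb
  have cmp := S.FP_abs FS2 (FSab.add FSc) (B := B) (by
    intro t x hx
    have h1 := hV L t x hx
    have h2 : |S.Z (L - x) - S.Z R| ≤ ε1 + K * Real.exp (-S.e * C) * Real.exp (S.e * (x - B)) := by
      by_cases hxC : x ≤ B + C
      · have := hR1 (x - B) ⟨by linarith, by linarith⟩
        rw [abs_sub_comm, show R - (x - B) = L - x by rw [hBdef]; ring] at this
        have : 0 ≤ K * Real.exp (-S.e * C) * Real.exp (S.e * (x - B)) := by positivity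
        linarith
      · have h3 : |S.Z (L - x) - S.Z R| ≤ K := by
          rw [abs_le]
          have := S.Z_nonneg (L - x)
          have := S.Z_nonneg R
          have := hZK (L - x)
          have := hZK R
          constructor <;> linarith
        have h4 : 1 ≤ Real.exp (-S.e * C) * Real.exp (S.e * (x - B)) := by
          rw [← Real.exp_add]; apply Real.one_le_exp; nlinarith
        rw [mul_assoc]
        nlinarith
    have h5 : |(S.Z (L - x) - S.Z R) * t ^ (k + 1)| ≤
        (ε1 + K * Real.exp (-S.e * C) * Real.exp (S.e * (x - B))) * |t| ^ (k + 1) := by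
      rw [abs_mul, abs_pow]
      exact mul_le_mul_of_nonneg_right h2 (by positivity)
    have h6 := abs_add_le (S.V S.ρ (fun t => t ^ (k + 1)) L t x - S.Z (L - x) * t ^ (k + 1))
      ((S.Z (L - x) - S.Z R) * t ^ (k + 1))
    rw [E]
    calc _ = |S.V S.ρ (fun t => t ^ (k + 1)) L t x - S.Z (L - x) * t ^ (k + 1) +
        (S.Z (L - x) - S.Z R) * t ^ (k + 1)| := by congr 1; ring
      _ ≤ _ := h6
      _ ≤ _ := add_le_add h1 h5
      _ = _ := by ring)
  rw [S.FP_add FSab FSc, S.FP_add FSa FSb, S.FP_mul (fun t _ => |t| ^ (k + 1)), S.FP_mul (S.E (k + 1) B),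
    S.FP_mul (fun t x => (fun _ _ => (1:ℝ)) t x + (fun t _ => |t| ^ k) t x),
    S.FP_add hf1 (S.FS_abs_pow k), S.FP_one hB,
    S.FP_add (S.V_FS _ _ _) (FS1.mul (-1)), S.FP_mul (fun t x => S.Z R * (fun t _ => t ^ (k + 1)) t x),
    S.FP_mul (fun t _ => t ^ (k + 1))] at cmp
  rw [S.M_decomp S.ρ _ hB hBL, show L - B = R by rw [hBdef]; ring]
  -- the five pieces
  have b1 : |Real.exp (-S.ρ * R) * S.M S.ρ (fun t => t ^ (k + 1)) B| ≤ ε / 5 * s ^ (k + 1) := by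
    rw [abs_mul, abs_of_pos (Real.exp_pos _)]
    calc _ ≤ Real.exp (-S.ρ * R) * (KM * s ^ (k + 1)) :=
          mul_le_mul_of_nonneg_left ((hM B hB).trans (mul_le_mul_of_nonneg_left hsBk hKM)) (Real.exp_pos _).le
      _ = KM * Real.exp (-S.ρ * R) * s ^ (k + 1) := by ring
      _ ≤ _ := mul_le_mul_of_nonneg_right hR2 hsk.le
  have b2 : |S.Z R * S.FP B (fun t _ => t ^ (k + 1))| ≤ ε / 5 * s ^ (k + 1) := by
    rw [abs_mul, abs_of_nonneg (S.Z_nonneg R)]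
    calc _ ≤ K * (ε2 * s ^ (k + 1)) := mul_le_mul (hZK R)
          (hL1.trans (mul_le_mul_of_nonneg_left hsBk hε20.le)) (abs_nonneg _) hK
      _ = K * ε2 * s ^ (k + 1) := by ring
      _ ≤ _ := mul_le_mul_of_nonneg_right hε2' hsk.le
  have b3 : ε1 * S.FP B (fun t _ => |t| ^ (k + 1)) ≤ ε / 5 * s ^ (k + 1) := by
    calc _ ≤ ε1 * (KF * s ^ (k + 1)) :=
          mul_le_mul_of_nonneg_left ((hF B hB).trans (mul_le_mul_of_nonneg_left hsBk hKF)) hε10.le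
      _ = ε1 * KF * s ^ (k + 1) := by ring
      _ ≤ _ := mul_le_mul_of_nonneg_right hε1' hsk.le
  have b4 : K * Real.exp (-S.e * C) * S.FP B (S.E (k + 1) B) ≤ ε / 5 * s ^ (k + 1) := by
    calc _ ≤ K * Real.exp (-S.e * C) * (KE * s ^ (k + 1)) :=
          mul_le_mul_of_nonneg_left ((hE B hB).trans (mul_le_mul_of_nonneg_left hsBk hKE)) (by positivity)
      _ = K * KE * Real.exp (-S.e * C) * s ^ (k + 1) := by ring
      _ ≤ _ := mul_le_mul_of_nonneg_right hC hsk.le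
  have b5 : CR * (1 + S.FP B (fun t _ => |t| ^ k)) ≤ ε / 5 * s ^ (k + 1) := by
    have i1 := (hF' B hB).trans (mul_le_mul_of_nonneg_left hsBk' hKF')
    calc _ ≤ CR * ((1 + KF') * s ^ k) := mul_le_mul_of_nonneg_left (by linarith) hCR
      _ = CR * (1 + KF') * s ^ k := by ring
      _ ≤ ε / 5 * s * s ^ k := mul_le_mul_of_nonneg_right hL2 (by positivity)
      _ = _ := by ring
  rw [abs_le] at cmp b1 b2 ⊢
  constructor <;> linarith [cmp.1, cmp.2, b1.1, b1.2, b2.1, b2.2]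

theorem odd_main (hd : Dense (AddSubgroup.closure (Set.range S.l) : Set ℝ)) (r : ℕ) :
    ∀ ε > 0, ∀ᶠ L in atTop, |S.M S.ρ (fun t => t ^ (2 * r + 1)) L| ≤ ε * √(1 + L) ^ (2 * r + 1) := by
  induction r with
  | zero =>
    intro ε hε
    refine S.main_step hd 0 (fun ε hε => ?_) hε
    filter_upwards [eventually_ge_atTop 0] with B hB
    rw [zero_add, S.FP_odd_one hB, abs_zero]; positivity
  | succ r ih =>
    intro ε hε
    exact S.main_step hd (2 * r + 2) (fun ε hε => S.FP_odd_succ r ih hε) hε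

end RS
end OddMom
namespace OddMom
open Topology

lemma pow_bd (a m : ℝ) (ha : 0 < a) (k : ℕ) :
    ∃ C : ℝ, ∀ x : ℝ, 0 ≤ x → |1 - m * x| ^ k ≤ C * Real.exp (a * x) := by
  set b := a / (k + 1) with hb
  have hk : (0:ℝ) < k + 1 := by positivity
  have hb0 : 0 < b := by positivity
  refine ⟨(1 + |m| / b) ^ k, fun x hx => ?_⟩
  have h1 : |1 - m * x| ≤ (1 + |m| / b) * Real.exp (b * x) := by
    calc |1 - m * x| ≤ |(1:ℝ)| + |m * x| := abs_sub _ _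
      _ = 1 + |m| * x := by rw [abs_one, abs_mul, abs_of_nonneg hx]
      _ ≤ (1 + |m| / b) * (1 + b * x) := by
        have h3 : |m| / b * (b * x) = |m| * x := by field_simp
        have h4 : 0 ≤ |m| / b := by positivity
        have h5 : 0 ≤ b * x := by positivity
        nlinarith
      _ ≤ _ := by
        gcongr
        linarith [Real.add_one_le_exp (b * x)]
  calc |1 - m * x| ^ k ≤ ((1 + |m| / b) * Real.exp (b * x)) ^ k := by gcongr
    _ = (1 + |m| / b) ^ k * Real.exp (k * (b * x)) := by rw [mul_pow, ← Real.exp_nat_mul]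
    _ ≤ _ := by
      refine mul_le_mul_of_nonneg_left (Real.exp_le_exp.2 ?_) (by positivity)
      have : a = b * (k + 1) := by rw [hb]; field_simp
      have h6 : a * x = k * (b * x) + b * x := by rw [this]; ring
      linarith [mul_nonneg hb0.le hx]

lemma rpow_exp (n : ℕ) (hn : 2 ≤ n) (x : ℝ) : (n:ℝ) ^ (-x) = Real.exp (-x * Real.log n) := by
  have : (0:ℝ) < n := by positivity
  rw [Real.rpow_def_of_pos this, mul_comm]

lemma exists_RS (P : Set ℕ) (hP : ∀ n ∈ P, 2 ≤ n) (hne : P.Nonempty)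
    (ρ : ℝ) (hρ0 : 0 < ρ) (hρκ : kappa P < (ρ : EReal)) (hρ1 : Pval P ρ = 1)
    (μ : ℝ) (hμ : μ = -1 / Pderiv1 P ρ) :
    ∃ S : RS ↥P, S.ρ = ρ ∧ S.μ = μ ∧ S.l = fun n : P => Real.log (n : ℕ) := by
  obtain ⟨x, ⟨r, rfl, hr⟩, hxρ⟩ := sInf_lt_iff.1 hρκ
  have hrρ : r < ρ := by exact_mod_cast hxρ
  have hlog : ∀ n : P, Real.log 2 ≤ Real.log (n : ℕ) := fun n =>
    Real.log_le_log (by norm_num) (by exact_mod_cast hP n n.2)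
  have hl2 : 0 < Real.log 2 := Real.log_pos (by norm_num)
  have hl0 : ∀ n : P, 0 < Real.log (n : ℕ) := fun n => hl2.trans_le (hlog n)
  have he : 0 < (ρ - r) / 2 := by linarith
  have hr' : Summable (fun n : P => Real.exp (-r * Real.log (n : ℕ))) := by
    refine hr.congr fun n => ?_
    rw [rpow_exp _ (hP n n.2)]
  have hmom : ∀ (m : ℝ) (k : ℕ), Summable (fun n : P => Real.exp (-ρ * Real.log (n : ℕ)) *
      (Real.exp ((ρ - r) / 2 * Real.log (n : ℕ)) * |1 - m * Real.log (n : ℕ)| ^ k)) := by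
    intro m k
    obtain ⟨C, hC⟩ := pow_bd ((ρ - r) / 2) m he k
    refine Summable.of_nonneg_of_le (fun n => by positivity) (fun n => ?_) (hr'.mul_left C)
    have h1 := hC _ (hl0 n).le
    calc _ ≤ Real.exp (-ρ * Real.log (n : ℕ)) *
        (Real.exp ((ρ - r) / 2 * Real.log (n : ℕ)) * (C * Real.exp ((ρ - r) / 2 * Real.log (n : ℕ)))) := by
          gcongr
      _ = C * (Real.exp (-ρ * Real.log (n : ℕ)) * Real.exp ((ρ - r) / 2 * Real.log (n : ℕ))
            * Real.exp ((ρ - r) / 2 * Real.log (n : ℕ))) := by ring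
      _ = _ := by
        rw [← Real.exp_add, ← Real.exp_add]
        congr 2
        ring
  have hs1 : Summable (fun n : P => Real.exp (-ρ * Real.log (n : ℕ))) := by
    refine Summable.of_nonneg_of_le (fun n => by positivity) (fun n => ?_) hr'
    apply Real.exp_le_exp.2
    have := hl0 n
    nlinarith
  have hsum : HasSum (fun n : P => Real.exp (-ρ * Real.log (n : ℕ))) 1 := by
    have h := hs1.hasSum
    convert h using 1
    rw [← hρ1, Pval]
    exact tsum_congr fun n => rpow_exp _ (hP n n.2) _
  have hs2 : Summable (fun n : P => Real.exp (-ρ * Real.log (n : ℕ)) * Real.log (n : ℕ)) := by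
    have h2 := (hmom 1 1).add hs1
    refine Summable.of_nonneg_of_le (fun n => mul_nonneg (by positivity) (hl0 n).le) (fun n => ?_) h2
    have h3 : 1 ≤ Real.exp ((ρ - r) / 2 * Real.log (n : ℕ)) :=
      Real.one_le_exp (mul_nonneg he.le (hl0 n).le)
    have h4 : Real.log (n : ℕ) - 1 ≤ |1 - 1 * Real.log (n : ℕ)| := by
      rw [abs_sub_comm]; simpa using le_abs_self (Real.log (n : ℕ) - 1)
    have h5 : |1 - 1 * Real.log (n : ℕ)| ≤
        Real.exp ((ρ - r) / 2 * Real.log (n : ℕ)) * |1 - 1 * Real.log (n : ℕ)| :=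
      le_mul_of_one_le_left (abs_nonneg _) h3
    rw [pow_one]
    have h6 := mul_le_mul_of_nonneg_left (h4.trans h5) (Real.exp_pos (-ρ * Real.log (n : ℕ))).le
    linarith
  have hpos : 0 < ∑' n : P, Real.exp (-ρ * Real.log (n : ℕ)) * Real.log (n : ℕ) := by
    obtain ⟨n, hn⟩ := hne
    exact hs2.tsum_pos (fun n => mul_nonneg (by positivity) (hl0 n).le) ⟨n, hn⟩
      (mul_pos (Real.exp_pos _) (hl0 ⟨n, hn⟩))
  have hμ' : μ = 1 / ∑' n : P, Real.exp (-ρ * Real.log (n : ℕ)) * Real.log (n : ℕ) := by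
    rw [hμ, Pderiv1]
    have : ∑' n : P, ((n : ℕ) : ℝ) ^ (-ρ) * Real.log (n : ℕ) =
        ∑' n : P, Real.exp (-ρ * Real.log (n : ℕ)) * Real.log (n : ℕ) :=
      tsum_congr fun n => by rw [rpow_exp _ (hP n n.2)]
    rw [this, neg_div_neg_eq]
  refine ⟨⟨ρ, μ, (ρ - r) / 2, Real.log 2, fun n => Real.log (n : ℕ), hρ0, he, hl2, hlog, ?_, hsum, ?_,
    hmom μ⟩, rfl, rfl, rfl⟩
  · intro B
    refine Set.Finite.of_injOn (f := fun n : P => (n : ℕ)) (t := Set.Iic ⌊Real.exp B⌋₊) ?_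
      Subtype.val_injective.injOn (Set.finite_Iic _)
    intro n hn
    have h0 : (0:ℝ) < (n : ℕ) := by
      have := hP n n.2
      positivity
    exact Nat.le_floor ((Real.log_le_iff_le_exp h0).1 hn)
  · have h := hsum.sub (hs2.hasSum.mul_left μ)
    have h0 : 1 - μ * ∑' n : P, Real.exp (-ρ * Real.log (n : ℕ)) * Real.log (n : ℕ) = 0 := by
      rw [hμ', one_div, inv_mul_cancel₀ hpos.ne', sub_self]
    rw [h0] at h
    have h1 : (fun n : P => Real.exp (-ρ * Real.log (n : ℕ)) * (1 - μ * Real.log (n : ℕ))) =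
        fun n : P => Real.exp (-ρ * Real.log (n : ℕ)) -
          μ * (Real.exp (-ρ * Real.log (n : ℕ)) * Real.log (n : ℕ)) := by
      ext n
      ring
    change HasSum (fun n : P => Real.exp (-ρ * Real.log (n : ℕ)) * (1 - μ * Real.log (n : ℕ))) 0
    rw [h1]
    exact h

lemma dense_log (P : Set ℕ) (hP : ∀ n ∈ P, 2 ≤ n) (hne : P.Nonempty)
    (hnp : ∀ d : ℕ, 2 ≤ d → ¬ P ⊆ {n : ℕ | ∃ k : ℕ, 1 ≤ k ∧ n = d ^ k}) :
    Dense (AddSubgroup.closure (Set.range (fun n : P => Real.log (n : ℕ))) : Set ℝ) := by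
  rcases AddSubgroup.dense_or_cyclic
    (AddSubgroup.closure (Set.range (fun n : P => Real.log (n : ℕ)))) with h | ⟨a, ha⟩
  · exact h
  exfalso
  wlog hpos : 0 ≤ a generalizing a
  · refine this (-a) ?_ (by linarith)
    rw [ha]
    simp [← AddSubgroup.zmultiples_eq_closure]
  have hrat : ∀ x ∈ AddSubgroup.closure (Set.range (fun n : P => Real.log (n : ℕ))),
      ∃ q : ℚ, Real.exp x = q := by
    intro x hx
    induction hx using AddSubgroup.closure_induction with
    | mem x hx =>
      obtain ⟨n, rfl⟩ := hx
      refine ⟨(n : ℕ), ?_⟩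
      have := hP n n.2
      simp only
      rw [Real.exp_log (by positivity)]
      simp
    | zero => exact ⟨1, by simp⟩
    | add x y _ _ h1 h2 =>
      obtain ⟨q1, h1⟩ := h1
      obtain ⟨q2, h2⟩ := h2
      exact ⟨q1 * q2, by rw [Real.exp_add, h1, h2]; push_cast; rfl⟩
    | neg x _ h1 =>
      obtain ⟨q1, h1⟩ := h1
      exact ⟨q1⁻¹, by rw [Real.exp_neg, h1]; push_cast; rfl⟩
  obtain ⟨q, hq⟩ := hrat a (by rw [ha]; exact AddSubgroup.subset_closure rfl)
  have hq1 : (1:ℝ) ≤ q := by rw [← hq]; exact Real.one_le_exp hpos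
  have key : ∀ n ∈ P, ∃ k : ℕ, 1 ≤ k ∧ (n : ℚ) = q ^ k := by
    intro n hn
    have hmem : Real.log n ∈ AddSubgroup.closure (Set.range (fun n : P => Real.log (n : ℕ))) :=
      AddSubgroup.subset_closure ⟨⟨n, hn⟩, rfl⟩
    rw [ha, AddSubgroup.mem_closure_singleton] at hmem
    obtain ⟨z, hz⟩ := hmem
    have h2 := hP n hn
    have hlp : 0 < Real.log n := Real.log_pos (by exact_mod_cast h2)
    rw [zsmul_eq_mul] at hz
    have hz0 : (0:ℝ) < z := by
      by_contra hcon
      push Not at hcon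
      nlinarith
    have hz0' : 0 < z := by exact_mod_cast hz0
    lift z to ℕ using hz0'.le
    refine ⟨z, by exact_mod_cast hz0', ?_⟩
    have : (n : ℝ) = (q : ℝ) ^ z := by
      rw [← hq, ← Real.exp_nat_mul]
      have e1 : (z : ℝ) * a = Real.log n := by simpa using hz
      rw [e1, Real.exp_log (by positivity)]
    exact_mod_cast this
  have hq1' : 1 ≤ q := by exact_mod_cast hq1
  obtain ⟨n0, hn0⟩ := hne
  obtain ⟨k0, hk0, h0⟩ := key n0 hn0
  have hden : q.den = 1 := by
    have := congrArg Rat.den h0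
    rw [Rat.den_natCast, Rat.den_pow] at this
    exact (pow_eq_one_iff.1 this.symm).resolve_right (by omega)
  have hnum : (q.num : ℚ) = q := Rat.coe_int_num_of_den_eq_one hden
  have hn1 : 0 ≤ q.num := Rat.num_nonneg.2 (by linarith)
  obtain ⟨d, hd⟩ := Int.eq_ofNat_of_zero_le hn1
  have hdq : (d : ℚ) = q := by rw [← hnum, hd]; simp
  have key2 : ∀ n ∈ P, ∃ k : ℕ, 1 ≤ k ∧ n = d ^ k := by
    intro n hn
    obtain ⟨k, hk, h⟩ := key n hn
    refine ⟨k, hk, ?_⟩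
    rw [← hdq] at h
    exact_mod_cast h
  refine hnp d ?_ key2
  by_contra hd2
  obtain ⟨k, hk, h⟩ := key2 n0 hn0
  have h2 := hP n0 hn0
  have hd1 : d ≤ 1 := by omega
  have : d ^ k ≤ 1 := pow_le_one' hd1 k
  omega

def pr {P : Set ℕ} (w : List P) : ℕ := (w.map (fun n : P => (n : ℕ))).prod

lemma pr_pos {P : Set ℕ} (hP : ∀ n ∈ P, 2 ≤ n) (w : List P) : 0 < pr w := by
  induction w with
  | nil => simp [pr]
  | cons a w ih =>
    have := hP a a.2
    have h2 : pr (a :: w) = a * pr w := by simp [pr]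
    rw [h2]
    positivity

lemma X_eq {P : Set ℕ} (hP : ∀ n ∈ P, 2 ≤ n) (S : RS ↥P)
    (hl : S.l = fun n : P => Real.log (n : ℕ)) (w : List P) : S.X w = Real.log (pr w) := by
  induction w with
  | nil => simp [pr]
  | cons a w ih =>
    have := hP a a.2
    have h2 : pr (a :: w) = a * pr w := by simp [pr]
    have h3 := pr_pos hP w
    rw [h2, RS.X_cons, ih, hl]
    push_cast
    rw [Real.log_mul (by positivity) (by positivity)]

lemma T_eq {P : Set ℕ} (S : RS ↥P) (w : List P) : S.T w = w.length - S.μ * S.X w := by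
  induction w with
  | nil => simp
  | cons a w ih =>
    rw [RS.T_cons, RS.X_cons, ih, RS.xi]
    push_cast [List.length_cons]
    ring

lemma af_eq (P : Set ℕ) (m n : ℕ) :
    af P m n = Nat.card {w : List P // w.length = m ∧ pr w = n} := by
  unfold af
  refine Nat.card_eq_of_bijective (fun t => ⟨List.ofFn (fun i => (⟨t.1 i, t.2.1 i⟩ : P)), ?_, ?_⟩)
    ⟨?_, ?_⟩
  · simp
  · rw [pr, List.map_ofFn, List.prod_ofFn]
    exact t.2.2
  · intro t t' h
    have h1 := List.ofFn_injective (congrArg Subtype.val h)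
    ext i
    exact congrArg Subtype.val (congrFun h1 i)
  · rintro ⟨w, rfl, hw⟩
    refine ⟨⟨fun i => (w.get i : ℕ), fun i => (w.get i).2, ?_⟩, ?_⟩
    · rw [← hw, pr]
      conv_rhs => rw [← List.ofFn_get w, List.map_ofFn, List.prod_ofFn]
      rfl
    · apply Subtype.ext
      exact List.ofFn_get w

lemma sum_eq {P : Set ℕ} (hP : ∀ n ∈ P, 2 ≤ n) (S : RS ↥P)
    (hl : S.l = fun n : P => Real.log (n : ℕ)) (g : ℕ → ℕ → ℝ) (N : ℕ) (hN : 1 ≤ N) :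
    ∑ n ∈ Finset.Icc 1 N, ∑' m : ℕ, (af P m n : ℝ) * g m n
      = ∑ w ∈ S.W (Real.log N), g w.length (pr w) := by
  classical
  have hmem : ∀ w, w ∈ S.W (Real.log N) ↔ pr w ≤ N := by
    intro w
    have h1 := pr_pos hP w
    rw [RS.mem_W, X_eq hP S hl, Real.log_le_log_iff (by positivity) (by positivity)]
    exact_mod_cast Iff.rfl
  have h1 : ∀ n ∈ Finset.Icc 1 N, ∑' m : ℕ, (af P m n : ℝ) * g m n
      = ∑ w ∈ (S.W (Real.log N)).filter (fun w => pr w = n), g w.length (pr w) := by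
    intro n hn
    rw [Finset.mem_Icc] at hn
    have h2 : ∀ m, (af P m n : ℝ) * g m n
        = ∑ w ∈ (S.W (Real.log N)).filter (fun w => pr w = n),
          if m = w.length then g w.length (pr w) else 0 := by
      intro m
      have h3 : af P m n = (((S.W (Real.log N)).filter (fun w => pr w = n)).filter
          (fun w => m = w.length)).card := by
        rw [af_eq, ← Nat.card_eq_finsetCard]
        refine Nat.card_congr (Equiv.subtypeEquivRight fun w => ?_)
        simp only [Finset.mem_filter, hmem]
        constructor
        · rintro ⟨rfl, rfl⟩
          exact ⟨⟨hn.2, rfl⟩, rfl⟩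
        · rintro ⟨⟨_, rfl⟩, rfl⟩
          exact ⟨rfl, rfl⟩
      rw [← Finset.sum_filter, h3, ← nsmul_eq_mul, ← Finset.sum_const]
      refine Finset.sum_congr rfl fun w hw => ?_
      simp only [Finset.mem_filter] at hw
      rw [hw.2, hw.1.2]
    simp_rw [h2]
    rw [Summable.tsum_finsetSum]
    · refine Finset.sum_congr rfl fun w _ => ?_
      rw [tsum_ite_eq]
    · intro w _
      exact (hasSum_ite_eq w.length (g w.length (pr w))).summable
  rw [Finset.sum_congr rfl h1]
  refine Finset.sum_fiberwise_of_maps_to (fun w hw => ?_) _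
  rw [Finset.mem_Icc]
  exact ⟨pr_pos hP w, (hmem w).1 hw⟩

end OddMom

theorem odd_moment_negligible
    (P : Set ℕ) (hP : ∀ n ∈ P, 2 ≤ n) (hP2 : P.Nontrivial)
    (hκ : 1 < PvalE P (kappa P))
    (ρ : ℝ) (hρ0 : 0 < ρ) (hρκ : kappa P < (ρ : EReal)) (hρ1 : Pval P ρ = 1)
    (μ : ℝ) (hμ : μ = -1 / Pderiv1 P ρ)
    (hnp : ∀ d : ℕ, 2 ≤ d → ¬ P ⊆ {n : ℕ | ∃ k : ℕ, 1 ≤ k ∧ n = d ^ k})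
    (k : ℕ) (hk : Odd k) :
    ((fun N : ℕ => ∑ n ∈ Finset.Icc 1 N, bCoef P μ k n)
      =o[atTop] fun N : ℕ => (N : ℝ) ^ ρ * (Real.log N) ^ ((k : ℝ) / 2)) ∧
    ((fun N : ℕ => (∑ n ∈ Finset.Icc 1 N, bCoef P μ k n) / Acum P N)
      =o[atTop] fun N : ℕ => (Real.log N) ^ ((k : ℝ) / 2)) := by
  obtain ⟨S, hSρ, hSμ, hSl⟩ := OddMom.exists_RS P hP hP2.nonempty ρ hρ0 hρκ hρ1 μ hμ
  have hd := OddMom.dense_log P hP hP2.nonempty hnp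
  rw [← hSl] at hd
  obtain ⟨r, hr⟩ := hk
  have hsumB : ∀ N : ℕ, 1 ≤ N → ∑ n ∈ Finset.Icc 1 N, bCoef P μ k n
      = (N : ℝ) ^ ρ * S.M S.ρ (fun t => t ^ k) (Real.log N) := by
    intro N hN
    have hN0 : (0:ℝ) < N := by positivity
    rw [Real.rpow_def_of_pos hN0, mul_comm (Real.log N) ρ]
    conv_rhs => rw [← hSρ, OddMom.RS.exp_mul_M]
    unfold bCoef
    rw [OddMom.sum_eq hP S hSl (fun m n => ((m : ℝ) - μ * Real.log n) ^ k) N hN]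
    refine Finset.sum_congr rfl fun w _ => ?_
    rw [OddMom.T_eq, OddMom.X_eq hP S hSl, hSμ]
  have hsumA : ∀ N : ℕ, 1 ≤ N → Acum P N = (N : ℝ) ^ ρ * S.Z (Real.log N) := by
    intro N hN
    have hN0 : (0:ℝ) < N := by positivity
    rw [Real.rpow_def_of_pos hN0, mul_comm (Real.log N) ρ, OddMom.RS.Z]
    conv_rhs => rw [← hSρ, OddMom.RS.exp_mul_M]
    rw [← OddMom.sum_eq hP S hSl (fun _ _ => 1) N hN]
    unfold Acum aTot
    simp
  have hlogt : Tendsto (fun N : ℕ => Real.log (N : ℝ)) atTop atTop :=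
    Real.tendsto_log_atTop.comp tendsto_natCast_atTop_atTop
  have hmain : ∀ ε > 0, ∀ᶠ N : ℕ in atTop,
      |S.M S.ρ (fun t => t ^ k) (Real.log N)| ≤ ε * Real.log N ^ ((k : ℝ) / 2) := by
    intro ε hε
    have h1 := S.odd_main hd r (ε / √2 ^ k) (by positivity)
    filter_upwards [hlogt.eventually h1, hlogt.eventually_ge_atTop 1] with N h2 h3
    rw [← hr] at h2
    refine h2.trans ?_
    have h4 : √(1 + Real.log N) ≤ √2 * √(Real.log N) := by
      rw [← Real.sqrt_mul (by norm_num)]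
      exact Real.sqrt_le_sqrt (by linarith)
    have h5 : √(Real.log N) ^ k = Real.log N ^ ((k : ℝ) / 2) := by
      rw [Real.sqrt_eq_rpow, ← Real.rpow_natCast, ← Real.rpow_mul (by linarith)]
      congr 1
      ring
    calc ε / √2 ^ k * √(1 + Real.log N) ^ k ≤ ε / √2 ^ k * (√2 * √(Real.log N)) ^ k := by gcongr
      _ = ε * √(Real.log N) ^ k := by
        rw [mul_pow]
        field_simp
      _ = _ := by rw [h5]
  constructor
  · rw [isLittleO_iff]
    intro ε hε
    filter_upwards [hmain ε hε, eventually_ge_atTop 1] with N h1 h2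
    have h3 : 0 ≤ Real.log N := Real.log_natCast_nonneg N
    rw [hsumB N h2, Real.norm_eq_abs, Real.norm_eq_abs, abs_mul, abs_mul,
      abs_of_nonneg (Real.rpow_nonneg h3 _)]
    calc _ ≤ |(N : ℝ) ^ ρ| * (ε * Real.log N ^ ((k : ℝ) / 2)) := by gcongr
      _ = _ := by ring
  · rw [isLittleO_iff]
    intro ε hε
    obtain ⟨c, hc, L0, hL⟩ := S.Z_lower
    filter_upwards [hmain (ε * c) (by positivity), eventually_ge_atTop 1,
      hlogt.eventually_ge_atTop L0] with N h1 h2 h4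
    have h3 : 0 ≤ Real.log N := Real.log_natCast_nonneg N
    have hZ := hL _ h4
    have hN0 : (0:ℝ) < N := by positivity
    have hNp : (0:ℝ) < (N : ℝ) ^ ρ := Real.rpow_pos_of_pos hN0 _
    rw [hsumB N h2, hsumA N h2, mul_div_mul_left _ _ hNp.ne', Real.norm_eq_abs, Real.norm_eq_abs,
      abs_div, abs_of_nonneg (Real.rpow_nonneg h3 _), abs_of_pos (hc.trans_le hZ),
      div_le_iff₀ (hc.trans_le hZ)]
    refine h1.trans ?_
    have h5 : 0 ≤ Real.log N ^ ((k : ℝ) / 2) := Real.rpow_nonneg h3 _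
    calc ε * c * Real.log N ^ ((k : ℝ) / 2) = ε * Real.log N ^ ((k : ℝ) / 2) * c := by ring
      _ ≤ _ := by gcongr
end
end

section
/- Under the stated assumptions including non-periodicity, for every odd integer k ≥ 1, Σ_{1≤n≤N} b_k(n) (log n)^{k/2} = o(A(N) (log N)^{k}) as N → ∞. -/
open scoped BigOperators ENNReal
open Filter Asymptotics

noncomputable section

open Topology
set_option linter.all false

lemma renewal_identity {ι : Type*} [Countable ι] (ℓ : ι → ℝ) (ℓ0 : ℝ) (hℓ0 : 0 < ℓ0) (hℓ : ∀ i, ℓ0 ≤ ℓ i)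
    (q : ι → ℝ) (hq0 : ∀ i, 0 ≤ q i) (hq1 : HasSum q 1) (lam : ℝ) (hlam : 0 < lam)
    (z : ℝ → ℝ) (hz0 : ∀ t, 0 ≤ z t) (hzneg : ∀ t < 0, z t = 0)
    (hmono : Monotone (fun t => Real.exp (lam * t) * z t))
    (hren : ∀ t ≥ 0, z t = Real.exp (-lam * t) + ∑' i, q i * z (t - ℓ i)) :
    (∀ a b, IntervalIntegrable z MeasureTheory.volume a b) ∧
    ∀ t ≥ 0, HasSum (fun i => q i * ∫ x in (t - ℓ i)..t, z x) ((1 - Real.exp (-lam * t)) / lam) := by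
  have hzeq : z = fun t => Real.exp (-lam * t) * (Real.exp (lam * t) * z t) := by
    funext t
    rw [← mul_assoc, ← Real.exp_add]; simp
  have hint : ∀ a b, IntervalIntegrable z MeasureTheory.volume a b := by
    intro a b
    rw [hzeq]
    refine (hmono.intervalIntegrable).continuousOn_mul ?_
    fun_prop
  refine ⟨hint, ?_⟩
  intro t ht
  -- local bound
  set B := Real.exp (lam * t) * z t with hB
  have hbd : ∀ x ≤ t, z x ≤ B := by
    intro x hx
    by_cases h : x < 0
    · rw [hzneg x h]; exact mul_nonneg (Real.exp_pos _).le (hz0 _)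
    · push Not at h
      have h1 := hmono hx
      simp only at h1
      have h2 : (1:ℝ) ≤ Real.exp (lam * x) := Real.one_le_exp (by positivity)
      nlinarith [hz0 x]
  have hsq : Summable (fun i => q i * B) := hq1.summable.mul_right B
  have hlpos : ∀ i, 0 < ℓ i := fun i => lt_of_lt_of_le hℓ0 (hℓ i)
  have h1 : HasSum (fun i => ∫ x in (0:ℝ)..t, q i * z (x - ℓ i))
      (∫ x in (0:ℝ)..t, ∑' i, q i * z (x - ℓ i)) := by
    refine intervalIntegral.hasSum_integral_of_dominated_convergence (fun i _ => q i * B) ?_ ?_ ?_ ?_ ?_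
    · intro i
      have : IntervalIntegrable (fun x => q i * z (x - ℓ i)) MeasureTheory.volume 0 t :=
        ((hint (0 - ℓ i) (t - ℓ i)).comp_sub_right (ℓ i) |>.const_mul (q i)) |> fun h => by simpa using h
      rw [Set.uIoc_of_le ht]
      exact this.1.aestronglyMeasurable
    · intro i
      refine Eventually.of_forall fun x hx => ?_
      rw [Set.uIoc_of_le ht] at hx
      rw [Real.norm_of_nonneg (mul_nonneg (hq0 i) (hz0 _))]
      exact mul_le_mul_of_nonneg_left (hbd _ (by linarith [hx.2, hlpos i])) (hq0 i)
    · exact Eventually.of_forall fun x hx => hsq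
    · exact intervalIntegrable_const
    · refine Eventually.of_forall fun x hx => ?_
      rw [Set.uIoc_of_le ht] at hx
      refine Summable.hasSum (Summable.of_nonneg_of_le (fun i => mul_nonneg (hq0 i) (hz0 _)) (fun i => ?_) hsq)
      exact mul_le_mul_of_nonneg_left (hbd _ (by linarith [hx.2, hlpos i])) (hq0 i)
  have h2 : (∫ x in (0:ℝ)..t, ∑' i, q i * z (x - ℓ i)) = (∫ x in (0:ℝ)..t, z x) - (1 - Real.exp (-lam * t)) / lam := by
    have h3 : (∫ x in (0:ℝ)..t, ∑' i, q i * z (x - ℓ i)) = ∫ x in (0:ℝ)..t, (z x - Real.exp (-lam * x)) := by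
      refine intervalIntegral.integral_congr fun x hx => ?_
      rw [Set.uIcc_of_le ht] at hx
      have := hren x hx.1
      linarith
    have h4 : ∫ x in (0:ℝ)..t, Real.exp (-lam * x) = (1 - Real.exp (-lam * t)) / lam := by
      rw [intervalIntegral.integral_comp_mul_left (fun x => Real.exp x) (neg_ne_zero.mpr hlam.ne') , integral_exp]
      simp only [mul_zero, Real.exp_zero, smul_eq_mul]
      field_simp
      ring
    rw [h3, intervalIntegral.integral_sub (hint _ _) (by apply Continuous.intervalIntegrable; fun_prop), h4]
  have h5 : ∀ i, (q i * ∫ x in (t - ℓ i)..t, z x) = q i * (∫ x in (0:ℝ)..t, z x) - ∫ x in (0:ℝ)..t, q i * z (x - ℓ i) := by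
    intro i
    rw [intervalIntegral.integral_const_mul, intervalIntegral.integral_comp_sub_right]
    have h6 : ∫ x in (0 - ℓ i)..0, z x = 0 := by
      rw [intervalIntegral.integral_of_le (by linarith [hlpos i]), MeasureTheory.integral_Ioc_eq_integral_Ioo]
      exact MeasureTheory.setIntegral_eq_zero_of_forall_eq_zero fun x hx => hzneg x hx.2
    have h7 := intervalIntegral.integral_add_adjacent_intervals (hint (0 - ℓ i) 0) (hint 0 (t - ℓ i))
    have h8 := intervalIntegral.integral_add_adjacent_intervals (hint 0 (t - ℓ i)) (hint (t - ℓ i) t)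
    rw [← h7, h6, ← h8]; ring
  simp_rw [h5]
  have h9 := (hq1.mul_right (∫ x in (0:ℝ)..t, z x)).sub h1
  rw [h2] at h9
  simpa using h9

lemma ultra_lim {X : Type*} (U : Ultrafilter X) (f : X → ℝ) (K : ℝ)
    (h : ∀ᶠ x in (U : Filter X), 0 ≤ f x ∧ f x ≤ K) : ∃ y, Tendsto f U (𝓝 y) ∧ 0 ≤ y ∧ y ≤ K := by
  obtain ⟨y, hy, hy2⟩ := (isCompact_Icc (a := (0:ℝ)) (b := K)).ultrafilter_le_nhds (U.map f) (by
    rw [le_principal_iff]; exact h)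
  exact ⟨y, hy2, hy.1, hy.2⟩

theorem renewal_limit {ι : Type*} [Countable ι] (ℓ : ι → ℝ) (ℓ0 : ℝ) (hℓ0 : 0 < ℓ0) (hℓ : ∀ i, ℓ0 ≤ ℓ i)
    (hdense : ∀ δ > 0, ∃ a, ∀ y ≥ a, ∃ s ∈ AddSubmonoid.closure (Set.range ℓ), y ≤ s ∧ s ≤ y + δ)
    (q : ℝ → ι → ℝ) (q0 Q : ι → ℝ) (hq0 : ∀ i, 0 < q0 i)
    (hq : ∀ i, Tendsto (fun θ => q θ i) (𝓝 0) (𝓝 (q0 i)))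
    (hQ : ∀ᶠ θ in 𝓝 (0:ℝ), ∀ i, 0 ≤ q θ i ∧ q θ i ≤ Q i)
    (hsum : Summable (fun i => Q i * ℓ i))
    (hq1 : ∀ᶠ θ in 𝓝 (0:ℝ), HasSum (q θ) 1)
    (lam : ℝ → ℝ) (ρ : ℝ) (hρ : 0 < ρ) (hlam : Tendsto lam (𝓝 0) (𝓝 ρ))
    (z : ℝ → ℝ → ℝ) (hz0 : ∀ θ t, 0 ≤ z θ t) (hzneg : ∀ θ, ∀ t < 0, z θ t = 0)
    (hmono : ∀ θ, Monotone (fun t => Real.exp (lam θ * t) * z θ t))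
    (hren : ∀ᶠ θ in 𝓝 (0:ℝ), ∀ t ≥ 0, z θ t = Real.exp (-lam θ * t) + ∑' i, q θ i * z θ (t - ℓ i)) :
    Tendsto (fun x : ℝ × ℝ => z x.1 x.2) (𝓝 0 ×ˢ atTop) (𝓝 (1 / (ρ * ∑' i, q0 i * ℓ i))) := by
  have hlpos : ∀ i, 0 < ℓ i := fun i => lt_of_lt_of_le hℓ0 (hℓ i)
  have hl1 : ∀ᶠ θ in 𝓝 (0:ℝ), ρ / 2 < lam θ ∧ lam θ < 2 * ρ :=
    (hlam.eventually (lt_mem_nhds (by linarith))).and (hlam.eventually (gt_mem_nhds (by linarith)))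
  have hQ0 : ∀ i, 0 ≤ Q i := by
    obtain ⟨θ, h⟩ := hQ.exists
    exact fun i => (h i).1.trans (h i).2
  have hQs : Summable Q := by
    refine Summable.of_nonneg_of_le hQ0 (fun i => ?_) (hsum.mul_left (ℓ0⁻¹))
    rw [← div_eq_inv_mul, le_div_iff₀ hℓ0]
    exact mul_le_mul_of_nonneg_left (hℓ i) (hQ0 i)
  have hq0sum : Summable q0 ∧ ∑' i, q0 i = 1 := by
    have hle : ∀ i, q0 i ≤ Q i := fun i => le_of_tendsto (hq i) (hQ.mono fun θ h => (h i).2)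
    refine ⟨Summable.of_nonneg_of_le (fun i => (hq0 i).le) hle hQs, ?_⟩
    have h1 := tendsto_tsum_of_dominated_convergence hQs hq (hQ.mono fun θ h i => by
      rw [Real.norm_of_nonneg (h i).1]; exact (h i).2)
    refine tendsto_nhds_unique h1 (tendsto_const_nhds.congr' ?_)
    filter_upwards [hq1] with θ h using h.tsum_eq.symm
  have hid : ∀ᶠ θ in 𝓝 (0:ℝ), (∀ a b, IntervalIntegrable (z θ) MeasureTheory.volume a b) ∧
    ∀ t ≥ 0, HasSum (fun i => q θ i * ∫ x in (t - ℓ i)..t, z θ x) ((1 - Real.exp (-lam θ * t)) / lam θ) := by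
    filter_upwards [hl1, hQ, hq1, hren] with θ h1 h2 h3 h4
    exact renewal_identity ℓ ℓ0 hℓ0 hℓ (q θ) (fun i => (h2 i).1) h3 (lam θ) (by linarith) (z θ)
      (hz0 θ) (hzneg θ) (hmono θ) h4
  -- regularity
  have hreg : ∀ θ x y, x ≤ y → z θ x ≤ Real.exp (lam θ * (y - x)) * z θ y := by
    intro θ x y hxy
    have h1 := hmono θ hxy
    simp only at h1
    have h2 : Real.exp (lam θ * (y - x)) = Real.exp (lam θ * y) * Real.exp (- (lam θ * x)) := by
      rw [← Real.exp_add]; ring_nf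
    have h3 : Real.exp (lam θ * x) * Real.exp (- (lam θ * x)) = 1 := by
      rw [← Real.exp_add]; simp
    have h4 := mul_le_mul_of_nonneg_right h1 (Real.exp_pos (- (lam θ * x))).le
    rw [h2]
    calc z θ x = Real.exp (lam θ * x) * Real.exp (- (lam θ * x)) * z θ x := by rw [h3, one_mul]
      _ = Real.exp (lam θ * x) * z θ x * Real.exp (- (lam θ * x)) := by ring
      _ ≤ _ := h4
      _ = _ := by ring
  obtain ⟨K, hK0, hK⟩ : ∃ K > 0, ∀ᶠ θ in 𝓝 (0:ℝ), ∀ t, z θ t ≤ K := by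
    refine ⟨Real.exp (2 * ρ * ℓ0) * (2 / ρ) / ℓ0, by positivity, ?_⟩
    filter_upwards [hl1, hQ, hq1, hid] with θ h1 h2 h3 h4 t
    by_cases ht : t < 0
    · rw [hzneg θ t ht]; positivity
    push Not at ht
    have h5 := h4.2 (t + ℓ0) (by linarith)
    have h6 : ∀ i, q θ i * (∫ x in t..(t + ℓ0), z θ x) ≤ q θ i * ∫ x in (t + ℓ0 - ℓ i)..(t + ℓ0), z θ x := by
      intro i
      refine mul_le_mul_of_nonneg_left ?_ (h2 i).1
      refine intervalIntegral.integral_mono_interval (by linarith [hℓ i]) (by linarith) le_rfl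
        (Eventually.of_forall fun x => hz0 θ x) (h4.1 _ _)
    have h7 := hasSum_le h6 (h3.mul_right _) h5
    have h8 : ℓ0 * (Real.exp (-(2 * ρ * ℓ0)) * z θ t) ≤ ∫ x in t..(t + ℓ0), z θ x := by
      have : ∫ x in t..(t + ℓ0), (Real.exp (-(2 * ρ * ℓ0)) * z θ t) ≤ ∫ x in t..(t + ℓ0), z θ x := by
        refine intervalIntegral.integral_mono_on (by linarith) intervalIntegrable_const (h4.1 _ _) ?_
        intro x hx
        have h9 := hreg θ t x hx.1
        have h10 : Real.exp (lam θ * (x - t)) ≤ Real.exp (2 * ρ * ℓ0) := by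
          apply Real.exp_le_exp.mpr
          have : x - t ≤ ℓ0 := by linarith [hx.2]
          have h0 : 0 ≤ x - t := by linarith [hx.1]
          nlinarith
        rw [Real.exp_neg, inv_mul_le_iff₀ (Real.exp_pos _)]
        exact h9.trans (mul_le_mul_of_nonneg_right h10 (hz0 θ x))
      rw [intervalIntegral.integral_const, smul_eq_mul, add_sub_cancel_left] at this
      exact this
    have h11 : (1 - Real.exp (-lam θ * (t + ℓ0))) / lam θ ≤ 2 / ρ := by
      rw [div_le_div_iff₀ (by linarith) hρ]
      nlinarith [Real.exp_pos (-lam θ * (t + ℓ0))]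
    rw [le_div_iff₀ hℓ0]
    have h12 : ℓ0 * (Real.exp (-(2 * ρ * ℓ0)) * z θ t) ≤ 2 / ρ := by linarith
    have h13 : Real.exp (2 * ρ * ℓ0) * Real.exp (-(2 * ρ * ℓ0)) = 1 := by rw [← Real.exp_add]; simp
    have h14 := mul_le_mul_of_nonneg_left h12 (Real.exp_pos (2 * ρ * ℓ0)).le
    calc z θ t * ℓ0 = (Real.exp (2 * ρ * ℓ0) * Real.exp (-(2 * ρ * ℓ0))) * (z θ t * ℓ0) := by rw [h13, one_mul]
      _ = Real.exp (2 * ρ * ℓ0) * (ℓ0 * (Real.exp (-(2 * ρ * ℓ0)) * z θ t)) := by ring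
      _ ≤ _ := h14
  set FF : Filter (ℝ × ℝ) := 𝓝 0 ×ˢ atTop with hFF
  have hfst : Tendsto (fun x : ℝ × ℝ => x.1) FF (𝓝 0) := tendsto_fst
  have hsnd : Tendsto (fun x : ℝ × ℝ => x.2) FF atTop := tendsto_snd
  have core : ∀ (sg M : ℝ), sg ≠ 0 → MapClusterPt M FF (fun x : ℝ × ℝ => z x.1 x.2) →
      (∀ x, MapClusterPt x FF (fun x : ℝ × ℝ => z x.1 x.2) → 0 ≤ sg * (M - x)) →
      M = 1 / (ρ * ∑' i, q0 i * ℓ i) := by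
    intro sg M hsg hM hext
    obtain ⟨U, hU, hUM⟩ := mapClusterPt_iff_ultrafilter.mp hM
    have hUf := hfst.mono_left hU
    have hUs := hsnd.mono_left hU
    have hUlam : Tendsto (fun x : ℝ × ℝ => lam x.1) U (𝓝 ρ) := hlam.comp hUf
    have hex : ∀ s : ℝ, ∃ y, Tendsto (fun x : ℝ × ℝ => z x.1 (x.2 - s)) U (𝓝 y) ∧ 0 ≤ y ∧ y ≤ K := by
      intro s
      refine ultra_lim U _ K ?_
      filter_upwards [hUf.eventually hK] with x hx using ⟨hz0 _ _, hx _⟩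
    choose Z hZ hZ0 hZK using hex
    have hZ00 : Z 0 = M := tendsto_nhds_unique (by simpa using hZ 0) hUM
    have hshift : ∀ s : ℝ, Tendsto (fun x : ℝ × ℝ => x.2 - s) U atTop := fun s =>
      tendsto_atTop_add_const_right _ (-s) hUs
    have hZext : ∀ s, 0 ≤ sg * (M - Z s) := by
      intro s
      apply hext
      refine mapClusterPt_iff_ultrafilter.mpr ⟨U.map (fun x => (x.1, x.2 - s)), ?_, ?_⟩
      · exact Tendsto.prodMk hUf (hshift s)
      · exact tendsto_map'_iff.mpr (hZ s)
    have hexp : ∀ s : ℝ, Tendsto (fun x : ℝ × ℝ => Real.exp (-lam x.1 * (x.2 - s))) U (𝓝 0) := by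
      intro s
      refine Real.tendsto_exp_atBot.comp ?_
      have h := Tendsto.pos_mul_atTop hρ hUlam (hshift s)
      have := tendsto_neg_atTop_atBot.comp h
      refine this.congr fun x => ?_
      simp
    have hharm : ∀ s, Z s = ∑' i, q0 i * Z (s + ℓ i) := by
      intro s
      have h1 : Tendsto (fun x : ℝ × ℝ => ∑' i, q x.1 i * z x.1 (x.2 - s - ℓ i)) U
          (𝓝 (∑' i, q0 i * Z (s + ℓ i))) := by
        refine tendsto_tsum_of_dominated_convergence (hQs.mul_right K) ?_ ?_
        · intro i
          refine ((hq i).comp hUf).mul ?_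
          refine (hZ (s + ℓ i)).congr fun x => ?_
          rw [sub_sub]
        · filter_upwards [hUf.eventually hK, hUf.eventually hQ] with x h1 h2 i
          rw [Real.norm_of_nonneg (mul_nonneg (h2 i).1 (hz0 _ _))]
          exact mul_le_mul (h2 i).2 (h1 _) (hz0 _ _) (hQ0 i)
      have h2 := (hexp s).add h1
      rw [zero_add] at h2
      refine tendsto_nhds_unique (hZ s) (h2.congr' ?_)
      filter_upwards [hUf.eventually hren, (hshift s).eventually_ge_atTop 0] with x h3 h4
      exact (h3 _ h4).symm
    have hstep : ∀ s, Z s = M → ∀ i, Z (s + ℓ i) = M := by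
      intro s hs i
      have hsm : Summable (fun i => q0 i * Z (s + ℓ i)) := by
        refine Summable.of_nonneg_of_le (fun i => mul_nonneg (hq0 i).le (hZ0 _)) (fun i => ?_) (hq0sum.1.mul_right K)
        exact mul_le_mul_of_nonneg_left (hZK _) (hq0 i).le
      have h1 : HasSum (fun i => q0 i * (sg * (M - Z (s + ℓ i)))) 0 := by
        have h2 := ((hq0sum.1.hasSum.mul_right M).sub hsm.hasSum).mul_left sg
        rw [hq0sum.2, ← hharm s, hs, one_mul, sub_self, mul_zero] at h2
        have he : (fun i => q0 i * (sg * (M - Z (s + ℓ i)))) = fun i => sg * (q0 i * M - q0 i * Z (s + ℓ i)) := by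
          funext i; ring
        rw [he]; exact h2
      have h3 := (hasSum_zero_iff_of_nonneg (fun i => mul_nonneg (hq0 i).le (hZext _))).mp h1
      have h4 := congrFun h3 i
      simp only [Pi.zero_apply, mul_eq_zero, hsg, (hq0 i).ne', false_or] at h4
      linarith
    have hLam : ∀ s ∈ AddSubmonoid.closure (Set.range ℓ), Z s = M := by
      intro s hs
      induction hs using AddSubmonoid.closure_induction_left with
      | zero => exact hZ00
      | add_left x hx y hy ih =>
        obtain ⟨i, rfl⟩ := hx
        rw [add_comm]
        exact hstep y ih i
    have hunif : ∀ ε > 0, ∃ a0, ∀ a ≥ a0, ∀ b, ∀ᶠ x in (U : Filter (ℝ × ℝ)), ∀ y ∈ Set.Icc a b, |z x.1 (x.2 - y) - M| ≤ ε := by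
      intro ε hε
      set δ := Real.log (1 + ε / (2 * K)) / (8 * ρ) with hδ
      have hlogpos : 0 < Real.log (1 + ε / (2 * K)) := Real.log_pos (by
        have : 0 < ε / (2 * K) := by positivity
        linarith)
      have hδ0 : 0 < δ := by positivity
      have hc : Real.exp (8 * ρ * δ) = 1 + ε / (2 * K) := by
        rw [hδ, mul_div_cancel₀ _ (by positivity), Real.exp_log (by positivity)]
      obtain ⟨a0, ha0⟩ := hdense δ hδ0
      refine ⟨a0 + 2 * δ, fun a ha b => ?_⟩
      refine (isCompact_Icc (a := a) (b := b)).induction_on (p := fun S => ∀ᶠ x in (U : Filter (ℝ × ℝ)), ∀ y ∈ S, |z x.1 (x.2 - y) - M| ≤ ε) ?_ ?_ ?_ ?_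
      · simp
      · intro s t hst h
        filter_upwards [h] with x hx y hy using hx y (hst hy)
      · intro s t h1 h2
        filter_upwards [h1, h2] with x hx1 hx2 y hy
        exact hy.elim (hx1 y) (hx2 y)
      · intro y0 hy0
        refine ⟨Set.Ioo (y0 - δ) (y0 + δ), mem_nhdsWithin_of_mem_nhds (Ioo_mem_nhds (by linarith) (by linarith)), ?_⟩
        obtain ⟨s1, hs1, h11, h12⟩ := ha0 (y0 - 2 * δ) (by linarith [hy0.1])
        obtain ⟨s2, hs2, h21, h22⟩ := ha0 (y0 + δ) (by linarith [hy0.1])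
        have e1 : ∀ᶠ x in (U : Filter (ℝ × ℝ)), |z x.1 (x.2 - s1) - M| < ε / 2 := by
          have := hZ s1
          rw [hLam s1 hs1] at this
          exact (Metric.tendsto_nhds.mp this) (ε / 2) (by linarith)
        have e2 : ∀ᶠ x in (U : Filter (ℝ × ℝ)), |z x.1 (x.2 - s2) - M| < ε / 2 := by
          have := hZ s2
          rw [hLam s2 hs2] at this
          exact (Metric.tendsto_nhds.mp this) (ε / 2) (by linarith)
        filter_upwards [e1, e2, hUf.eventually hl1, hUf.eventually hK] with x h1 h2 h3 h4 y hy
        have hcK : ε / (2 * K) * K = ε / 2 := by field_simp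
        have hexpb : ∀ d, 0 ≤ d → d ≤ 4 * δ → Real.exp (lam x.1 * d) ≤ 1 + ε / (2 * K) := by
          intro d hd0 hd
          rw [← hc]
          apply Real.exp_le_exp.mpr
          nlinarith
        have r1 := hreg x.1 (x.2 - y) (x.2 - s1) (by linarith [hy.1])
        have r2 := hreg x.1 (x.2 - s2) (x.2 - y) (by linarith [hy.2])
        have r3 := mul_le_mul_of_nonneg_right (hexpb (x.2 - s1 - (x.2 - y)) (by linarith [hy.1]) (by linarith [hy.2])) (hz0 x.1 (x.2 - s1))
        have r4 := mul_le_mul_of_nonneg_right (hexpb (x.2 - y - (x.2 - s2)) (by linarith [hy.2]) (by linarith [hy.1])) (hz0 x.1 (x.2 - y))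
        have k1 : ε / (2 * K) * z x.1 (x.2 - s1) ≤ ε / 2 := by
          rw [← hcK]; exact mul_le_mul_of_nonneg_left (h4 _) (by positivity)
        have k2 : ε / (2 * K) * z x.1 (x.2 - y) ≤ ε / 2 := by
          rw [← hcK]; exact mul_le_mul_of_nonneg_left (h4 _) (by positivity)
        rw [abs_lt] at h1 h2
        rw [abs_le]
        constructor <;> nlinarith
    -- the integrals
    have hexI : ∀ (a : ℝ) (i : ι), ∃ y, Tendsto (fun x : ℝ × ℝ => ∫ u in (x.2 - a - ℓ i)..(x.2 - a), z x.1 u) U (𝓝 y) ∧ 0 ≤ y ∧ y ≤ K * ℓ i := by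
      intro a i
      refine ultra_lim U _ _ ?_
      filter_upwards [hUf.eventually hK, hUf.eventually hid] with x h1 h2
      refine ⟨intervalIntegral.integral_nonneg (by linarith [hlpos i]) fun u _ => hz0 _ _, ?_⟩
      have h3 := intervalIntegral.integral_mono_on (a := x.2 - a - ℓ i) (b := x.2 - a) (by linarith [hlpos i]) (h2.1 _ _)
        (intervalIntegrable_const (c := K)) (fun u _ => h1 u)
      refine h3.trans (le_of_eq ?_)
      rw [intervalIntegral.integral_const, smul_eq_mul]; ring
    choose I hI hI0 hIK using hexI
    have hsumI : ∀ a, ∑' i, q0 i * I a i = 1 / ρ := by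
      intro a
      have h1 : Tendsto (fun x : ℝ × ℝ => ∑' i, q x.1 i * ∫ u in (x.2 - a - ℓ i)..(x.2 - a), z x.1 u) U
          (𝓝 (∑' i, q0 i * I a i)) := by
        refine tendsto_tsum_of_dominated_convergence (hsum.mul_right K) ?_ ?_
        · intro i
          exact ((hq i).comp hUf).mul (hI a i)
        · filter_upwards [hUf.eventually hK, hUf.eventually hQ, hUf.eventually hid] with x h1 h2 h3 i
          have h5 : 0 ≤ ∫ u in (x.2 - a - ℓ i)..(x.2 - a), z x.1 u :=
            intervalIntegral.integral_nonneg (by linarith [hlpos i]) fun u _ => hz0 _ _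
          have h6 : ∫ u in (x.2 - a - ℓ i)..(x.2 - a), z x.1 u ≤ ℓ i * K := by
            have h3 := intervalIntegral.integral_mono_on (a := x.2 - a - ℓ i) (b := x.2 - a) (by linarith [hlpos i]) (h3.1 _ _)
              (intervalIntegrable_const (c := K)) (fun u _ => h1 u)
            refine h3.trans (le_of_eq ?_)
            rw [intervalIntegral.integral_const, smul_eq_mul]; ring
          rw [Real.norm_of_nonneg (mul_nonneg (h2 i).1 h5), mul_assoc]
          exact mul_le_mul (h2 i).2 h6 h5 (hQ0 i)
      have h2 : Tendsto (fun x : ℝ × ℝ => (1 - Real.exp (-lam x.1 * (x.2 - a))) / lam x.1) U (𝓝 ((1 - 0) / ρ)) :=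
        (tendsto_const_nhds.sub (hexp a)).div hUlam hρ.ne'
      rw [sub_zero] at h2
      refine tendsto_nhds_unique h1 (h2.congr' ?_)
      filter_upwards [hUf.eventually hid, (hshift a).eventually_ge_atTop 0] with x h3 h4
      exact (h3.2 _ h4).tsum_eq.symm
    have hIlim : ∀ i, Tendsto (fun a => I a i) atTop (𝓝 (M * ℓ i)) := by
      intro i
      rw [Metric.tendsto_atTop]
      intro ε hε
      obtain ⟨a0, ha0⟩ := hunif (ε / (2 * ℓ i)) (by have := hlpos i; positivity)
      refine ⟨a0, fun a ha => ?_⟩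
      have h1 := ha0 a ha (a + ℓ i)
      have h2 : |I a i - M * ℓ i| ≤ ε / 2 := by
        refine le_of_tendsto ((hI a i).sub_const (M * ℓ i)).abs ?_
        filter_upwards [h1, hUf.eventually hid] with x h3 h4
        have h5 : (∫ u in (x.2 - a - ℓ i)..(x.2 - a), z x.1 u) - M * ℓ i = ∫ u in (x.2 - a - ℓ i)..(x.2 - a), (z x.1 u - M) := by
          rw [intervalIntegral.integral_sub (h4.1 _ _) intervalIntegrable_const, intervalIntegral.integral_const, smul_eq_mul]
          ring
        rw [h5, ← Real.norm_eq_abs]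
        have h6 := intervalIntegral.norm_integral_le_of_norm_le_const (a := x.2 - a - ℓ i) (b := x.2 - a)
          (f := fun u => z x.1 u - M) (C := ε / (2 * ℓ i)) (by
            intro u hu
            rw [Set.uIoc_of_le (by linarith [hlpos i])] at hu
            have := h3 (x.2 - u) ⟨by linarith [hu.2], by linarith [hu.1]⟩
            rwa [sub_sub_cancel] at this)
        refine h6.trans (le_of_eq ?_)
        have : x.2 - a - (x.2 - a - ℓ i) = ℓ i := by ring
        rw [this, abs_of_pos (hlpos i)]
        have := (hlpos i).ne'
        field_simp
      rw [Real.dist_eq]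
      linarith
    have hfin : Tendsto (fun a => ∑' i, q0 i * I a i) atTop (𝓝 (∑' i, q0 i * (M * ℓ i))) := by
      refine tendsto_tsum_of_dominated_convergence (hsum.mul_right K) (fun i => (hIlim i).const_mul _) (Eventually.of_forall fun a i => ?_)
      have hle : q0 i ≤ Q i := le_of_tendsto (hq i) (hQ.mono fun θ h => (h i).2)
      rw [Real.norm_of_nonneg (mul_nonneg (hq0 i).le (hI0 _ _)), mul_assoc, mul_comm (ℓ i)]
      exact mul_le_mul hle (hIK a i) (hI0 _ _) (hQ0 i)
    simp_rw [hsumI] at hfin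
    have h1 := tendsto_nhds_unique hfin tendsto_const_nhds
    have h2 : ∑' i, q0 i * (M * ℓ i) = M * ∑' i, q0 i * ℓ i := by
      rw [← tsum_mul_left]; congr 1; funext i; ring
    rw [h2] at h1
    have h3 : (∑' i, q0 i * ℓ i) ≠ 0 := by
      intro h; rw [h, mul_zero] at h1; have : 0 < 1 / ρ := by positivity
      linarith
    field_simp
    field_simp at h1
    linarith
  -- conclusion
  have hmem : ∀ᶠ x in FF, z x.1 x.2 ∈ Set.Icc 0 K := by
    filter_upwards [hfst.eventually hK] with x hx using ⟨hz0 _ _, hx _⟩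
  haveI : FF.NeBot := by rw [hFF]; infer_instance
  set S := {x | MapClusterPt x FF (fun x : ℝ × ℝ => z x.1 x.2)} with hS
  have hSsub : S ⊆ Set.Icc 0 K := by
    intro y hy
    obtain ⟨U, hU, hUM⟩ := mapClusterPt_iff_ultrafilter.mp hy
    exact isClosed_Icc.mem_of_tendsto hUM (hU hmem)
  have hScomp : IsCompact S := isCompact_Icc.of_isClosed_subset isClosed_setOfPred_clusterPt hSsub
  have hSne : S.Nonempty := by
    obtain ⟨y, -, hy⟩ := (isCompact_Icc (a := (0:ℝ)) (b := K)).exists_mapClusterPt (f := FF) (u := fun x : ℝ × ℝ => z x.1 x.2) (by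
      rw [le_principal_iff]; exact hmem)
    exact ⟨y, hy⟩
  obtain ⟨M, hM1, hM2⟩ := hScomp.exists_isGreatest hSne
  obtain ⟨m, hm1, hm2⟩ := hScomp.exists_isLeast hSne
  have hMC := core 1 M one_ne_zero hM1 (fun x hx => by have := hM2 hx; linarith)
  have hmC := core (-1) m (by norm_num) hm1 (fun x hx => by have := hm2 hx; linarith)
  refine isCompact_Icc.tendsto_nhds_of_unique_mapClusterPt hmem fun y _ hy => ?_
  have h1 := hM2 hy
  have h2 := hm2 hy
  linarith

lemma log_dense (P : Set ℕ) (hP : ∀ n ∈ P, 2 ≤ n) (hP2 : P.Nontrivial)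
    (hnp : ∀ d : ℕ, 2 ≤ d → ¬ P ⊆ {n : ℕ | ∃ k : ℕ, 1 ≤ k ∧ n = d ^ k}) :
    ∀ δ > 0, ∃ a : ℝ, ∀ y ≥ a, ∃ s ∈ AddSubmonoid.closure (Set.range (fun p : P => Real.log ((p : ℕ) : ℝ))),
      y ≤ s ∧ s ≤ y + δ := by
  intro δ hδ
  set R := Set.range (fun p : P => Real.log ((p : ℕ) : ℝ)) with hR
  set H := AddSubgroup.closure R with hH
  have hratl : ∀ h ∈ H, ∃ r : ℚ, 0 < r ∧ Real.exp h = r := by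
    intro h hh
    induction hh using AddSubgroup.closure_induction with
    | mem x hx =>
      obtain ⟨p, rfl⟩ := hx
      have := hP p p.2
      refine ⟨(p : ℕ), by exact_mod_cast (by omega : 0 < (p : ℕ)), ?_⟩
      simp only
      rw [Real.exp_log (by exact_mod_cast (by omega : 0 < (p : ℕ)))]
      simp
    | zero => exact ⟨1, by norm_num, by simp⟩
    | add x y hx hy ihx ihy =>
      obtain ⟨r, hr, e⟩ := ihx
      obtain ⟨r', hr', e'⟩ := ihy
      exact ⟨r * r', by positivity, by rw [Real.exp_add, e, e']; push_cast; rfl⟩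
    | neg x hx ihx =>
      obtain ⟨r, hr, e⟩ := ihx
      exact ⟨r⁻¹, by positivity, by rw [Real.exp_neg, e]; push_cast; rfl⟩
  have hlogpos : ∀ p : P, 0 < Real.log ((p : ℕ) : ℝ) := fun p =>
    Real.log_pos (by exact_mod_cast (by have := hP p p.2; omega : 1 < (p : ℕ)))
  have hdense : Dense (H : Set ℝ) := by
    rcases AddSubgroup.dense_or_cyclic H with h | ⟨g0, hg0⟩
    · exact h
    exfalso
    have key : ∀ g : ℝ, 0 < g → g ∈ H → (∀ h ∈ H, ∃ n : ℤ, h = n * g) → False := by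
      intro g hg hgH hgen
      obtain ⟨r, hr, hre⟩ := hratl g hgH
      have hpw : ∀ p ∈ P, ∃ k : ℕ, 1 ≤ k ∧ (p : ℚ) = r ^ k := by
        intro p hp
        obtain ⟨n, hn⟩ := hgen (Real.log p) (AddSubgroup.subset_closure ⟨⟨p, hp⟩, rfl⟩)
        have hlp := hlogpos ⟨p, hp⟩
        simp only at hlp
        have hn0 : 0 < n := by
          rw [hn] at hlp
          have := pos_of_mul_pos_left hlp hg.le
          exact_mod_cast this
        obtain ⟨k, rfl⟩ := Int.eq_ofNat_of_zero_le hn0.le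
        refine ⟨k, by omega, ?_⟩
        have h1 : (p : ℝ) = (r : ℝ) ^ k := by
          rw [← hre, ← Real.exp_nat_mul]
          push_cast at hn
          rw [← hn, Real.exp_log]
          have := hP p hp
          exact_mod_cast (by omega : 0 < p)
        exact_mod_cast h1
      obtain ⟨p, hp⟩ := hP2.nonempty
      obtain ⟨k, hk, e⟩ := hpw p hp
      have hint : r.den = 1 := by
        have h1 : (r ^ k).den = 1 := by rw [← e]; simp
        rw [Rat.den_pow] at h1
        exact (Nat.pow_eq_one.mp h1).resolve_right (by omega)
      obtain ⟨d, hd⟩ : ∃ d : ℕ, (d : ℚ) = r := by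
        refine ⟨r.num.toNat, ?_⟩
        have h1 : ((r.num.toNat : ℤ)) = r.num := Int.toNat_of_nonneg (Rat.num_pos.mpr hr).le
        have h2 : ((r.num.toNat : ℤ) : ℚ) = r := by rw [h1]; exact Rat.coe_int_num_of_den_eq_one hint
        exact_mod_cast h2
      have hd2 : 2 ≤ d := by
        have h1 : (1 : ℝ) < r := by rw [← hre]; exact Real.one_lt_exp_iff.mpr hg
        rw [← hd] at h1
        have : 1 < d := by exact_mod_cast h1
        omega
      refine hnp d hd2 fun n hn => ?_
      obtain ⟨k, hk, e⟩ := hpw n hn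
      refine ⟨k, hk, ?_⟩
      rw [← hd] at e
      exact_mod_cast e
    have hgen : ∀ h ∈ H, ∃ n : ℤ, h = n * g0 := by
      intro h hh
      rw [hg0, AddSubgroup.mem_closure_singleton] at hh
      obtain ⟨n, hn⟩ := hh
      exact ⟨n, by rw [← hn]; simp⟩
    have hg0H : g0 ∈ H := by rw [hg0]; exact AddSubgroup.subset_closure rfl
    rcases lt_trichotomy g0 0 with h | h | h
    · refine key (-g0) (by linarith) (H.neg_mem hg0H) fun x hx => ?_
      obtain ⟨n, hn⟩ := hgen x hx
      exact ⟨-n, by rw [hn]; push_cast; ring⟩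
    · obtain ⟨p, hp⟩ := hP2.nonempty
      obtain ⟨n, hn⟩ := hgen (Real.log p) (AddSubgroup.subset_closure ⟨⟨p, hp⟩, rfl⟩)
      have := hlogpos ⟨p, hp⟩
      simp only at this
      rw [hn, h, mul_zero] at this
      exact lt_irrefl _ this
    · exact key g0 h hg0H hgen
  set Λ := AddSubmonoid.closure R with hΛ
  have hdiff : ∀ h ∈ H, ∃ s1 ∈ Λ, ∃ s2 ∈ Λ, h = s1 - s2 := by
    intro h hh
    induction hh using AddSubgroup.closure_induction with
    | mem x hx => exact ⟨x, AddSubmonoid.subset_closure hx, 0, zero_mem _, by simp⟩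
    | zero => exact ⟨0, zero_mem _, 0, zero_mem _, by simp⟩
    | add x y hx hy ihx ihy =>
      obtain ⟨a, ha, b, hb, e⟩ := ihx
      obtain ⟨a', ha', b', hb', e'⟩ := ihy
      exact ⟨a + a', add_mem ha ha', b + b', add_mem hb hb', by rw [e, e']; ring⟩
    | neg x hx ihx =>
      obtain ⟨a, ha, b, hb, e⟩ := ihx
      exact ⟨b, hb, a, ha, by rw [e]; ring⟩
  have hΛ0 : ∀ s ∈ Λ, 0 ≤ s := by
    intro s hs
    induction hs using AddSubmonoid.closure_induction with
    | mem x hx => obtain ⟨p, rfl⟩ := hx; exact (hlogpos p).le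
    | zero => exact le_rfl
    | add x y hx hy ihx ihy => linarith
  obtain ⟨h, hh, hpos, hlt⟩ : ∃ h ∈ H, 0 < h ∧ h < δ := by
    obtain ⟨x, hx1, hx2⟩ := hdense.exists_between hδ
    exact ⟨x, hx1, hx2.1, hx2.2⟩
  obtain ⟨t1, ht1, t2, ht2, e⟩ := hdiff h hh
  obtain ⟨p0, hp0⟩ := hP2.nonempty
  have hl0 := hlogpos ⟨p0, hp0⟩
  set l0 := Real.log (((⟨p0, hp0⟩ : P) : ℕ) : ℝ)
  have hl0m : l0 ∈ Λ := AddSubmonoid.subset_closure ⟨⟨p0, hp0⟩, rfl⟩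
  set s2 := t2 + l0 with hs2
  set s1 := t1 + l0 with hs1
  have hs2m : s2 ∈ Λ := add_mem ht2 hl0m
  have hs1m : s1 ∈ Λ := add_mem ht1 hl0m
  have hs2pos : 0 < s2 := by have := hΛ0 t2 ht2; linarith
  have e2 : s1 = s2 + h := by rw [hs1, hs2, e]; ring
  refine ⟨s2 * (s2 / h + 1), fun y hy => ?_⟩
  have hy0 : 0 ≤ y := le_trans (by positivity) hy
  set n := ⌊y / s2⌋₊ with hn
  have hn1 : (n : ℝ) * s2 ≤ y := by
    rw [← le_div_iff₀ hs2pos]; exact Nat.floor_le (by positivity)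
  have hn2 : y < (n + 1 : ℝ) * s2 := by
    rw [← div_lt_iff₀ hs2pos]; exact Nat.lt_floor_add_one _
  have hn3 : s2 ≤ n * h := by
    rw [← div_le_iff₀ hpos]
    have : s2 * (s2 / h + 1) < s2 * (n + 1) := by linarith
    have := lt_of_mul_lt_mul_left this hs2pos.le
    linarith
  set j := ⌈(y - n * s2) / h⌉₊ with hj
  have hj1 : y - n * s2 ≤ j * h := by
    rw [← div_le_iff₀ hpos]; exact Nat.le_ceil _
  have hj2 : (j : ℝ) * h < y - n * s2 + h := by
    have := Nat.ceil_lt_add_one (a := (y - n * s2) / h) (by apply div_nonneg <;> linarith)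
    rw [← hj] at this
    have := mul_lt_mul_of_pos_right this hpos
    rw [add_mul, div_mul_cancel₀ _ hpos.ne', one_mul] at this
    exact this
  have hjn : j ≤ n := by
    rw [hj]
    apply Nat.ceil_le.mpr
    rw [div_le_iff₀ hpos]
    linarith
  refine ⟨j • s1 + (n - j) • s2, add_mem (nsmul_mem hs1m _) (nsmul_mem hs2m _), ?_⟩
  have e3 : j • s1 + (n - j) • s2 = n * s2 + j * h := by
    rw [nsmul_eq_mul, nsmul_eq_mul, Nat.cast_sub hjn, e2]; ring
  rw [e3]
  constructor <;> linarith

lemma af_finite (P : Set ℕ) (m n : ℕ) (hn : 1 ≤ n) :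
    Finite {t : Fin m → ℕ // (∀ i, t i ∈ P) ∧ ∏ i, t i = n} := by
  refine Set.Finite.to_subtype (s := {t : Fin m → ℕ | (∀ i, t i ∈ P) ∧ ∏ i, t i = n}) ?_
  refine Set.Finite.subset (Set.Finite.pi' (fun _ : Fin m => Set.finite_Iic n)) ?_
  rintro t ⟨h1, h2⟩ i
  have : t i ∣ n := by rw [← h2]; exact Finset.dvd_prod_of_mem t (Finset.mem_univ i)
  exact Nat.le_of_dvd hn this

lemma af_zero' (P : Set ℕ) (n : ℕ) : af P 0 n = if n = 1 then 1 else 0 := by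
  unfold af
  split_ifs with h
  · subst h
    rw [Nat.card_eq_one_iff_unique]
    exact ⟨⟨fun a b => Subtype.ext (Subsingleton.elim _ _)⟩, ⟨⟨fun i => i.elim0, fun i => i.elim0, by simp⟩⟩⟩
  · rw [Nat.card_eq_zero]
    left
    constructor
    rintro ⟨t, h1, h2⟩
    apply h
    simpa using h2.symm

lemma af_eq_zero' (P : Set ℕ) (hP : ∀ n ∈ P, 2 ≤ n) (m n : ℕ) (hn : 1 ≤ n) (h : n ≤ m) : af P m n = 0 := by
  unfold af
  rw [Nat.card_eq_zero]
  left
  constructor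
  rintro ⟨t, h1, h2⟩
  have h3 : 2 ^ m ≤ ∏ i, t i := by
    calc 2 ^ m = ∏ i : Fin m, 2 := by simp
      _ ≤ _ := Finset.prod_le_prod' fun i _ => hP _ (h1 i)
  have h4 : m < 2 ^ m := Nat.lt_two_pow_self
  omega

open Classical in
lemma af_succ' (P : Set ℕ) (m n : ℕ) (hn : 1 ≤ n) :
    af P (m + 1) n = ∑ p ∈ n.divisors.filter (· ∈ P), af P m (n / p) := by
  have e : {t : Fin (m + 1) → ℕ // (∀ i, t i ∈ P) ∧ ∏ i, t i = n} ≃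
      Σ p : {p // p ∈ n.divisors.filter (· ∈ P)}, {t : Fin m → ℕ // (∀ i, t i ∈ P) ∧ ∏ i, t i = n / p} := 
    { toFun := fun t => ⟨⟨t.1 0, by
          rw [Finset.mem_filter, Nat.mem_divisors]
          refine ⟨⟨?_, by omega⟩, t.2.1 0⟩
          exact (Finset.dvd_prod_of_mem t.1 (Finset.mem_univ 0)).trans (dvd_of_eq t.2.2)⟩,
        ⟨fun i => t.1 i.succ, fun i => t.2.1 _, by
          have h := t.2.2
          rw [Fin.prod_univ_succ] at h
          have h0 : 0 < t.1 0 := by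
            rcases Nat.eq_zero_or_pos (t.1 0) with h0 | h0
            · rw [h0, zero_mul] at h; omega
            · exact h0
          exact (Nat.div_eq_of_eq_mul_right h0 h.symm).symm⟩⟩
      invFun := fun x => ⟨Fin.cons x.1.1 x.2.1, by
          have hx := x.1.2
          rw [Finset.mem_filter, Nat.mem_divisors] at hx
          refine ⟨fun i => ?_, ?_⟩
          · refine Fin.cases ?_ (fun i => ?_) i
            · exact hx.2
            · simpa using x.2.2.1 i
          · rw [Fin.prod_univ_succ]
            simp only [Fin.cons_zero, Fin.cons_succ]
            rw [x.2.2.2]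
            exact Nat.mul_div_cancel' hx.1.1⟩
      left_inv := fun t => by
        apply Subtype.ext
        funext i
        refine Fin.cases ?_ (fun i => ?_) i <;> simp
      right_inv := fun x => by
        rcases x with ⟨⟨p, hp⟩, ⟨t, ht⟩⟩
        rfl }
  unfold af
  rw [Nat.card_congr e]
  haveI : ∀ p : {p // p ∈ n.divisors.filter (· ∈ P)}, Finite {t : Fin m → ℕ // (∀ i, t i ∈ P) ∧ ∏ i, t i = n / p} := by
    rintro ⟨p, hp⟩
    rw [Finset.mem_filter, Nat.mem_divisors] at hp
    refine af_finite P m _ (Nat.div_pos (Nat.le_of_dvd hn hp.1.1) (Nat.pos_of_dvd_of_pos hp.1.1 hn))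
  rw [Nat.card_sigma]
  exact Finset.sum_coe_sort (n.divisors.filter (· ∈ P)) (fun p => Nat.card {t : Fin m → ℕ // (∀ i, t i ∈ P) ∧ ∏ i, t i = n / p})

open Classical in
lemma af_sum_succ (P : Set ℕ) (m N : ℕ) (φ : ℕ → ℝ) :
    ∑ n ∈ Finset.Icc 1 N, (af P (m + 1) n : ℝ) * φ n =
      ∑ p ∈ (Finset.Icc 1 N).filter (· ∈ P), ∑ n ∈ Finset.Icc 1 (N / p), (af P m n : ℝ) * φ (p * n) := by
  have h1 : ∑ n ∈ Finset.Icc 1 N, (af P (m + 1) n : ℝ) * φ n =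
      ∑ n ∈ Finset.Icc 1 N, ∑ p ∈ n.divisors.filter (· ∈ P), (af P m (n / p) : ℝ) * φ n := by
    refine Finset.sum_congr rfl fun n hn => ?_
    rw [Finset.mem_Icc] at hn
    rw [af_succ' P m n hn.1, Nat.cast_sum, Finset.sum_mul]
  rw [h1, Finset.sum_sigma', Finset.sum_sigma']
  refine Finset.sum_nbij' (fun x => ⟨x.2, x.1 / x.2⟩) (fun x => ⟨x.1 * x.2, x.1⟩) ?_ ?_ ?_ ?_ ?_
  · rintro ⟨n, p⟩ h
    simp only [Finset.mem_sigma, Finset.mem_Icc, Finset.mem_filter, Nat.mem_divisors] at h ⊢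
    obtain ⟨⟨h1, h2⟩, ⟨h3, h4⟩, h5⟩ := h
    have hp : 0 < p := Nat.pos_of_dvd_of_pos h3 h1
    have hle := Nat.le_of_dvd h1 h3
    exact ⟨⟨⟨hp, hle.trans h2⟩, h5⟩, Nat.div_pos hle hp, Nat.div_le_div_right h2⟩
  · rintro ⟨p, n⟩ h
    simp only [Finset.mem_sigma, Finset.mem_Icc, Finset.mem_filter, Nat.mem_divisors] at h ⊢
    obtain ⟨⟨⟨h1, h2⟩, h5⟩, h3, h4⟩ := h
    have : 0 < p * n := Nat.mul_pos h1 h3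
    refine ⟨⟨this, ?_⟩, ⟨Dvd.intro _ rfl, by omega⟩, h5⟩
    calc p * n ≤ p * (N / p) := Nat.mul_le_mul_left _ h4
      _ ≤ N := Nat.mul_div_le N p
  · rintro ⟨n, p⟩ h
    simp only [Finset.mem_sigma, Finset.mem_Icc, Finset.mem_filter, Nat.mem_divisors] at h
    have := Nat.mul_div_cancel' h.2.1.1
    simp [this]
  · rintro ⟨p, n⟩ h
    simp only [Finset.mem_sigma, Finset.mem_Icc, Finset.mem_filter, Nat.mem_divisors] at h
    have := Nat.mul_div_cancel_left n h.1.1.1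
    simp [this]
  · rintro ⟨n, p⟩ h
    simp only [Finset.mem_sigma, Finset.mem_Icc, Finset.mem_filter, Nat.mem_divisors] at h
    have := Nat.mul_div_cancel' h.2.1.1
    simp [this]

def SN (P : Set ℕ) (μ θ : ℝ) (N : ℕ) : ℝ :=
  ∑ n ∈ Finset.Icc 1 N, ∑ m ∈ Finset.range (n + 1), (af P m n : ℝ) * Real.exp (θ * (m - μ * Real.log n))

lemma sum_range_af (P : Set ℕ) (hP : ∀ n ∈ P, 2 ≤ n) (n M : ℕ) (hn : 1 ≤ n) (hM : n ≤ M) (φ : ℕ → ℝ) :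
    ∑ m ∈ Finset.range M, (af P m n : ℝ) * φ m = ∑ m ∈ Finset.range (n + 1), (af P m n : ℝ) * φ m := by
  have key : ∀ M ≥ n, ∑ m ∈ Finset.range M, (af P m n : ℝ) * φ m = ∑ m ∈ Finset.range n, (af P m n : ℝ) * φ m := by
    intro M hM
    symm
    refine Finset.sum_subset (Finset.range_mono hM) fun m _ h2 => ?_
    rw [Finset.mem_range, not_lt] at h2
    rw [af_eq_zero' P hP m n hn h2]; simp
  rw [key M hM, key (n + 1) (by omega)]

lemma SN_eq (P : Set ℕ) (hP : ∀ n ∈ P, 2 ≤ n) (μ θ : ℝ) (N M : ℕ) (hM : N ≤ M) :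
    SN P μ θ N = ∑ m ∈ Finset.range M, ∑ n ∈ Finset.Icc 1 N, (af P m n : ℝ) * Real.exp (θ * (m - μ * Real.log n)) := by
  rw [Finset.sum_comm]
  refine Finset.sum_congr rfl fun n hn => ?_
  rw [Finset.mem_Icc] at hn
  exact (sum_range_af P hP n M hn.1 (by omega) _).symm

open Classical in
lemma SN_renewal (P : Set ℕ) (hP : ∀ n ∈ P, 2 ≤ n) (μ θ : ℝ) (N : ℕ) (hN : 1 ≤ N) :
    SN P μ θ N = 1 + ∑ p ∈ (Finset.Icc 1 N).filter (· ∈ P), Real.exp (θ * (1 - μ * Real.log p)) * SN P μ θ (N / p) := by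
  rw [SN_eq P hP μ θ N (N + 1) (by omega), Finset.sum_range_succ', add_comm]
  congr 1
  · rw [Finset.sum_eq_single 1]
    · simp [af_zero']
    · intro n _ hn
      simp [af_zero', hn]
    · intro h; exact absurd (Finset.mem_Icc.mpr ⟨le_rfl, hN⟩) h
  · have h1 : ∀ m ∈ Finset.range N, ∑ n ∈ Finset.Icc 1 N, (af P (m + 1) n : ℝ) * Real.exp (θ * (((m + 1 : ℕ) : ℝ) - μ * Real.log n)) =
        ∑ p ∈ (Finset.Icc 1 N).filter (· ∈ P), ∑ n ∈ Finset.Icc 1 (N / p), (af P m n : ℝ) * Real.exp (θ * (((m + 1 : ℕ) : ℝ) - μ * Real.log ((p * n : ℕ) : ℝ))) := 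
      fun m _ => af_sum_succ P m N _
    rw [Finset.sum_congr rfl h1, Finset.sum_comm]
    refine Finset.sum_congr rfl fun p hp => ?_
    rw [Finset.mem_filter, Finset.mem_Icc] at hp
    rw [SN_eq P hP μ θ (N / p) N (Nat.div_le_self _ _), Finset.mul_sum]
    refine Finset.sum_congr rfl fun m _ => ?_
    rw [Finset.mul_sum]
    refine Finset.sum_congr rfl fun n hn => ?_
    rw [Finset.mem_Icc] at hn
    have hp0 : (p : ℝ) ≠ 0 := by have := hp.1.1; positivity
    have hn0 : (n : ℝ) ≠ 0 := by have := hn.1; positivity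
    push_cast
    rw [Real.log_mul hp0 hn0, mul_left_comm, ← Real.exp_add]
    ring_nf

lemma bCoef_eq (P : Set ℕ) (hP : ∀ n ∈ P, 2 ≤ n) (μ : ℝ) (k n : ℕ) (hn : 1 ≤ n) :
    bCoef P μ k n = ∑ m ∈ Finset.range (n + 1), (af P m n : ℝ) * ((m : ℝ) - μ * Real.log n) ^ k := by
  unfold bCoef
  refine tsum_eq_sum fun m hm => ?_
  rw [Finset.mem_range, not_lt] at hm
  rw [af_eq_zero' P hP m n hn (by omega)]; simp

lemma Acum_eq (P : Set ℕ) (hP : ∀ n ∈ P, 2 ≤ n) (μ : ℝ) (N : ℕ) : Acum P N = SN P μ 0 N := by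
  unfold Acum SN aTot
  refine Finset.sum_congr rfl fun n hn => ?_
  rw [Finset.mem_Icc] at hn
  simp only [zero_mul, Real.exp_zero, mul_one]
  refine tsum_eq_sum fun m hm => ?_
  rw [Finset.mem_range, not_lt] at hm
  rw [af_eq_zero' P hP m n hn.1 (by omega)]; simp


def indP (P : Set ℕ) : ℕ → ℂ := P.indicator (fun _ => (1:ℂ))

lemma pval_L (P : Set ℕ) (hP : ∀ n ∈ P, 2 ≤ n) (x : ℝ) :
    ((Pval P x : ℝ) : ℂ) = LSeries (indP P) (x:ℂ) := by
  unfold Pval LSeries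
  rw [Complex.ofReal_tsum, tsum_subtype P (fun n : ℕ => (((n:ℝ) ^ (-x) : ℝ) : ℂ))]
  congr 1; ext n
  by_cases hn : n ∈ P
  · have h0 : n ≠ 0 := by have := hP n hn; omega
    rw [Set.indicator_of_mem hn, LSeries.term_of_ne_zero h0, indP, Set.indicator_of_mem hn,
      Complex.ofReal_cpow (by positivity), one_div, ← Complex.cpow_neg]
    simp
  · rw [Set.indicator_of_notMem hn]
    by_cases h0 : n = 0
    · simp [h0]
    · rw [LSeries.term_of_ne_zero h0, indP, Set.indicator_of_notMem hn]; simp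

lemma pderiv_L (P : Set ℕ) (hP : ∀ n ∈ P, 2 ≤ n) (x : ℝ) :
    ((Pderiv1 P x : ℝ) : ℂ) = - LSeries (LSeries.logMul (indP P)) (x:ℂ) := by
  unfold Pderiv1 LSeries
  rw [Complex.ofReal_neg, Complex.ofReal_tsum,
    tsum_subtype P (fun n : ℕ => (((n:ℝ) ^ (-x) * Real.log n : ℝ) : ℂ))]
  congr 2; ext n
  by_cases hn : n ∈ P
  · have h0 : n ≠ 0 := by have := hP n hn; omega
    rw [Set.indicator_of_mem hn, LSeries.term_of_ne_zero h0, LSeries.logMul, indP,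
      Set.indicator_of_mem hn, Complex.ofReal_mul,
      Complex.ofReal_cpow (by positivity), mul_one, div_eq_mul_inv, ← Complex.cpow_neg, mul_comm]
    simp [Complex.natCast_log]
  · rw [Set.indicator_of_notMem hn]
    by_cases h0 : n = 0
    · simp [h0]
    · rw [LSeries.term_of_ne_zero h0, LSeries.logMul, indP, Set.indicator_of_notMem hn]; simp

lemma exists_r (P : Set ℕ) (ρ : ℝ) (h : kappa P < (ρ : EReal)) :
    ∃ r : ℝ, r < ρ ∧ Summable (fun n : P => ((n : ℕ) : ℝ) ^ (-r)) := by
  unfold kappa at h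
  rw [sInf_lt_iff] at h
  obtain ⟨x, ⟨r, rfl, hr⟩, h2⟩ := h
  exact ⟨r, by exact_mod_cast h2, hr⟩

lemma absc_le (P : Set ℕ) (hP : ∀ n ∈ P, 2 ≤ n) (r : ℝ)
    (hr : Summable (fun n : P => ((n : ℕ) : ℝ) ^ (-r))) :
    LSeries.abscissaOfAbsConv (indP P) ≤ (r : EReal) := by
  have : LSeriesSummable (indP P) (r : ℂ) := by
    unfold LSeriesSummable
    have h1 := (summable_subtype_iff_indicator (f := fun n : ℕ => (n:ℝ) ^ (-r)) (s := P)).1 hr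
    refine Summable.of_norm_bounded h1 ?_
    intro n
    by_cases hn : n ∈ P
    · have h0 : n ≠ 0 := by have := hP n hn; omega
      rw [Set.indicator_of_mem hn, LSeries.norm_term_eq, if_neg h0, indP, Set.indicator_of_mem hn]
      simp [Real.rpow_neg]
    · rw [Set.indicator_of_notMem hn, LSeries.norm_term_eq, indP, Set.indicator_of_notMem hn]
      simp
  simpa using this.abscissaOfAbsConv_le

lemma sum_log (P : Set ℕ) (hP : ∀ n ∈ P, 2 ≤ n) (r : ℝ)
    (hr : Summable (fun n : P => ((n : ℕ) : ℝ) ^ (-r))) (s : ℝ) (hs : r < s) :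
    Summable (fun n : P => ((n : ℕ) : ℝ) ^ (-s) * Real.log (n:ℕ)) := by
  refine Summable.of_nonneg_of_le (fun n => ?_) (fun n => ?_) (hr.mul_right (1/(s-r)))
  · have := hP n n.2
    have : (1:ℝ) ≤ ((n:ℕ):ℝ) := by exact_mod_cast (by omega)
    have := Real.log_nonneg this
    positivity
  · have h2 := hP n n.2
    have h0 : (0:ℝ) < ((n:ℕ):ℝ) := by exact_mod_cast (by omega)
    have h3 := Real.log_le_rpow_div h0.le (sub_pos.2 hs)
    calc _ ≤ ((n : ℕ) : ℝ) ^ (-s) * (((n : ℕ) : ℝ) ^ (s-r) / (s-r)) := by gcongr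
      _ = _ := by rw [← mul_div_assoc, ← Real.rpow_add h0]; ring_nf

lemma pderiv_neg (P : Set ℕ) (hP : ∀ n ∈ P, 2 ≤ n) (hP2 : P.Nontrivial) (r : ℝ)
    (hr : Summable (fun n : P => ((n : ℕ) : ℝ) ^ (-r))) (s : ℝ) (hs : r < s) :
    Pderiv1 P s < 0 := by
  unfold Pderiv1
  obtain ⟨p, hp⟩ := hP2.nonempty
  have h1 : ∀ n : P, 0 < ((n : ℕ) : ℝ) ^ (-s) * Real.log (n:ℕ) := by
    intro n
    have h2 := hP n n.2
    have h0 : (1:ℝ) < ((n:ℕ):ℝ) := by exact_mod_cast (by omega)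
    have := Real.log_pos h0
    positivity
  have := (sum_log P hP r hr s hs).tsum_pos (fun i => (h1 i).le) ⟨p, hp⟩ (h1 _)
  linarith

lemma pval_diff (P : Set ℕ) (hP : ∀ n ∈ P, 2 ≤ n) (r : ℝ)
    (hr : Summable (fun n : P => ((n : ℕ) : ℝ) ^ (-r))) (s : ℝ) (hs : r < s) :
    ContDiffAt ℝ 2 (Pval P) s ∧ HasDerivAt (Pval P) (Pderiv1 P s) s := by
  have hlt : LSeries.abscissaOfAbsConv (indP P) < ((s:ℂ).re : EReal) :=
    lt_of_le_of_lt (absc_le P hP r hr) (by simpa using hs)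
  have e : Pval P = fun x : ℝ => (LSeries (indP P) (x:ℂ)).re := by
    ext x; rw [← pval_L P hP]; simp
  constructor
  · have := (LSeries_analyticOnNhd (indP P) (s:ℂ) hlt).contDiffAt (n := 2)
    rw [e]; exact this.real_of_complex
  · have := (LSeries_hasDerivAt hlt).real_of_complex
    rw [← pderiv_L P hP] at this
    rw [e]; simpa using this

lemma taylor2 (f : ℝ → ℝ) (h : ContDiffAt ℝ 2 f 0) (h1 : HasDerivAt f 0 0) :
    ∃ c : ℝ, (fun θ => f θ - f 0 - c * θ^2) =o[𝓝 0] fun θ : ℝ => θ^2 := by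
  obtain ⟨u, hu, hf⟩ := h.contDiffOn (m := 2) le_rfl (by simp)
  obtain ⟨ε, hε, hb⟩ := Metric.mem_nhds_iff.1 hu
  have hcv := convex_ball (0:ℝ) ε
  have h0 : (0:ℝ) ∈ Metric.ball (0:ℝ) ε := Metric.mem_ball_self hε
  have ht := taylor_isLittleO (n := 2) hcv h0 (by simpa using hf.mono hb)
  rw [Metric.isOpen_ball.nhdsWithin_eq h0] at ht
  refine ⟨2⁻¹ * iteratedDerivWithin 2 f (Metric.ball 0 ε) 0, ?_⟩
  refine (ht.congr_left ?_).congr_right (by simp)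
  intro x
  have hd : derivWithin f (Metric.ball 0 ε) 0 = 0 := by
    rw [derivWithin_of_isOpen Metric.isOpen_ball h0]; exact h1.deriv
  rw [taylorWithinEval_succ, taylorWithinEval_succ, taylor_within_zero_eval, iteratedDerivWithin_one]
  simp [hd]
  ring

theorem exists_w (P : Set ℕ) (hP : ∀ n ∈ P, 2 ≤ n) (hP2 : P.Nontrivial)
    (ρ : ℝ) (hρκ : kappa P < (ρ : EReal)) (hρ1 : Pval P ρ = 1)
    (μ : ℝ) (hμ : μ = -1 / Pderiv1 P ρ) :
    ∃ (w : ℝ → ℝ) (c : ℝ), w 0 = ρ ∧ Tendsto w (𝓝 0) (𝓝 ρ) ∧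
      (∀ᶠ θ in 𝓝 (0:ℝ), Pval P (w θ) = Real.exp (-θ)) ∧
      (fun θ => w θ - μ * θ - ρ - c * θ^2) =o[𝓝 0] fun θ : ℝ => θ^2 := by
  obtain ⟨r, hrρ, hr⟩ := exists_r P ρ hρκ
  have hneg := pderiv_neg P hP hP2 r hr ρ hrρ
  obtain ⟨hc, hd⟩ := pval_diff P hP r hr ρ hrρ
  have hne : Pval P ρ ≠ 0 := by rw [hρ1]; norm_num
  have hc' : ContDiffAt ℝ 2 (fun x => - Real.log (Pval P x)) ρ := (hc.log hne).neg
  have hd' : HasDerivAt (fun x => - Real.log (Pval P x)) (- Pderiv1 P ρ) ρ := by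
    have := (hd.log hne).neg
    rwa [hρ1, div_one] at this
  have hn0 : - Pderiv1 P ρ ≠ 0 := by linarith [hneg] |> fun h : 0 < - Pderiv1 P ρ => h.ne'
  let e : ℝ ≃L[ℝ] ℝ := ContinuousLinearEquiv.unitsEquivAut ℝ (Units.mk0 _ hn0)
  have hf' : HasFDerivAt (fun x => - Real.log (Pval P x)) (e : ℝ →L[ℝ] ℝ) ρ := by
    convert! hd'.hasFDerivAt using 1
  have h2 : (2 : WithTop ℕ∞) ≠ 0 := by norm_num
  have hst := hc'.hasStrictFDerivAt' hf' h2
  have hfρ : - Real.log (Pval P ρ) = 0 := by rw [hρ1]; simp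
  set w := hc'.localInverse hf' h2 with hw
  have hcw : ContDiffAt ℝ 2 w 0 := by
    have := hc'.to_localInverse hf' h2
    simpa only [hfρ] using this
  have hw0 : w 0 = ρ := by
    have := hc'.localInverse_apply_image hf' h2
    simpa only [hfρ] using this
  have hri : ∀ᶠ θ in 𝓝 (0:ℝ), - Real.log (Pval P (w θ)) = θ := by
    have := hst.eventually_right_inverse
    rw [hfρ] at this
    exact this
  have htw : Tendsto w (𝓝 0) (𝓝 ρ) := by
    have := hcw.continuousAt.tendsto; rwa [hw0] at this
  have hwd : HasDerivAt w μ 0 := by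
    have h1 := (hcw.differentiableAt (by norm_num)).hasDerivAt
    have h3 : HasDerivAt (fun x => - Real.log (Pval P x)) (- Pderiv1 P ρ) (w 0) := by rwa [hw0]
    have h4 := h3.comp (0:ℝ) h1
    have h5 : HasDerivAt (fun θ : ℝ => θ) (- Pderiv1 P ρ * deriv w 0) 0 :=
      h4.congr_of_eventuallyEq (by filter_upwards [hri] with θ hθ; exact hθ.symm)
    have h6 := h5.unique (hasDerivAt_id' (0:ℝ))
    have : deriv w 0 = μ := by
      rw [hμ, eq_div_iff hneg.ne]; linarith
    rwa [this] at h1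
  have hpos : ∀ᶠ θ in 𝓝 (0:ℝ), 0 < Pval P (w θ) := by
    have : Tendsto (fun θ => Pval P (w θ)) (𝓝 0) (𝓝 (Pval P ρ)) :=
      (hc.continuousAt.tendsto).comp htw
    rw [hρ1] at this
    exact this.eventually (lt_mem_nhds one_pos)
  have hl1 : ContDiffAt ℝ 2 (fun θ => w θ - μ * θ) 0 :=
    hcw.sub (contDiffAt_const.mul contDiffAt_id)
  have hl2 : HasDerivAt (fun θ => w θ - μ * θ) 0 0 := by
    have := hwd.sub ((hasDerivAt_id' (0:ℝ)).const_mul μ)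
    rw [mul_one, sub_self] at this
    exact this
  obtain ⟨c, hcc⟩ := taylor2 _ hl1 hl2
  refine ⟨w, c, hw0, htw, ?_, ?_⟩
  · filter_upwards [hri, hpos] with θ h1 h2
    rw [← Real.exp_log h2]; congr 1; linarith
  · simpa [hw0] using hcc


lemma SN_mono (P : Set ℕ) (μ θ : ℝ) : Monotone (SN P μ θ) := by
  intro a b hab
  unfold SN
  refine Finset.sum_le_sum_of_subset_of_nonneg (Finset.Icc_subset_Icc_right hab) ?_
  intro i _ _
  exact Finset.sum_nonneg fun m _ => by positivity

lemma SN_nonneg (P : Set ℕ) (μ θ : ℝ) (N : ℕ) : 0 ≤ SN P μ θ N := by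
  unfold SN
  exact Finset.sum_nonneg fun n _ => Finset.sum_nonneg fun m _ => by positivity

lemma SN_zero (P : Set ℕ) (μ θ : ℝ) : SN P μ θ 0 = 0 := by simp [SN]

lemma z_renewal (P : Set ℕ) (hP : ∀ n ∈ P, 2 ≤ n) (μ θ w t : ℝ) (ht : 0 ≤ t) :
    Real.exp (-(w - μ * θ) * t) * SN P μ θ ⌊Real.exp t⌋₊ =
      Real.exp (-(w - μ * θ) * t) + ∑' p : P, (Real.exp θ * ((p:ℕ):ℝ) ^ (-w)) *
        (Real.exp (-(w - μ * θ) * (t - Real.log ((p:ℕ):ℝ))) *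
          SN P μ θ ⌊Real.exp (t - Real.log ((p:ℕ):ℝ))⌋₊) := by
  classical
  have h1 : 1 ≤ ⌊Real.exp t⌋₊ := Nat.le_floor (by simpa using ht)
  rw [SN_renewal P hP μ θ _ h1, mul_add, mul_one]
  congr 1
  rw [tsum_subtype P (fun p : ℕ => (Real.exp θ * (p:ℝ) ^ (-w)) *
        (Real.exp (-(w - μ * θ) * (t - Real.log (p:ℝ))) *
          SN P μ θ ⌊Real.exp (t - Real.log (p:ℝ))⌋₊))]
  have key : ∀ p ∈ P, (⌊Real.exp (t - Real.log (p:ℝ))⌋₊ = ⌊Real.exp t⌋₊ / p) := by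
    intro p hp
    have h0 : (0:ℝ) < p := by have := hP p hp; exact_mod_cast (by omega)
    rw [Real.exp_sub, Real.exp_log h0, Nat.floor_div_natCast]
  rw [tsum_eq_sum (s := (Finset.Icc 1 ⌊Real.exp t⌋₊).filter (· ∈ P))]
  · rw [Finset.mul_sum]
    refine Finset.sum_congr (by ext; simp) ?_
    intro p hp
    have hp' : p ∈ P := by simpa using (Finset.mem_filter.1 hp).2
    have h0 : (0:ℝ) < p := by have := hP p hp'; exact_mod_cast (by omega)
    rw [Set.indicator_of_mem hp', key p hp', ← mul_assoc, ← mul_assoc]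
    congr 1
    rw [Real.rpow_def_of_pos h0, ← Real.exp_add, ← Real.exp_add, ← Real.exp_add]
    congr 1; ring
  · intro p hp
    by_cases hp' : p ∈ P
    · rw [Set.indicator_of_mem hp', key p hp']
      have h2 := hP p hp'
      have : ⌊Real.exp t⌋₊ < p := by
        by_contra hcon
        apply hp
        simp only [Finset.mem_filter, Finset.mem_Icc]
        exact ⟨⟨by omega, by omega⟩, hp'⟩
      rw [Nat.div_eq_of_lt this, SN_zero]; simp
    · rw [Set.indicator_of_notMem hp']

theorem SN_limit (P : Set ℕ) (hP : ∀ n ∈ P, 2 ≤ n) (hP2 : P.Nontrivial)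
    (ρ : ℝ) (hρ0 : 0 < ρ) (hρκ : kappa P < (ρ : EReal)) (hρ1 : Pval P ρ = 1)
    (μ : ℝ) (hμ : μ = -1 / Pderiv1 P ρ)
    (hnp : ∀ d : ℕ, 2 ≤ d → ¬ P ⊆ {n : ℕ | ∃ k : ℕ, 1 ≤ k ∧ n = d ^ k}) :
    ∃ (w : ℝ → ℝ) (c C : ℝ), 0 < C ∧ 
      (fun θ => w θ - μ * θ - ρ - c * θ^2) =o[𝓝 0] (fun θ : ℝ => θ^2) ∧
      Tendsto (fun x : ℝ × ℝ => Real.exp (-(w x.1 - μ * x.1) * x.2) * SN P μ x.1 ⌊Real.exp x.2⌋₊)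
        (𝓝 0 ×ˢ atTop) (𝓝 C) := by
  obtain ⟨w, c, hw0, htw, hpv, hlo⟩ := exists_w P hP hP2 ρ hρκ hρ1 μ hμ
  obtain ⟨r, hrρ, hr⟩ := exists_r P ρ hρκ
  have hneg := pderiv_neg P hP hP2 r hr ρ hrρ
  have hp1 : ∀ p : P, (1:ℝ) < ((p:ℕ):ℝ) := fun p => by
    have := hP p p.2; exact_mod_cast (by omega)
  have hp0 : ∀ p : P, (0:ℝ) < ((p:ℕ):ℝ) := fun p => one_pos.trans (hp1 p)
  refine ⟨w, c, 1 / (ρ * ∑' p : P, ((p:ℕ):ℝ) ^ (-ρ) * Real.log ((p:ℕ):ℝ)), ?_, hlo, ?_⟩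
  · unfold Pderiv1 at hneg
    have : 0 < ∑' p : P, ((p:ℕ):ℝ) ^ (-ρ) * Real.log ((p:ℕ):ℝ) := by linarith
    positivity
  set s := (r + ρ)/2 with hs
  refine renewal_limit (fun p : P => Real.log ((p:ℕ):ℝ)) (Real.log 2) (Real.log_pos one_lt_two)
    (fun p => Real.log_le_log (by norm_num) (by exact_mod_cast hP p p.2))
    (log_dense P hP hP2 hnp)
    (fun θ p => Real.exp θ * ((p:ℕ):ℝ) ^ (-(w θ))) (fun p => ((p:ℕ):ℝ) ^ (-ρ))
    (fun p => Real.exp 1 * ((p:ℕ):ℝ) ^ (-s)) (fun p => Real.rpow_pos_of_pos (hp0 p) _)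
    ?_ ?_ ?_ ?_ (fun θ => w θ - μ * θ) ρ hρ0 ?_
    (fun θ t => Real.exp (-(w θ - μ * θ) * t) * SN P μ θ ⌊Real.exp t⌋₊) ?_ ?_ ?_ ?_
  · intro p
    have h1 : Tendsto (fun θ => ((p:ℕ):ℝ) ^ (-(w θ))) (𝓝 0) (𝓝 (((p:ℕ):ℝ) ^ (-ρ))) :=
      tendsto_const_nhds.rpow htw.neg (Or.inl (hp0 p).ne')
    have h2 : Tendsto (fun θ : ℝ => Real.exp θ) (𝓝 0) (𝓝 1) := by
      simpa using Real.continuous_exp.tendsto 0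
    simpa using h2.mul h1
  · have h1 : ∀ᶠ θ in 𝓝 (0:ℝ), s < w θ := htw.eventually (lt_mem_nhds (by rw [hs]; linarith))
    have h2 : ∀ᶠ θ in 𝓝 (0:ℝ), θ < 1 := eventually_lt_nhds one_pos
    filter_upwards [h1, h2] with θ h1 h2 p
    refine ⟨by have := hp0 p; positivity, ?_⟩
    gcongr
    · exact (hp1 p).le
  · have := (sum_log P hP r hr s (by rw [hs]; linarith)).mul_left (Real.exp 1)
    simpa only [mul_assoc] using this
  · have h1 : ∀ᶠ θ in 𝓝 (0:ℝ), r < w θ := htw.eventually (lt_mem_nhds hrρ)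
    filter_upwards [h1, hpv] with θ h1 h2
    have hsm : Summable (fun p : P => ((p:ℕ):ℝ) ^ (-(w θ))) := by
      refine Summable.of_nonneg_of_le (fun p => Real.rpow_nonneg (hp0 p).le _) (fun p => ?_) hr
      exact Real.rpow_le_rpow_of_exponent_le (hp1 p).le (by linarith)
    have h3 := hsm.hasSum.mul_left (Real.exp θ)
    unfold Pval at h2
    rw [h2, ← Real.exp_add, add_neg_cancel, Real.exp_zero] at h3
    exact h3
  · have := htw.sub ((continuous_const.mul continuous_id).tendsto (0:ℝ) : Tendsto (fun θ : ℝ => μ * θ) (𝓝 0) (𝓝 (μ * 0)))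
    simpa using this
  · intro θ t
    exact mul_nonneg (Real.exp_pos _).le (SN_nonneg ..)
  · intro θ t ht
    have : ⌊Real.exp t⌋₊ = 0 := Nat.floor_eq_zero.2 (by simpa using ht)
    simp only [this, SN_zero, mul_zero]
  · intro θ a b hab
    simp only [← mul_assoc, ← Real.exp_add]
    have e : ∀ t, (w θ - μ * θ) * t + -(w θ - μ * θ) * t = 0 := fun t => by ring
    rw [e, e, Real.exp_zero, one_mul, one_mul]
    exact SN_mono P μ θ (Nat.floor_mono (Real.exp_le_exp.2 hab))
  · exact Eventually.of_forall fun θ t ht => z_renewal P hP μ θ (w θ) t ht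

lemma G_limit (P : Set ℕ) (ρ μ : ℝ) (w : ℝ → ℝ) (c C : ℝ)
    (hlo : (fun θ => w θ - μ * θ - ρ - c * θ^2) =o[𝓝 0] (fun θ : ℝ => θ^2))
    (hlim : Tendsto (fun x : ℝ × ℝ => Real.exp (-(w x.1 - μ * x.1) * x.2) * SN P μ x.1 ⌊Real.exp x.2⌋₊)
        (𝓝 0 ×ˢ atTop) (𝓝 C)) (x : ℝ) :
    Tendsto (fun N : ℕ => (N:ℝ) ^ (-ρ) * SN P μ (x / √(Real.log N)) N) atTop
      (𝓝 (Real.exp (c * x^2) * C)) := by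
  have ht : Tendsto (fun N : ℕ => Real.log (N:ℝ)) atTop atTop :=
    Real.tendsto_log_atTop.comp tendsto_natCast_atTop_atTop
  have hθ : Tendsto (fun N : ℕ => x / √(Real.log N)) atTop (𝓝 0) :=
    (Real.tendsto_sqrt_atTop.comp ht).const_div_atTop x
  have h1 := hlim.comp (hθ.prodMk ht)
  have h2 : Tendsto (fun N : ℕ => (w (x / √(Real.log N)) - μ * (x / √(Real.log N)) - ρ
      - c * (x / √(Real.log N))^2) * Real.log N) atTop (𝓝 0) := by
    have h3 := (hlo.comp_tendsto hθ).mul_isBigO (isBigO_refl (fun N : ℕ => Real.log (N:ℝ)) atTop)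
    have h4 : (fun N : ℕ => ((fun θ : ℝ => θ^2) ∘ fun N : ℕ => x / √(Real.log N)) N * Real.log N)
        =O[atTop] (fun _ => (1:ℝ)) := by
      refine IsBigO.of_bound (x^2) ?_
      filter_upwards [ht.eventually_gt_atTop 0] with N hN
      simp only [Function.comp, div_pow, Real.sq_sqrt hN.le]
      rw [div_mul_cancel₀ _ hN.ne']; simp
    exact (isLittleO_one_iff ℝ).1 (h3.trans_isBigO h4)
  have h5 : Tendsto (fun N : ℕ => Real.exp ((w (x / √(Real.log N)) - μ * (x / √(Real.log N)) - ρ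
      - c * (x / √(Real.log N))^2) * Real.log N + c * x^2)) atTop (𝓝 (Real.exp (c * x^2))) := by
    refine (Real.continuous_exp.tendsto _).comp ?_
    simpa using h2.add_const (c * x^2)
  refine (h5.mul h1).congr' ?_
  filter_upwards [ht.eventually_gt_atTop 0, eventually_ge_atTop 1] with N hN hN1
  have hN0 : (0:ℝ) < N := by exact_mod_cast hN1
  simp only [Function.comp]
  rw [Real.exp_log hN0, Nat.floor_natCast, ← mul_assoc, ← Real.exp_add, Real.rpow_def_of_pos hN0,
    div_pow, Real.sq_sqrt hN.le]
  congr 2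
  field_simp
  ring

lemma coeff_tendsto (c : ℕ → ℕ → ℝ) (F : ℕ → ℝ → ℝ) (K : ℝ)
    (hK : ∀ᶠ N in atTop, ∀ j, |c N j| ≤ K)
    (hF : ∀ N x, HasSum (fun j => c N j * x ^ j) (F N x))
    (h0 : ∀ x, Tendsto (fun N => F N x) atTop (𝓝 0)) (j : ℕ) :
    Tendsto (fun N => c N j) atTop (𝓝 0) := by
  have hK0 : 0 ≤ K := by
    obtain ⟨N, hN⟩ := hK.exists
    exact (abs_nonneg _).trans (hN 0)
  induction j using Nat.strong_induction_on with
  | _ j ih =>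
  rw [Metric.tendsto_atTop']
  intro ε hε
  obtain ⟨x, hx0, hx1, hx2⟩ : ∃ x : ℝ, 0 < x ∧ x ≤ 1/2 ∧ 2 * K * x < ε / 2 := by
    refine ⟨min (1/2) (ε / (4 * (K + 1))), by positivity, min_le_left _ _, ?_⟩
    calc 2 * K * min (1/2) (ε / (4 * (K + 1))) ≤ 2 * K * (ε / (4 * (K + 1))) := by
          gcongr; exact min_le_right _ _
      _ < ε / 2 := by
          rw [mul_div_assoc', div_lt_iff₀ (by positivity)]; nlinarith
  have hD : Tendsto (fun N => (|F N x| + |∑ i ∈ Finset.range j, c N i * x ^ i|) / x ^ j) atTop (𝓝 0) := by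
    have h1 : Tendsto (fun N => ∑ i ∈ Finset.range j, c N i * x ^ i) atTop (𝓝 0) := by
      have := tendsto_finset_sum (Finset.range j) (f := fun i N => c N i * x ^ i) (a := fun _ => 0)
        (x := atTop) (fun i hi => by simpa using (ih i (Finset.mem_range.1 hi)).mul_const (x ^ i))
      simpa using this
    simpa using ((h0 x).abs.add h1.abs).div_const (x ^ j)
  have hev := hD.eventually (gt_mem_nhds (half_pos hε))
  have : ∀ᶠ N in atTop, dist (c N j) 0 < ε := by
    filter_upwards [hev, hK] with N h1 h2
    have hs := hF N x
    have hs2 := (hasSum_nat_add_iff' (j+1)).2 hs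
    have hg : HasSum (fun i : ℕ => K * x ^ (j+1) * x ^ i) (K * x ^ (j+1) * (1 - x)⁻¹) :=
      (hasSum_geometric_of_lt_one hx0.le (by linarith)).mul_left _
    have hR : |F N x - ∑ i ∈ Finset.range (j+1), c N i * x ^ i| ≤ K * x ^ (j+1) * (1 - x)⁻¹ := by
      rw [← hs2.tsum_eq, ← Real.norm_eq_abs]
      refine tsum_of_norm_bounded hg (fun i => ?_)
      rw [Real.norm_eq_abs, abs_mul, abs_of_pos (pow_pos hx0 _)]
      calc _ ≤ K * x ^ (i + (j+1)) := by gcongr; exact h2 _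
        _ = _ := by ring
    have hR2 : K * x ^ (j+1) * (1 - x)⁻¹ ≤ 2 * K * x * x ^ j := by
      have : (1 - x)⁻¹ ≤ 2 := by
        rw [inv_le_comm₀ (by linarith) (by norm_num)]; linarith
      calc _ ≤ K * x ^ (j+1) * 2 := by gcongr
        _ = _ := by ring
    rw [Finset.sum_range_succ] at hR
    have hxj := pow_pos hx0 j
    have h3 : |c N j| * x ^ j ≤ |F N x| + |∑ i ∈ Finset.range j, c N i * x ^ i| + 2 * K * x * x ^ j := by
      rw [← abs_of_pos hxj, ← abs_mul, abs_of_pos hxj]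
      have e : c N j * x ^ j = F N x - ∑ i ∈ Finset.range j, c N i * x ^ i -
        (F N x - (∑ i ∈ Finset.range j, c N i * x ^ i + c N j * x ^ j)) := by ring
      rw [e]
      refine (abs_sub _ _).trans ?_
      have := abs_sub (F N x) (∑ i ∈ Finset.range j, c N i * x ^ i)
      linarith
    rw [Real.dist_eq, sub_zero]
    have h4 : |c N j| ≤ (|F N x| + |∑ i ∈ Finset.range j, c N i * x ^ i|) / x ^ j + 2 * K * x := by
      rw [← sub_le_iff_le_add, le_div_iff₀ hxj]; linarith
    linarith
  rw [eventually_atTop] at this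
  obtain ⟨a, ha⟩ := this
  exact ⟨a, fun n hn => ha n hn.le⟩

lemma odd_moment {α : Type*} (s : ℕ → Finset α) (W u : ℕ → α → ℝ) (hW : ∀ N a, 0 ≤ W N a)
    (K : ℝ) (hK : ∀ᶠ N in atTop, ∑ a ∈ s N, W N a * Real.exp (1 * u N a)
       + ∑ a ∈ s N, W N a * Real.exp (-1 * u N a) ≤ K)
    (h0 : ∀ x : ℝ, Tendsto (fun N => ∑ a ∈ s N, W N a * Real.exp (x * u N a)
       - ∑ a ∈ s N, W N a * Real.exp (-x * u N a)) atTop (𝓝 0)) (k : ℕ) (hk : Odd k) :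
    Tendsto (fun N => ∑ a ∈ s N, W N a * u N a ^ k) atTop (𝓝 0) := by
  have hexp : ∀ y : ℝ, HasSum (fun j : ℕ => y ^ j / (j.factorial : ℝ)) (Real.exp y) := by
    intro y
    rw [Real.exp_eq_exp_ℝ]
    exact NormedSpace.expSeries_div_hasSum_exp y
  have := coeff_tendsto (fun N j => ∑ a ∈ s N, W N a * ((u N a ^ j - (-u N a) ^ j) / (j.factorial : ℝ)))
    (fun N x => ∑ a ∈ s N, W N a * Real.exp (x * u N a)
       - ∑ a ∈ s N, W N a * Real.exp (-x * u N a)) (2 * K) ?_ ?_ h0 k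
  · have h2 := this.mul_const ((k.factorial : ℝ) / 2)
    rw [zero_mul] at h2
    refine h2.congr ?_
    intro N
    rw [Finset.sum_mul]
    refine Finset.sum_congr rfl fun a _ => ?_
    rw [hk.neg_pow]
    have : (k.factorial : ℝ) ≠ 0 := by positivity
    field_simp
    ring
  · filter_upwards [hK] with N hN j
    refine (Finset.abs_sum_le_sum_abs _ _).trans ?_
    refine le_trans ?_ (mul_le_mul_of_nonneg_left hN (by norm_num : (0:ℝ) ≤ 2))
    rw [← Finset.sum_add_distrib, Finset.mul_sum]
    refine Finset.sum_le_sum fun a _ => ?_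
    rw [abs_mul, abs_of_nonneg (hW N a), ← mul_add, mul_left_comm]
    refine mul_le_mul_of_nonneg_left ?_ (hW N a)
    rw [abs_div, Nat.abs_cast]
    have h1 : |u N a ^ j - (-u N a) ^ j| ≤ 2 * |u N a| ^ j := by
      refine (abs_sub _ _).trans ?_
      rw [abs_pow, abs_pow, abs_neg]; linarith
    have h2 := Real.pow_div_factorial_le_exp (|u N a|) (abs_nonneg _) j
    have h3 : Real.exp |u N a| ≤ Real.exp (1 * u N a) + Real.exp (-1 * u N a) := by
      rcases abs_cases (u N a) with ⟨h, _⟩ | ⟨h, _⟩ <;> rw [h] <;> simp <;> positivity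
    calc _ ≤ 2 * |u N a| ^ j / (j.factorial : ℝ) := by gcongr
      _ = 2 * (|u N a| ^ j / (j.factorial : ℝ)) := by ring
      _ ≤ _ := by linarith
  · intro N x
    simp only [Finset.sum_mul]
    rw [← Finset.sum_sub_distrib]
    refine hasSum_sum fun a _ => ?_
    have h1 := ((hexp (x * u N a)).sub (hexp (-x * u N a))).mul_left (W N a)
    rw [mul_sub] at h1
    refine h1.congr_fun ?_
    intro j
    rw [show -x * u N a = x * (-u N a) by ring, mul_pow, mul_pow]
    ring

lemma abel_bound (b g : ℕ → ℝ) (hg : Monotone g) (hg0 : 0 ≤ g 0) (M : ℝ) (N : ℕ)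
    (hM : ∀ n ≤ N, |∑ i ∈ Finset.Icc 1 n, b i| ≤ M) :
    |∑ i ∈ Finset.Icc 1 N, b i * g i| ≤ 2 * M * g N := by
  have hM0 : 0 ≤ M := (abs_nonneg _).trans (hM 0 (Nat.zero_le _))
  have key : ∀ n ≤ N, |∑ i ∈ Finset.Icc 1 n, b i * g i - (∑ i ∈ Finset.Icc 1 n, b i) * g n| ≤ M * g n := by
    intro n
    induction n with
    | zero => intro _; simp; positivity
    | succ n ih =>
      intro hn
      have h1 := ih (by omega)
      rw [Finset.sum_Icc_succ_top (by omega), Finset.sum_Icc_succ_top (by omega)]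
      have h2 := hM n (by omega)
      have h3 : g n ≤ g (n+1) := hg (by omega)
      have e : ∑ i ∈ Finset.Icc 1 n, b i * g i + b (n+1) * g (n+1) -
          (∑ i ∈ Finset.Icc 1 n, b i + b (n+1)) * g (n+1) =
          (∑ i ∈ Finset.Icc 1 n, b i * g i - (∑ i ∈ Finset.Icc 1 n, b i) * g n) -
           (∑ i ∈ Finset.Icc 1 n, b i) * (g (n+1) - g n) := by ring
      rw [e]
      refine (abs_sub _ _).trans ?_
      have h4 : |(∑ i ∈ Finset.Icc 1 n, b i) * (g (n+1) - g n)| ≤ M * (g (n+1) - g n) := by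
        rw [abs_mul, abs_of_nonneg (sub_nonneg.2 h3)]
        exact mul_le_mul_of_nonneg_right h2 (sub_nonneg.2 h3)
      linarith
  have h1 := key N le_rfl
  have hgN : 0 ≤ g N := hg0.trans (hg (Nat.zero_le _))
  have h2 : |(∑ i ∈ Finset.Icc 1 N, b i) * g N| ≤ M * g N := by
    rw [abs_mul, abs_of_nonneg hgN]
    exact mul_le_mul_of_nonneg_right (hM N le_rfl) hgN
  have h3 := abs_add_le (∑ i ∈ Finset.Icc 1 N, b i * g i - (∑ i ∈ Finset.Icc 1 N, b i) * g N)
    ((∑ i ∈ Finset.Icc 1 N, b i) * g N)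
  rw [sub_add_cancel] at h3
  linarith

lemma Bk_tendsto (P : Set ℕ) (hP : ∀ n ∈ P, 2 ≤ n) (ρ μ c C : ℝ)
    (hG : ∀ x : ℝ, Tendsto (fun N : ℕ => (N:ℝ) ^ (-ρ) * SN P μ (x / √(Real.log N)) N) atTop
      (𝓝 (Real.exp (c * x^2) * C))) (k : ℕ) (hk : Odd k) :
    Tendsto (fun N : ℕ => (N:ℝ) ^ (-ρ) * (∑ n ∈ Finset.Icc 1 N, bCoef P μ k n) / √(Real.log N) ^ k)
      atTop (𝓝 0) := by
  have hE : ∀ (N : ℕ) (x : ℝ), ∑ a ∈ (Finset.Icc 1 N).sigma (fun n => Finset.range (n+1)),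
      ((N:ℝ) ^ (-ρ) * (af P a.2 a.1 : ℝ)) *
        Real.exp (x * (((a.2:ℝ) - μ * Real.log a.1) / √(Real.log N))) =
      (N:ℝ) ^ (-ρ) * SN P μ (x / √(Real.log N)) N := by
    intro N x
    rw [Finset.sum_sigma, SN, Finset.mul_sum]
    refine Finset.sum_congr rfl fun n _ => ?_
    rw [Finset.mul_sum]
    refine Finset.sum_congr rfl fun m _ => ?_
    rw [mul_assoc]
    congr 3
    ring
  have h := odd_moment (α := (Σ _ : ℕ, ℕ)) (fun N => (Finset.Icc 1 N).sigma (fun n => Finset.range (n+1)))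
    (fun N a => (N:ℝ) ^ (-ρ) * (af P a.2 a.1 : ℝ))
    (fun N a => ((a.2:ℝ) - μ * Real.log a.1) / √(Real.log N)) (fun N a => by positivity)
    (Real.exp (c * 1^2) * C + Real.exp (c * (-1)^2) * C + 1) ?_ ?_ k hk
  · refine h.congr ?_
    intro N
    rw [Finset.sum_sigma, Finset.mul_sum, Finset.sum_div]
    refine Finset.sum_congr rfl fun n hn => ?_
    rw [bCoef_eq P hP μ k n (Finset.mem_Icc.1 hn).1, Finset.mul_sum, Finset.sum_div]
    refine Finset.sum_congr rfl fun m _ => ?_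
    rw [div_pow]
    ring
  · have := (hG 1).add (hG (-1))
    filter_upwards [this.eventually (gt_mem_nhds (lt_add_one _))] with N hN
    rw [hE, hE]; exact hN.le
  · intro x
    simp only [hE]
    have := (hG x).sub (hG (-x))
    simpa using this

theorem final_step (P : Set ℕ) (hP : ∀ n ∈ P, 2 ≤ n) (ρ μ c C : ℝ) (hρ0 : 0 < ρ) (hC : 0 < C)
    (hG : ∀ x : ℝ, Tendsto (fun N : ℕ => (N:ℝ) ^ (-ρ) * SN P μ (x / √(Real.log N)) N) atTop
      (𝓝 (Real.exp (c * x^2) * C))) (k : ℕ) (hk : Odd k) :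
    (fun N : ℕ => ∑ n ∈ Finset.Icc 1 N, bCoef P μ k n * (Real.log n) ^ ((k : ℝ) / 2))
      =o[atTop] fun N : ℕ => Acum P N * (Real.log N) ^ k := by
  have hB := Bk_tendsto P hP ρ μ c C hG k hk
  have hA := hG 0
  simp only [zero_div, ← Acum_eq P hP] at hA
  have hk0 : k ≠ 0 := by rintro rfl; simp at hk
  have ht : Tendsto (fun N : ℕ => Real.log (N:ℝ)) atTop atTop :=
    Real.tendsto_log_atTop.comp tendsto_natCast_atTop_atTop
  set g : ℕ → ℝ := fun n => √(Real.log n) ^ k with hgdef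
  have hlog0 : ∀ n : ℕ, 0 ≤ Real.log (n:ℝ) := fun n => Real.log_natCast_nonneg n
  have hlm : Monotone (fun n : ℕ => Real.log (n:ℝ)) := by
    intro a b hab
    rcases Nat.eq_zero_or_pos a with rfl | ha
    · simpa using hlog0 b
    · exact Real.log_le_log (by exact_mod_cast ha) (by exact_mod_cast hab)
  have hgm : Monotone g := fun a b hab =>
    pow_le_pow_left₀ (Real.sqrt_nonneg _) (Real.sqrt_le_sqrt (hlm hab)) k
  have hg0 : ∀ n, 0 ≤ g n := fun n => by positivity
  have hgr : ∀ n : ℕ, (Real.log n) ^ ((k : ℝ) / 2) = g n := by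
    intro n
    rw [Real.rpow_div_two_eq_sqrt _ (hlog0 n), Real.rpow_natCast]
  set h : ℕ → ℝ := fun n => (n:ℝ) ^ ρ * g n with hh
  have hhm : Monotone h := by
    intro a b hab
    have : (a:ℝ) ≤ b := by exact_mod_cast hab
    exact mul_le_mul (Real.rpow_le_rpow (by positivity) this hρ0.le) (hgm hab) (hg0 _) (by positivity)
  have hhtop : Tendsto h atTop atTop := by
    have h1 : Tendsto (fun n : ℕ => (n:ℝ) ^ ρ) atTop atTop :=
      (tendsto_rpow_atTop hρ0).comp tendsto_natCast_atTop_atTop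
    have h2 : Tendsto g atTop atTop :=
      (tendsto_pow_atTop hk0).comp (Real.tendsto_sqrt_atTop.comp ht)
    exact h1.atTop_mul_atTop₀ h2
  have main : ∀ ε > 0, ∀ᶠ N : ℕ in atTop, ∀ n ≤ N, |∑ i ∈ Finset.Icc 1 n, bCoef P μ k i| ≤ ε * h N := by
    intro ε hε
    have h1 : ∀ᶠ n : ℕ in atTop, |∑ i ∈ Finset.Icc 1 n, bCoef P μ k i| ≤ ε / 2 * h n := by
      have h2 := (Metric.tendsto_nhds.1 hB) (ε/2) (half_pos hε)
      filter_upwards [h2, eventually_ge_atTop 1, ht.eventually_gt_atTop 0] with n hn hn1 hl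
      have hn0 : (0:ℝ) < n := by exact_mod_cast hn1
      rw [Real.dist_eq, sub_zero] at hn
      have hgp : 0 < g n := pow_pos (Real.sqrt_pos.2 hl) k
      have hnp := Real.rpow_pos_of_pos hn0 ρ
      change |(n:ℝ) ^ (-ρ) * _ / g n| < _ at hn
      rw [abs_div, abs_of_pos hgp, div_lt_iff₀ hgp, abs_mul, Real.rpow_neg hn0.le,
        abs_of_pos (inv_pos.2 hnp), inv_mul_lt_iff₀ hnp] at hn
      have : ε / 2 * h n = (n:ℝ) ^ ρ * (ε / 2 * g n) := by simp only [hh]; ring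
      rw [this]; exact hn.le
    obtain ⟨n0, hn0⟩ := eventually_atTop.1 h1
    set M0 := ∑ n ∈ Finset.range n0, |∑ i ∈ Finset.Icc 1 n, bCoef P μ k i| with hM0
    filter_upwards [hhtop.eventually_ge_atTop (M0 / (ε/2)), hhtop.eventually_ge_atTop 0] with N hN hN0 n hn
    rw [div_le_iff₀ (half_pos hε)] at hN
    rcases lt_or_ge n n0 with hlt | hge
    · have := Finset.single_le_sum (f := fun n => |∑ i ∈ Finset.Icc 1 n, bCoef P μ k i|)
        (fun i _ => abs_nonneg _) (Finset.mem_range.2 hlt)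
      rw [← hM0] at this
      nlinarith
    · have h3 := hn0 n hge
      have h4 := hhm hn
      nlinarith
  have hAl : ∀ᶠ N : ℕ in atTop, C / 2 * (N:ℝ) ^ ρ ≤ Acum P N := by
    have hA' : Tendsto (fun N : ℕ => (N:ℝ) ^ (-ρ) * Acum P N) atTop (𝓝 C) := by
      simpa [← Acum_eq P hP] using hA
    filter_upwards [hA'.eventually (lt_mem_nhds (half_lt_self hC)), eventually_ge_atTop 1] with N hN hN1
    have hn0 : (0:ℝ) < N := by exact_mod_cast hN1
    have hnp := Real.rpow_pos_of_pos hn0 ρ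
    rw [Real.rpow_neg hn0.le, lt_inv_mul_iff₀ hnp] at hN
    linarith
  rw [isLittleO_iff]
  intro ε hε
  filter_upwards [main (ε * C / 4) (by positivity), hAl] with N hN hA2
  simp only [hgr]
  have h1 := abel_bound (bCoef P μ k) g hgm (hg0 0) _ N hN
  have h2 : g N * g N = Real.log N ^ k := by
    simp only [hgdef]
    rw [← mul_pow, Real.mul_self_sqrt (hlog0 N)]
  have hl : 0 ≤ Real.log (N:ℝ) ^ k := pow_nonneg (hlog0 N) k
  have hA0 : 0 ≤ Acum P N := le_trans (by positivity) hA2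
  rw [Real.norm_eq_abs, Real.norm_eq_abs, abs_of_nonneg (mul_nonneg hA0 hl)]
  calc _ ≤ 2 * (ε * C / 4 * h N) * g N := h1
    _ = ε * ((C / 2 * (N:ℝ) ^ ρ) * (g N * g N)) := by simp only [hh]; ring
    _ ≤ _ := by rw [h2]; gcongr

/-- **Key cancellation estimate for odd `k`.** Under the stated assumptions, including
non-periodicity, for every odd `k ≥ 1`,
`Σ_{n ≤ N} b_k(n) (log n)^{k/2} = o(A(N) (log N)^k)` as `N → ∞`. -/
theorem odd_weighted_sum_negligible
    (P : Set ℕ) (hP : ∀ n ∈ P, 2 ≤ n) (hP2 : P.Nontrivial)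
    (hκ : 1 < PvalE P (kappa P))
    (ρ : ℝ) (hρ0 : 0 < ρ) (hρκ : kappa P < (ρ : EReal)) (hρ1 : Pval P ρ = 1)
    (μ : ℝ) (hμ : μ = -1 / Pderiv1 P ρ)
    (hnp : ∀ d : ℕ, 2 ≤ d → ¬ P ⊆ {n : ℕ | ∃ k : ℕ, 1 ≤ k ∧ n = d ^ k})
    (k : ℕ) (hk : Odd k) :
    (fun N : ℕ => ∑ n ∈ Finset.Icc 1 N, bCoef P μ k n * (Real.log n) ^ ((k : ℝ) / 2))
      =o[atTop] fun N : ℕ => Acum P N * (Real.log N) ^ k := by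
  obtain ⟨w, c, C, hC, hlo, hlim⟩ := SN_limit P hP hP2 ρ hρ0 hρκ hρ1 μ hμ hnp
  exact final_step P hP ρ μ c C hρ0 hC (G_limit P ρ μ w c C hlo hlim) k hk
end
end
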